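/- arXiv:1703.10989 — 2 statements merged into one kernel-verified Lean document; each statement's English description precedes it below -/
import Mathlib

section
/- Let (λ_N)_{N≥1} be any sequence of positive reals with N·λ_N → 1 as N → ∞. Then E(λ_N, N) − (λ_N/2) N (N−1) ŵ(0) converges to e_B as N → ∞. -/
open MeasureTheory Real

noncomputable section

/-- The unit cube `[0,1]^{dN}` in the configuration space of `N` particles in `ℝ^d`. -/
def cube (d N : ℕ) : Set (Fin N → Fin d → ℝ) :=
  Set.univ.pi fun _ => Set.univ.pi fun _ => Set.Icc (0 : ℝ) 1

/-- The unit cube `[0,1]^d` in `ℝ^d`. -/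
def cube1 (d : ℕ) : Set (Fin d → ℝ) :=
  Set.univ.pi fun _ => Set.Icc (0 : ℝ) 1

/-- `Ψ` is admissible: smooth, `ℤ^d`-periodic in each particle variable, symmetric under
permutations of the particles, and `L²`-normalized on the unit cube. -/
def IsAdmissible (d N : ℕ) (Ψ : (Fin N → Fin d → ℝ) → ℂ) : Prop :=
  ContDiff ℝ (⊤ : ℕ∞) Ψ ∧
  (∀ (x : Fin N → Fin d → ℝ) (j : Fin N) (v : Fin d → ℤ),
      Ψ (Function.update x j (x j + fun i => (v i : ℝ))) = Ψ x) ∧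
  (∀ (σ : Equiv.Perm (Fin N)) (x : Fin N → Fin d → ℝ), Ψ (x ∘ σ) = Ψ x) ∧
  (∫ x in cube d N, ‖Ψ x‖ ^ 2) = 1

/-- The energy `ℰ_{λ,N}(Ψ)` of a wave function `Ψ`. -/
def energy (d N : ℕ) (lam : ℝ) (w : (Fin d → ℝ) → ℝ)
    (Ψ : (Fin N → Fin d → ℝ) → ℂ) : ℝ :=
  ∫ x in cube d N,
    ((∑ j : Fin N, ∑ i : Fin d, ‖fderiv ℝ Ψ x (Pi.single j (Pi.single i 1))‖ ^ 2) +
      lam * (∑ j : Fin N, ∑ k : Fin N, if j < k then w (x j - x k) else 0) * ‖Ψ x‖ ^ 2)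

/-- The ground state energy `E(λ,N)`. -/
def GSE (d N : ℕ) (lam : ℝ) (w : (Fin d → ℝ) → ℝ) : ℝ :=
  sInf {e | ∃ Ψ, IsAdmissible d N Ψ ∧ energy d N lam w Ψ = e}

/-- The interaction potential defined by the absolutely convergent Fourier series
`w(x) = ∑_{p ∈ (2πℤ)^d} ŵ(p) e^{ip·x}`, with the lattice point `p = 2πk` indexed by
`k ∈ ℤ^d`. -/
def wOf (d : ℕ) (hw : (Fin d → ℤ) → ℝ) (x : Fin d → ℝ) : ℝ :=
  (∑' k : Fin d → ℤ,
    (hw k : ℂ) * Complex.exp (Complex.I * ((∑ i, (2 * π * (k i : ℝ)) * x i : ℝ) : ℂ))).re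

/-- `|p|²` for the lattice point `p = 2πk`. -/
def pSq (d : ℕ) (k : Fin d → ℤ) : ℝ := ∑ i, (2 * π * (k i : ℝ)) ^ 2

/-- The elementary excitation energy `e_p = √(|p|⁴ + 2|p|²ŵ(p))`. -/
def ePk (d : ℕ) (hw : (Fin d → ℤ) → ℝ) (k : Fin d → ℤ) : ℝ :=
  Real.sqrt (pSq d k ^ 2 + 2 * pSq d k * hw k)

/-- The Bogoliubov coefficient `α_p = ŵ(p)/(|p|² + ŵ(p) + e_p)`. -/
def alphaP (d : ℕ) (hw : (Fin d → ℤ) → ℝ) (k : Fin d → ℤ) : ℝ :=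
  hw k / (pSq d k + hw k + ePk d hw k)

/-- The Bogoliubov ground state energy
`e_B = -(1/2) ∑_{p ≠ 0} (|p|² + ŵ(p) - e_p)`. -/
def eB (d : ℕ) (hw : (Fin d → ℤ) → ℝ) : ℝ :=
  -(1 / 2) * ∑' k : {k : Fin d → ℤ // k ≠ 0}, (pSq d k.1 + hw k.1 - ePk d hw k.1)

/-- The projection `Q_j` removing the condensate in the `j`-th variable. -/
def Qop (d N : ℕ) (j : Fin N) (Ψ : (Fin N → Fin d → ℝ) → ℂ) :
    (Fin N → Fin d → ℝ) → ℂ :=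
  fun x => Ψ x - ∫ y in cube1 d, Ψ (Function.update x j y)

/-- The expected number of excited particles `⟨𝒩₊⟩_Ψ`. -/
def NplusExp (d N : ℕ) (Ψ : (Fin N → Fin d → ℝ) → ℂ) : ℝ :=
  ∑ j : Fin N, ∫ x in cube d N, ‖Qop d N j Ψ x‖ ^ 2

/-- The second moment `⟨𝒩₊²⟩_Ψ` of the number of excited particles. -/
def NplusSqExp (d N : ℕ) (Ψ : (Fin N → Fin d → ℝ) → ℂ) : ℝ :=
  ∑ j : Fin N, ∑ k : Fin N, ∫ x in cube d N, ‖Qop d N j (Qop d N k Ψ) x‖ ^ 2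


/-! ### Part 1: measure on the cube, integration by parts -/

theorem mp_update {ι : Type*} [Fintype ι] [DecidableEq ι] {α : ι → Type*}
    [∀ i, MeasurableSpace (α i)] (μ : ∀ i, Measure (α i)) [∀ i, IsProbabilityMeasure (μ i)]
    (j : ι) :
    MeasurePreserving (fun z : (∀ i, α i) × α j => Function.update z.1 j z.2)
      ((Measure.pi μ).prod (μ j)) (Measure.pi μ) := by
  have hm : Measurable (fun z : (∀ i, α i) × α j => Function.update z.1 j z.2) := by
    rw [measurable_pi_iff]
    intro i
    by_cases h : i = j
    · subst h
      simpa using measurable_snd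
    · simp only [Function.update_of_ne h]
      exact (measurable_pi_apply i).comp measurable_fst
  refine ⟨hm, ?_⟩
  symm
  apply Measure.pi_eq
  intro s hs
  rw [Measure.map_apply hm (MeasurableSet.univ_pi hs)]
  have : (fun z : (∀ i, α i) × α j => Function.update z.1 j z.2) ⁻¹' (Set.univ.pi s)
      = (Set.univ.pi (Function.update s j Set.univ)) ×ˢ s j := by
    ext z
    simp only [Set.mem_preimage, Set.mem_pi, Set.mem_univ, true_imp_iff, Set.mem_prod]
    constructor
    · intro h
      refine ⟨fun i => ?_, by simpa using h j⟩
      by_cases hi : i = j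
      · subst hi; simp
      · have := h i
        simpa [Function.update_of_ne hi] using this
    · rintro ⟨h1, h2⟩ i
      by_cases hi : i = j
      · subst hi; simpa using h2
      · have := h1 i
        simpa [Function.update_of_ne hi] using this
  rw [this, Measure.prod_prod, Measure.pi_pi]
  rw [← Finset.mul_prod_erase Finset.univ (fun i => μ i (s i)) (Finset.mem_univ j),
    ← Finset.mul_prod_erase Finset.univ (fun i => μ i (Function.update s j Set.univ i))
      (Finset.mem_univ j)]
  have h2 : ∏ x ∈ Finset.univ.erase j, μ x (Function.update s j Set.univ x)
      = ∏ x ∈ Finset.univ.erase j, μ x (s x) := by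
    apply Finset.prod_congr rfl
    intro i hi
    rw [Function.update_of_ne (Finset.ne_of_mem_erase hi)]
  rw [h2]
  simp [mul_comm]

instance prob_Icc : IsProbabilityMeasure ((volume : Measure ℝ).restrict (Set.Icc (0:ℝ) 1)) := by
  constructor
  simp

theorem vol_cube1 (d : ℕ) : (volume : Measure (Fin d → ℝ)).restrict (cube1 d)
    = Measure.pi (fun _ => (volume : Measure ℝ).restrict (Set.Icc (0:ℝ) 1)) := by
  rw [cube1, volume_pi, Measure.restrict_pi_pi]

instance prob_cube1 (d : ℕ) :
    IsProbabilityMeasure ((volume : Measure (Fin d → ℝ)).restrict (cube1 d)) := by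
  rw [vol_cube1]; infer_instance

theorem vol_cube (d N : ℕ) : (volume : Measure (Fin N → Fin d → ℝ)).restrict (cube d N)
    = Measure.pi (fun _ => (volume : Measure (Fin d → ℝ)).restrict (cube1 d)) := by
  have : cube d N = Set.univ.pi fun _ => cube1 d := rfl
  rw [this, volume_pi, Measure.restrict_pi_pi]

instance prob_cube (d N : ℕ) :
    IsProbabilityMeasure ((volume : Measure (Fin N → Fin d → ℝ)).restrict (cube d N)) := by
  rw [vol_cube]; infer_instance

theorem compact_cube (d N : ℕ) : IsCompact (cube d N) :=
  isCompact_univ_pi fun _ => isCompact_univ_pi fun _ => isCompact_Icc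

theorem int_cont {d N : ℕ} {E : Type*} [NormedAddCommGroup E]
    {f : (Fin N → Fin d → ℝ) → E} (hf : Continuous f) :
    Integrable f (volume.restrict (cube d N)) :=
  hf.continuousOn.integrableOn_compact (compact_cube d N)

theorem int_cont1 {d : ℕ} {f : (Fin d → ℝ) → ℝ} (hf : Continuous f) :
    Integrable f (volume.restrict (cube1 d)) :=
  hf.continuousOn.integrableOn_compact (isCompact_univ_pi fun _ => isCompact_Icc)

/-- unit vector in direction `i` of particle `j` -/
def ev {d N : ℕ} (j : Fin N) (i : Fin d) : Fin N → Fin d → ℝ := Pi.single j (Pi.single i 1)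

theorem integral_deriv_zero {d N : ℕ} (j : Fin N) (i : Fin d)
    (f f' : (Fin N → Fin d → ℝ) → ℝ) (hf' : Continuous f')
    (hd : ∀ x, HasDerivAt (fun t : ℝ => f (x + t • ev j i)) (f' x) 0)
    (hper : ∀ x, f (x + ev j i) = f x) :
    ∫ x in cube d N, f' x = 0 := by
  have key : ∀ (x : Fin N → Fin d → ℝ) (y : Fin d → ℝ),
      ∫ t in Set.Icc (0:ℝ) 1, f' (Function.update x j (Function.update y i t)) = 0 := by
    intro x y
    rw [integral_Icc_eq_integral_Ioc, ← intervalIntegral.integral_of_le zero_le_one]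
    set g : ℝ → (Fin N → Fin d → ℝ) := fun t => Function.update x j (Function.update y i t)
      with hg
    have hgs : ∀ t s : ℝ, g t + s • ev j i = g (t + s) := by
      intro t s
      ext a b
      simp only [hg, ev, Pi.add_apply, Pi.smul_apply]
      by_cases ha : a = j
      · subst ha
        by_cases hb : b = i
        · subst hb; simp
        · simp [hb]
      · simp [ha]
    have hgc : Continuous g := by
      have : Continuous fun t : ℝ => Function.update y i t :=
        continuous_const.update i continuous_id
      exact continuous_const.update j this
    have hD : ∀ t, HasDerivAt (fun s => f (g s)) (f' (g t)) t := by
      intro t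
      have h := hd (g t)
      simp only [hgs] at h
      have h3 : HasDerivAt (fun s : ℝ => s - t) 1 t := (hasDerivAt_id t).sub_const t
      have h' : HasDerivAt (fun s => f (g (t + s))) (f' (g t)) ((fun s : ℝ => s - t) t) := by
        simpa using h
      have h2 := HasDerivAt.comp (h := fun s : ℝ => s - t) t h' h3
      simpa [Function.comp_def] using h2
    rw [intervalIntegral.integral_eq_sub_of_hasDerivAt (fun t _ => hD t)
      ((hf'.comp hgc).intervalIntegrable _ _)]
    have : g 1 = g 0 + ev j i := by
      have := hgs 0 1
      simpa using this.symm
    rw [this, hper]; simp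
  have key1 : ∀ (x : Fin N → Fin d → ℝ),
      ∫ y in cube1 d, f' (Function.update x j y) = 0 := by
    intro x
    have hc : Continuous fun y => f' (Function.update x j y) :=
      hf'.comp (continuous_const.update j continuous_id)
    have hmp := mp_update (fun _ : Fin d => (volume : Measure ℝ).restrict (Set.Icc (0:ℝ) 1)) i
    have hIntg : Integrable (fun y => f' (Function.update x j y))
      (Measure.pi (fun _ : Fin d => (volume : Measure ℝ).restrict (Set.Icc (0:ℝ) 1))) := by
      rw [← vol_cube1]; exact int_cont1 hc
    rw [vol_cube1, ← hmp.map_eq, integral_map hmp.measurable.aemeasurable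
      (by rw [hmp.map_eq]; exact hIntg.aestronglyMeasurable), integral_prod]
    · simp [key]
    · exact (hmp.integrable_comp hIntg.aestronglyMeasurable).2 hIntg
  have hmp := mp_update (fun _ : Fin N => (volume : Measure (Fin d → ℝ)).restrict (cube1 d)) j
  have hIntg : Integrable f'
      (Measure.pi (fun _ : Fin N => (volume : Measure (Fin d → ℝ)).restrict (cube1 d))) := by
    rw [← vol_cube]; exact int_cont hf'
  rw [vol_cube, ← hmp.map_eq, integral_map hmp.measurable.aemeasurable
      (by rw [hmp.map_eq]; exact hIntg.aestronglyMeasurable), integral_prod]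
  · simp [key1]
  · exact (hmp.integrable_comp hIntg.aestronglyMeasurable).2 hIntg

/-- Periodicity in the form used for integration by parts. -/
theorem per_ev {d N : ℕ} {Ψ : (Fin N → Fin d → ℝ) → ℂ}
    (h : ∀ (x : Fin N → Fin d → ℝ) (j : Fin N) (v : Fin d → ℤ),
      Ψ (Function.update x j (x j + fun i => (v i : ℝ))) = Ψ x) (j : Fin N) (i : Fin d)
    (x : Fin N → Fin d → ℝ) : Ψ (x + ev j i) = Ψ x := by
  rw [← h x j (Pi.single i 1)]
  congr 1
  ext a b
  by_cases ha : a = j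
  · subst ha
    by_cases hb : b = i
    · subst hb; simp [ev]
    · simp [ev, hb]
  · simp [ev, ha]

/-- The basic kinetic energy lower bound: `T ≥ div A - |A|²`. -/
theorem kinetic_lower {d N : ℕ} {Ψ : (Fin N → Fin d → ℝ) → ℂ} (hΨ : IsAdmissible d N Ψ)
    (A A' : Fin N → Fin d → (Fin N → Fin d → ℝ) → ℝ)
    (hA : ∀ j i, Continuous (A j i)) (hA' : ∀ j i, Continuous (A' j i))
    (hd : ∀ j i x, HasDerivAt (fun t : ℝ => A j i (x + t • ev j i)) (A' j i x) 0)
    (hper : ∀ j i x, A j i (x + ev j i) = A j i x) :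
    ∫ x in cube d N, (∑ j, ∑ i, (A' j i x - A j i x ^ 2)) * ‖Ψ x‖ ^ 2
      ≤ ∫ x in cube d N, ∑ j : Fin N, ∑ i : Fin d,
          ‖fderiv ℝ Ψ x (Pi.single j (Pi.single i 1))‖ ^ 2 := by
  obtain ⟨hsm, hp, -, -⟩ := hΨ
  have hΨc : Continuous Ψ := hsm.continuous
  have hDc : ∀ j i, Continuous fun x => fderiv ℝ Ψ x (ev j i) := fun j i =>
    (hsm.continuous_fderiv (by simp)).clm_apply continuous_const
  have hline : ∀ j i x, HasDerivAt (fun t : ℝ => Ψ (x + t • ev j i)) (fderiv ℝ Ψ x (ev j i)) 0 := by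
    intro j i x
    have : HasFDerivAt Ψ (fderiv ℝ Ψ x) x :=
      ((hsm.differentiable (by simp)) x).hasFDerivAt
    exact this.hasLineDerivAt (ev j i)
  set B : Fin N → Fin d → (Fin N → Fin d → ℝ) → ℝ := fun j i x =>
    A' j i x * ‖Ψ x‖ ^ 2 + A j i x * (2 * ((Ψ x).re * (fderiv ℝ Ψ x (ev j i)).re
      + (Ψ x).im * (fderiv ℝ Ψ x (ev j i)).im)) with hB
  have hns : ∀ z : ℂ, ‖z‖ ^ 2 = z.re ^ 2 + z.im ^ 2 := by
    intro z; rw [← Complex.normSq_eq_norm_sq, Complex.normSq_apply]; ring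
  have hBc : ∀ j i, Continuous (B j i) := by
    intro j i
    have h1 := hA j i
    have h2 := hA' j i
    have h3 := hDc j i
    simp only [hB]
    have h4 := Complex.continuous_re.comp h3
    have h5 := Complex.continuous_im.comp h3
    have h6 := Complex.continuous_re.comp hΨc
    have h7 := Complex.continuous_im.comp hΨc
    simp only [Function.comp_def] at h4 h5 h6 h7
    fun_prop
  have hB0 : ∀ j i, ∫ x in cube d N, B j i x = 0 := by
    intro j i
    apply integral_deriv_zero j i (fun x => A j i x * ‖Ψ x‖ ^ 2) (B j i) (hBc j i)
    · intro x
      have h1 := hd j i x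
      have h2 := hline j i x
      have hre : HasDerivAt (fun t : ℝ => (Ψ (x + t • ev j i)).re)
          (fderiv ℝ Ψ x (ev j i)).re 0 :=
        (Complex.reCLM.hasFDerivAt.comp_hasDerivAt (0:ℝ) h2)
      have him : HasDerivAt (fun t : ℝ => (Ψ (x + t • ev j i)).im)
          (fderiv ℝ Ψ x (ev j i)).im 0 :=
        (Complex.imCLM.hasFDerivAt.comp_hasDerivAt (0:ℝ) h2)
      have h3 := h1.fun_mul ((hre.fun_pow 2).fun_add (him.fun_pow 2))
      simp only [hns]
      rw [hB]
      refine h3.congr_deriv ?_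
      simp only [zero_smul, add_zero, hns, Nat.cast_ofNat, pow_one, Nat.reduceSub]
      ring
    · intro x
      rw [hper, per_ev hp]
  have hle : ∀ x, (∑ j, ∑ i, (A' j i x - A j i x ^ 2)) * ‖Ψ x‖ ^ 2 - ∑ j, ∑ i, B j i x
      ≤ ∑ j : Fin N, ∑ i : Fin d, ‖fderiv ℝ Ψ x (Pi.single j (Pi.single i 1))‖ ^ 2 := by
    intro x
    rw [Finset.sum_mul, ← Finset.sum_sub_distrib]
    apply Finset.sum_le_sum
    intro j _
    rw [Finset.sum_mul, ← Finset.sum_sub_distrib]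
    apply Finset.sum_le_sum
    intro i _
    change _ ≤ ‖fderiv ℝ Ψ x (ev j i)‖ ^ 2
    simp only [hB, hns]
    nlinarith [sq_nonneg ((fderiv ℝ Ψ x (ev j i)).re + A j i x * (Ψ x).re),
      sq_nonneg ((fderiv ℝ Ψ x (ev j i)).im + A j i x * (Ψ x).im)]
  have hc1 : Continuous fun x => (∑ j, ∑ i, (A' j i x - A j i x ^ 2)) * ‖Ψ x‖ ^ 2 := by
    fun_prop
  have hc2 : Continuous fun x => ∑ j, ∑ i, B j i x := by fun_prop
  have hc3 : Continuous fun x => ∑ j : Fin N, ∑ i : Fin d,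
      ‖fderiv ℝ Ψ x (Pi.single j (Pi.single i 1))‖ ^ 2 := by
    refine continuous_finsetSum _ fun j _ => continuous_finsetSum _ fun i _ => ?_
    exact (hDc j i).norm.pow 2
  have hI : ∫ x in cube d N, ∑ j, ∑ i, B j i x = 0 := by
    rw [integral_finsetSum _ (fun j _ => int_cont (by fun_prop))]
    apply Finset.sum_eq_zero
    intro j _
    rw [integral_finsetSum _ (fun i _ => int_cont (by fun_prop))]
    exact Finset.sum_eq_zero fun i _ => hB0 j i
  have := integral_mono ((int_cont hc1).sub (int_cont hc2)) (int_cont hc3) hle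
  rw [integral_sub' (int_cont hc1) (int_cont hc2), hI, sub_zero] at this
  exact this

/-! ### Part 2: density modes and the Jastrow function -/

/-- phase -/
def th {d : ℕ} (k : Fin d → ℤ) (y : Fin d → ℝ) : ℝ := ∑ i, (2 * π * (k i : ℝ)) * y i

/-- real part of the density mode -/
def Cc {d N : ℕ} (k : Fin d → ℤ) (x : Fin N → Fin d → ℝ) : ℝ := ∑ j, Real.cos (th k (x j))

/-- imaginary part of the density mode -/
def Ss {d N : ℕ} (k : Fin d → ℤ) (x : Fin N → Fin d → ℝ) : ℝ := ∑ j, Real.sin (th k (x j))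

/-- squared modulus of the density mode -/
def aa {d N : ℕ} (k : Fin d → ℤ) (x : Fin N → Fin d → ℝ) : ℝ := Cc k x ^ 2 + Ss k x ^ 2

/-- half derivative of `aa` -/
def gk {d N : ℕ} (k : Fin d → ℤ) (j : Fin N) (x : Fin N → Fin d → ℝ) : ℝ :=
  Ss k x * Real.cos (th k (x j)) - Cc k x * Real.sin (th k (x j))

/-- second derivative of `aa` -/
def hk {d N : ℕ} (k : Fin d → ℤ) (j : Fin N) (x : Fin N → Fin d → ℝ) : ℝ :=
  1 - (Ss k x * Real.sin (th k (x j)) + Cc k x * Real.cos (th k (x j)))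

/-- Jastrow exponent -/
def JF {d N : ℕ} (S : Finset (Fin d → ℤ)) (c : (Fin d → ℤ) → ℝ) (x : Fin N → Fin d → ℝ) : ℝ :=
  (1 / (2 * (N : ℝ))) * ∑ p ∈ S, c p * aa p x

/-- gradient of Jastrow exponent -/
def JG {d N : ℕ} (S : Finset (Fin d → ℤ)) (c : (Fin d → ℤ) → ℝ) (j : Fin N) (i : Fin d)
    (x : Fin N → Fin d → ℝ) : ℝ :=
  (1 / (N : ℝ)) * ∑ p ∈ S, c p * (2 * π * (p i : ℝ)) * gk p j x

/-- second derivative of Jastrow exponent -/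
def JH {d N : ℕ} (S : Finset (Fin d → ℤ)) (c : (Fin d → ℤ) → ℝ) (j : Fin N) (i : Fin d)
    (x : Fin N → Fin d → ℝ) : ℝ :=
  (1 / (N : ℝ)) * ∑ p ∈ S, c p * (2 * π * (p i : ℝ)) ^ 2 * hk p j x

section
variable {d N : ℕ}

theorem th_contDiff (k : Fin d → ℤ) (j : Fin N) :
    ContDiff ℝ (⊤ : ℕ∞) (fun x : Fin N → Fin d → ℝ => th k (x j)) := by
  unfold th
  fun_prop

theorem Cc_contDiff (k : Fin d → ℤ) :
    ContDiff ℝ (⊤ : ℕ∞) (Cc k : (Fin N → Fin d → ℝ) → ℝ) := by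
  unfold Cc
  exact ContDiff.sum fun j _ => (th_contDiff k j).cos

theorem Ss_contDiff (k : Fin d → ℤ) :
    ContDiff ℝ (⊤ : ℕ∞) (Ss k : (Fin N → Fin d → ℝ) → ℝ) := by
  unfold Ss
  exact ContDiff.sum fun j _ => (th_contDiff k j).sin

theorem aa_contDiff (k : Fin d → ℤ) :
    ContDiff ℝ (⊤ : ℕ∞) (aa k : (Fin N → Fin d → ℝ) → ℝ) := by
  unfold aa
  exact ((Cc_contDiff k).pow 2).add ((Ss_contDiff k).pow 2)

theorem JF_contDiff (S : Finset (Fin d → ℤ)) (c : (Fin d → ℤ) → ℝ) :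
    ContDiff ℝ (⊤ : ℕ∞) (JF S c : (Fin N → Fin d → ℝ) → ℝ) := by
  unfold JF
  exact contDiff_const.mul (ContDiff.sum fun p _ => contDiff_const.mul (aa_contDiff p))

theorem gk_cont (k : Fin d → ℤ) (j : Fin N) : Continuous (gk k j) := by
  have h1 := (th_contDiff k j).continuous
  have h2 := (Cc_contDiff (N := N) k).continuous
  have h3 := (Ss_contDiff (N := N) k).continuous
  unfold gk
  fun_prop

theorem hk_cont (k : Fin d → ℤ) (j : Fin N) : Continuous (hk k j) := by
  have h1 := (th_contDiff k j).continuous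
  have h2 := (Cc_contDiff (N := N) k).continuous
  have h3 := (Ss_contDiff (N := N) k).continuous
  unfold hk
  fun_prop

theorem aa_cont (k : Fin d → ℤ) : Continuous (aa k : (Fin N → Fin d → ℝ) → ℝ) :=
  (aa_contDiff k).continuous

theorem JF_cont (S : Finset (Fin d → ℤ)) (c : (Fin d → ℤ) → ℝ) :
    Continuous (JF S c : (Fin N → Fin d → ℝ) → ℝ) := (JF_contDiff S c).continuous

theorem JG_cont (S : Finset (Fin d → ℤ)) (c : (Fin d → ℤ) → ℝ) (j : Fin N) (i : Fin d) :
    Continuous (JG S c j i) := by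
  unfold JG
  exact continuous_const.mul (continuous_finsetSum _ fun p _ => continuous_const.mul (gk_cont p j))

theorem JH_cont (S : Finset (Fin d → ℤ)) (c : (Fin d → ℤ) → ℝ) (j : Fin N) (i : Fin d) :
    Continuous (JH S c j i) := by
  unfold JH
  exact continuous_const.mul (continuous_finsetSum _ fun p _ => continuous_const.mul (hk_cont p j))

theorem th_shift (p : Fin d → ℤ) (j l : Fin N) (i : Fin d) (x : Fin N → Fin d → ℝ) (t : ℝ) :
    th p ((x + t • ev j i) l) = th p (x l) + t * (if l = j then 2 * π * (p i : ℝ) else 0) := by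
  unfold th ev
  by_cases h : l = j
  · subst h
    simp [mul_add, Finset.sum_add_distrib, Pi.single_apply]
    ring
  · simp [h]

theorem th_deriv (p : Fin d → ℤ) (j l : Fin N) (i : Fin d) (x : Fin N → Fin d → ℝ) :
    HasDerivAt (fun t : ℝ => th p ((x + t • ev j i) l))
      (if l = j then 2 * π * (p i : ℝ) else 0) 0 := by
  simp only [th_shift]
  have := ((hasDerivAt_id (0:ℝ)).mul_const (if l = j then 2 * π * (p i : ℝ) else 0)).const_add
    (th p (x l))
  simpa using this

theorem Cc_deriv (p : Fin d → ℤ) (j : Fin N) (i : Fin d) (x : Fin N → Fin d → ℝ) :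
    HasDerivAt (fun t : ℝ => Cc p (x + t • ev j i))
      (-(2 * π * (p i : ℝ)) * Real.sin (th p (x j))) 0 := by
  unfold Cc
  have := HasDerivAt.fun_sum (u := Finset.univ) (fun l _ => (th_deriv p j l i x).cos)
  refine this.congr_deriv ?_
  simp
  ring

theorem Ss_deriv (p : Fin d → ℤ) (j : Fin N) (i : Fin d) (x : Fin N → Fin d → ℝ) :
    HasDerivAt (fun t : ℝ => Ss p (x + t • ev j i))
      ((2 * π * (p i : ℝ)) * Real.cos (th p (x j))) 0 := by
  unfold Ss
  have := HasDerivAt.fun_sum (u := Finset.univ) (fun l _ => (th_deriv p j l i x).sin)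
  refine this.congr_deriv ?_
  simp
  ring

theorem aa_deriv (p : Fin d → ℤ) (j : Fin N) (i : Fin d) (x : Fin N → Fin d → ℝ) :
    HasDerivAt (fun t : ℝ => aa p (x + t • ev j i))
      (2 * (2 * π * (p i : ℝ)) * gk p j x) 0 := by
  unfold aa gk
  refine (((Cc_deriv p j i x).fun_pow 2).fun_add ((Ss_deriv p j i x).fun_pow 2)).congr_deriv ?_
  simp only [zero_smul, add_zero, Nat.cast_ofNat, pow_one, Nat.reduceSub]
  ring

theorem gk_deriv (p : Fin d → ℤ) (j : Fin N) (i : Fin d) (x : Fin N → Fin d → ℝ) :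
    HasDerivAt (fun t : ℝ => gk p j (x + t • ev j i))
      ((2 * π * (p i : ℝ)) * hk p j x) 0 := by
  unfold gk hk
  have h1 := (th_deriv p j j i x).cos
  have h2 := (th_deriv p j j i x).sin
  refine (((Ss_deriv p j i x).fun_mul h1).fun_sub ((Cc_deriv p j i x).fun_mul h2)).congr_deriv ?_
  simp only [zero_smul, add_zero, if_true]
  have := Real.sin_sq_add_cos_sq (th p (x j))
  linear_combination (2 * π * (p i : ℝ)) * this

theorem JF_deriv (S : Finset (Fin d → ℤ)) (c : (Fin d → ℤ) → ℝ) (j : Fin N) (i : Fin d)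
    (x : Fin N → Fin d → ℝ) :
    HasDerivAt (fun t : ℝ => JF S c (x + t • ev j i)) (JG S c j i x) 0 := by
  unfold JF JG
  have := (HasDerivAt.fun_sum (u := S)
    (fun p _ => (aa_deriv p j i x).const_mul (c p))).const_mul (1 / (2 * (N:ℝ)))
  refine this.congr_deriv ?_
  rw [Finset.mul_sum, Finset.mul_sum]
  refine Finset.sum_congr rfl fun p _ => ?_
  by_cases hN : (N : ℝ) = 0
  · simp [hN]
  · field_simp

theorem JG_deriv (S : Finset (Fin d → ℤ)) (c : (Fin d → ℤ) → ℝ) (j : Fin N) (i : Fin d)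
    (x : Fin N → Fin d → ℝ) :
    HasDerivAt (fun t : ℝ => JG S c j i (x + t • ev j i)) (JH S c j i x) 0 := by
  unfold JG JH
  have := (HasDerivAt.fun_sum (u := S)
    (fun p _ => (gk_deriv p j i x).const_mul (c p * (2 * π * (p i : ℝ))))).const_mul (1 / (N:ℝ))
  refine this.congr_deriv ?_
  congr 1
  refine Finset.sum_congr rfl fun p _ => ?_
  ring

theorem cos_shift (p : Fin d → ℤ) (j l : Fin N) (i : Fin d) (x : Fin N → Fin d → ℝ) :
    Real.cos (th p ((x + ev j i) l)) = Real.cos (th p (x l)) := by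
  have := th_shift p j l i x 1
  rw [one_smul] at this
  rw [this]
  split_ifs
  · rw [← Real.cos_add_int_mul_two_pi (th p (x l)) (p i)]
    congr 1
    ring
  · simp

theorem sin_shift (p : Fin d → ℤ) (j l : Fin N) (i : Fin d) (x : Fin N → Fin d → ℝ) :
    Real.sin (th p ((x + ev j i) l)) = Real.sin (th p (x l)) := by
  have := th_shift p j l i x 1
  rw [one_smul] at this
  rw [this]
  split_ifs
  · rw [← Real.sin_add_int_mul_two_pi (th p (x l)) (p i)]
    congr 1
    ring
  · simp

theorem JF_shift (S : Finset (Fin d → ℤ)) (c : (Fin d → ℤ) → ℝ) (j : Fin N) (i : Fin d)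
    (x : Fin N → Fin d → ℝ) : JF S c (x + ev j i) = JF S c x := by
  simp only [JF, aa, Cc, Ss, cos_shift, sin_shift]

theorem JG_shift (S : Finset (Fin d → ℤ)) (c : (Fin d → ℤ) → ℝ) (j l : Fin N) (i b : Fin d)
    (x : Fin N → Fin d → ℝ) : JG S c l b (x + ev j i) = JG S c l b x := by
  simp only [JG, gk, Cc, Ss, cos_shift, sin_shift]

/-- Laplacian of Jastrow exponent -/
theorem JH_sum (hN : 1 ≤ N) (S : Finset (Fin d → ℤ)) (c : (Fin d → ℤ) → ℝ)
    (x : Fin N → Fin d → ℝ) :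
    ∑ j, ∑ i, JH S c j i x = ∑ p ∈ S, c p * pSq d p * (1 - aa p x / N) := by
  have hN0 : (N : ℝ) ≠ 0 := by positivity
  unfold JH
  have h1 : ∀ p : Fin d → ℤ, ∑ j : Fin N, hk p j x = N - aa p x := by
    intro p
    simp only [hk, aa, Finset.sum_sub_distrib, Finset.sum_add_distrib, ← Finset.mul_sum]
    simp [Cc, Ss]
    ring
  calc ∑ j : Fin N, ∑ i : Fin d, 1 / (N:ℝ) * ∑ p ∈ S, c p * (2 * π * (p i : ℝ)) ^ 2 * hk p j x
      = ∑ p ∈ S, ∑ j : Fin N, ∑ i : Fin d,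
          1 / (N:ℝ) * (c p * (2 * π * (p i : ℝ)) ^ 2 * hk p j x) := by
        simp only [Finset.mul_sum]
        symm
        rw [Finset.sum_comm]
        refine Finset.sum_congr rfl fun j _ => ?_
        rw [Finset.sum_comm]
    _ = _ := by
        refine Finset.sum_congr rfl fun p _ => ?_
        have : ∀ j : Fin N, ∑ i : Fin d, 1 / (N:ℝ) * (c p * (2 * π * (p i : ℝ)) ^ 2 * hk p j x)
            = (1 / (N:ℝ) * c p * pSq d p) * hk p j x := by
          intro j
          rw [pSq, Finset.mul_sum, Finset.sum_mul]
          refine Finset.sum_congr rfl fun i _ => ?_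
          ring
        simp only [this]
        rw [← Finset.mul_sum, h1]
        field_simp

end

/-! ### Part 3: the square of the gradient -/

/-- plane wave -/
def pw {d : ℕ} (k : Fin d → ℤ) (y : Fin d → ℝ) : ℂ := Complex.exp ((th k y : ℝ) * Complex.I)

/-- density mode -/
def rho {d N : ℕ} (k : Fin d → ℤ) (x : Fin N → Fin d → ℝ) : ℂ := ∑ j, pw k (x j)

/-- dot product of momenta -/
def pdot {d : ℕ} (p q : Fin d → ℤ) : ℝ := ∑ i, (2 * π * (p i : ℝ)) * (2 * π * (q i : ℝ))

section
variable {d N : ℕ}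

theorem pw_re (k : Fin d → ℤ) (y : Fin d → ℝ) : (pw k y).re = Real.cos (th k y) := by
  simp [pw, Complex.exp_ofReal_mul_I_re]

theorem pw_im (k : Fin d → ℤ) (y : Fin d → ℝ) : (pw k y).im = Real.sin (th k y) := by
  simp [pw, Complex.exp_ofReal_mul_I_im]

theorem rho_re (k : Fin d → ℤ) (x : Fin N → Fin d → ℝ) : (rho k x).re = Cc k x := by
  simp [rho, Cc, pw_re]

theorem rho_im (k : Fin d → ℤ) (x : Fin N → Fin d → ℝ) : (rho k x).im = Ss k x := by
  simp [rho, Ss, pw_im]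

theorem rho_norm_sq (k : Fin d → ℤ) (x : Fin N → Fin d → ℝ) : ‖rho k x‖ ^ 2 = aa k x := by
  rw [← Complex.normSq_eq_norm_sq, Complex.normSq_apply, rho_re, rho_im, aa]; ring

theorem rho_norm_le (k : Fin d → ℤ) (x : Fin N → Fin d → ℝ) : ‖rho k x‖ ≤ N := by
  have : ‖rho k x‖ ≤ ∑ j : Fin N, ‖pw k (x j)‖ := norm_sum_le _ _
  simpa [pw, Complex.norm_exp_ofReal_mul_I] using this

theorem aa_nonneg (k : Fin d → ℤ) (x : Fin N → Fin d → ℝ) : 0 ≤ aa k x := by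
  unfold aa; positivity

theorem aa_le (k : Fin d → ℤ) (x : Fin N → Fin d → ℝ) : aa k x ≤ (N:ℝ) ^ 2 := by
  rw [← rho_norm_sq]
  have := rho_norm_le k x
  gcongr

theorem th_neg (k : Fin d → ℤ) (y : Fin d → ℝ) : th (-k) y = - th k y := by
  simp [th]

theorem th_sub (p q : Fin d → ℤ) (y : Fin d → ℝ) : th (p - q) y = th p y - th q y := by
  simp only [th, ← Finset.sum_sub_distrib]
  refine Finset.sum_congr rfl fun i _ => ?_
  simp
  ring

theorem th_sub_right (p : Fin d → ℤ) (y z : Fin d → ℝ) : th p (y - z) = th p y - th p z := by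
  simp only [th, ← Finset.sum_sub_distrib]
  refine Finset.sum_congr rfl fun i _ => ?_
  simp
  ring

theorem th_zero (y : Fin d → ℝ) : th (0 : Fin d → ℤ) y = 0 := by simp [th]

theorem Cc_neg (k : Fin d → ℤ) (x : Fin N → Fin d → ℝ) : Cc (-k) x = Cc k x := by
  simp [Cc, th_neg]

theorem Ss_neg (k : Fin d → ℤ) (x : Fin N → Fin d → ℝ) : Ss (-k) x = - Ss k x := by
  simp [Ss, th_neg]

theorem pw_mul_conj (p q : Fin d → ℤ) (y : Fin d → ℝ) :
    pw p y * (starRingEnd ℂ) (pw q y) = pw (p - q) y := by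
  simp only [pw, ← Complex.exp_conj, ← Complex.exp_add, th_sub]
  congr 1
  simp
  ring

theorem rho_zero (x : Fin N → Fin d → ℝ) : rho (0 : Fin d → ℤ) x = N := by
  simp [rho, pw, th_zero]

theorem aa_zero (x : Fin N → Fin d → ℝ) : aa (0 : Fin d → ℤ) x = (N : ℝ) ^ 2 := by
  simp [aa, Cc, Ss, th_zero]

theorem pdot_self (p : Fin d → ℤ) : pdot p p = pSq d p := by
  simp only [pdot, pSq]
  refine Finset.sum_congr rfl fun i _ => ?_
  ring

/-- complex gradient -/
def zz {d N : ℕ} (S : Finset (Fin d → ℤ)) (c : (Fin d → ℤ) → ℝ) (j : Fin N) (i : Fin d)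
    (x : Fin N → Fin d → ℝ) : ℂ :=
  ∑ p ∈ S, ((c p * (2 * π * (p i : ℝ)) : ℝ) : ℂ) * (pw p (x j) * (starRingEnd ℂ) (rho p x))

theorem zz_im (S : Finset (Fin d → ℤ)) (c : (Fin d → ℤ) → ℝ) (j : Fin N) (i : Fin d)
    (x : Fin N → Fin d → ℝ) : JG S c j i x = -(1 / (N:ℝ)) * (zz S c j i x).im := by
  simp only [JG, zz, Complex.im_sum, Complex.mul_im, Complex.mul_re, Complex.ofReal_re, Complex.ofReal_im,
    Complex.conj_re,
    Complex.conj_im, pw_re, pw_im, rho_re, rho_im, gk, Finset.mul_sum]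
  refine Finset.sum_congr rfl fun p _ => ?_
  ring

theorem zz_re (S : Finset (Fin d → ℤ)) (hS : ∀ p ∈ S, -p ∈ S) (c : (Fin d → ℤ) → ℝ)
    (hc : ∀ p, c (-p) = c p) (j : Fin N) (i : Fin d)
    (x : Fin N → Fin d → ℝ) : (zz S c j i x).re = 0 := by
  have h : (zz S c j i x).re = ∑ p ∈ S, (c p * (2 * π * (p i : ℝ))) *
      (Real.cos (th p (x j)) * Cc p x + Real.sin (th p (x j)) * Ss p x) := by
    simp only [zz, Complex.re_sum, Complex.mul_im, Complex.mul_re, Complex.ofReal_re, Complex.ofReal_im,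
      Complex.conj_re,
      Complex.conj_im, pw_re, pw_im, rho_re, rho_im]
    refine Finset.sum_congr rfl fun p _ => ?_
    ring
  have h2 : (zz S c j i x).re = - (zz S c j i x).re := by
    rw [h, ← Finset.sum_neg_distrib]
    refine Finset.sum_nbij' (fun p => -p) (fun p => -p) hS hS (by simp) (by simp) ?_
    intro p _
    simp only [hc, th_neg, Cc_neg, Ss_neg, Real.cos_neg, Real.sin_neg, Pi.neg_apply]
    push_cast
    ring
  linarith

theorem grad_sq (S : Finset (Fin d → ℤ)) (hS : ∀ p ∈ S, -p ∈ S) (c : (Fin d → ℤ) → ℝ)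
    (hc : ∀ p, c (-p) = c p) (x : Fin N → Fin d → ℝ) :
    ((∑ j, ∑ i, JG S c j i x ^ 2 : ℝ) : ℂ) = (1 / (N:ℂ) ^ 2) * ∑ p ∈ S, ∑ q ∈ S,
      ((c p * c q * pdot p q : ℝ) : ℂ) *
        (rho (p - q) x * ((starRingEnd ℂ) (rho p x) * rho q x)) := by
  have h1 : ∀ j i, ((JG S c j i x ^ 2 : ℝ) : ℂ)
      = (1 / (N:ℂ) ^ 2) * (zz S c j i x * (starRingEnd ℂ) (zz S c j i x)) := by
    intro j i
    rw [Complex.mul_conj, Complex.normSq_apply, zz_re S hS c hc, zz_im]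
    push_cast
    ring
  have h2 : ∀ (j : Fin N) (i : Fin d), zz S c j i x * (starRingEnd ℂ) (zz S c j i x)
      = ∑ p ∈ S, ∑ q ∈ S, ((c p * c q * ((2 * π * (p i : ℝ)) * (2 * π * (q i : ℝ))) : ℝ) : ℂ) *
        (pw (p - q) (x j) * ((starRingEnd ℂ) (rho p x) * rho q x)) := by
    intro j i
    rw [zz, map_sum, Finset.sum_mul_sum]
    refine Finset.sum_congr rfl fun p _ => Finset.sum_congr rfl fun q _ => ?_
    rw [← pw_mul_conj]
    simp only [map_mul, Complex.conj_conj, Complex.conj_ofReal]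
    push_cast
    ring
  have h3 : ∀ (p q : Fin d → ℤ), ∑ j : Fin N, ∑ i : Fin d,
      ((c p * c q * ((2 * π * (p i : ℝ)) * (2 * π * (q i : ℝ))) : ℝ) : ℂ) *
        (pw (p - q) (x j) * ((starRingEnd ℂ) (rho p x) * rho q x))
      = ((c p * c q * pdot p q : ℝ) : ℂ) *
        (rho (p - q) x * ((starRingEnd ℂ) (rho p x) * rho q x)) := by
    intro p q
    have : ∀ j : Fin N, ∑ i : Fin d,
      ((c p * c q * ((2 * π * (p i : ℝ)) * (2 * π * (q i : ℝ))) : ℝ) : ℂ) *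
        (pw (p - q) (x j) * ((starRingEnd ℂ) (rho p x) * rho q x))
        = ((c p * c q * pdot p q : ℝ) : ℂ) * (pw (p - q) (x j) *
          ((starRingEnd ℂ) (rho p x) * rho q x)) := by
      intro j
      rw [← Finset.sum_mul]
      congr 1
      rw [pdot, Finset.mul_sum]
      push_cast
      rfl
    simp only [this]
    rw [← Finset.mul_sum, ← Finset.sum_mul]
    rfl
  rw [Complex.ofReal_sum]
  simp only [Complex.ofReal_sum, h1, h2, ← Finset.mul_sum]
  congr 1
  calc _ = ∑ j : Fin N, ∑ p ∈ S, ∑ q ∈ S, ∑ i : Fin d,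
        ((c p * c q * ((2 * π * (p i : ℝ)) * (2 * π * (q i : ℝ))) : ℝ) : ℂ) *
        (pw (p - q) (x j) * ((starRingEnd ℂ) (rho p x) * rho q x)) := by
        refine Finset.sum_congr rfl fun j _ => ?_
        rw [Finset.sum_comm]
        refine Finset.sum_congr rfl fun p _ => ?_
        rw [Finset.sum_comm]
    _ = ∑ p ∈ S, ∑ q ∈ S, ∑ j : Fin N, ∑ i : Fin d,
        ((c p * c q * ((2 * π * (p i : ℝ)) * (2 * π * (q i : ℝ))) : ℝ) : ℂ) *
        (pw (p - q) (x j) * ((starRingEnd ℂ) (rho p x) * rho q x)) := by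
        rw [Finset.sum_comm]
        refine Finset.sum_congr rfl fun p _ => ?_
        rw [Finset.sum_comm]
    _ = _ := by simp only [h3]

/-- the cubic remainder -/
def RR {d N : ℕ} (S : Finset (Fin d → ℤ)) (c : (Fin d → ℤ) → ℝ) (x : Fin N → Fin d → ℝ) : ℝ :=
  (1 / (N:ℝ) ^ 2) * ∑ p ∈ S, ∑ q ∈ S.erase p,
    (c p * c q * |pdot p q|) * (‖rho (p - q) x‖ * (‖rho p x‖ * ‖rho q x‖))

theorem grad_sq_bound (hN : 1 ≤ N) (S : Finset (Fin d → ℤ)) (hS : ∀ p ∈ S, -p ∈ S)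
    (c : (Fin d → ℤ) → ℝ)
    (hc : ∀ p, c (-p) = c p) (hc0 : ∀ p, 0 ≤ c p) (x : Fin N → Fin d → ℝ) :
    |∑ j, ∑ i, JG S c j i x ^ 2 - ∑ p ∈ S, c p ^ 2 * pSq d p * (aa p x / N)| ≤ RR S c x := by
  have hN0 : (N : ℝ) ≠ 0 := by positivity
  have hN0' : (N : ℂ) ≠ 0 := by exact_mod_cast hN0
  have key : ((∑ j, ∑ i, JG S c j i x ^ 2 - ∑ p ∈ S, c p ^ 2 * pSq d p * (aa p x / N) : ℝ) : ℂ)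
      = (1 / (N:ℂ) ^ 2) * ∑ p ∈ S, ∑ q ∈ S.erase p,
      ((c p * c q * pdot p q : ℝ) : ℂ) *
        (rho (p - q) x * ((starRingEnd ℂ) (rho p x) * rho q x)) := by
    rw [Complex.ofReal_sub, grad_sq S hS c hc, sub_eq_iff_eq_add]
    have : ∀ p ∈ S, ∑ q ∈ S, ((c p * c q * pdot p q : ℝ) : ℂ) *
        (rho (p - q) x * ((starRingEnd ℂ) (rho p x) * rho q x))
        = ∑ q ∈ S.erase p, ((c p * c q * pdot p q : ℝ) : ℂ) *
        (rho (p - q) x * ((starRingEnd ℂ) (rho p x) * rho q x)) +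
          ((c p ^ 2 * pSq d p : ℝ) : ℂ) * ((N:ℂ) * (aa p x : ℝ)) := by
      intro p hp
      rw [← Finset.sum_erase_add _ _ hp, sub_self, rho_zero, pdot_self, ← rho_norm_sq,
        ← Complex.normSq_eq_norm_sq, ← Complex.mul_conj]
      push_cast
      ring
    rw [Finset.sum_congr rfl this, Finset.sum_add_distrib, mul_add]
    congr 1
    rw [Complex.ofReal_sum, Finset.mul_sum]
    refine Finset.sum_congr rfl fun p _ => ?_
    push_cast
    field_simp
  rw [← Real.norm_eq_abs, ← Complex.norm_real, key, RR, norm_mul]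
  have h1 : ‖(1 / (N:ℂ) ^ 2)‖ = 1 / (N:ℝ) ^ 2 := by simp
  rw [h1]
  refine mul_le_mul_of_nonneg_left ?_ (by positivity)
  refine (norm_sum_le _ _).trans (Finset.sum_le_sum fun p _ => ?_)
  refine (norm_sum_le _ _).trans (Finset.sum_le_sum fun q _ => ?_)
  rw [norm_mul, norm_mul, norm_mul, Complex.norm_real, Real.norm_eq_abs, abs_mul,
    abs_of_nonneg (mul_nonneg (hc0 p) (hc0 q)), RCLike.norm_conj]

/-- crude bound on the gradient -/
theorem grad_sq_crude (hN : 1 ≤ N) (S : Finset (Fin d → ℤ)) (x : Fin N → Fin d → ℝ) :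
    ∑ j, ∑ i, JG S (fun _ => 1) j i x ^ 2 ≤ S.card * ∑ p ∈ S, pSq d p * (aa p x / N) := by
  have hN0 : (0:ℝ) < N := by positivity
  have hg : ∀ (p : Fin d → ℤ) (j : Fin N), gk p j x ^ 2 ≤ aa p x := by
    intro p j
    unfold gk aa
    have := Real.sin_sq_add_cos_sq (th p (x j))
    set s := Real.sin (th p (x j))
    set c := Real.cos (th p (x j))
    nlinarith [sq_nonneg (Ss p x * s + Cc p x * c), sq_nonneg (Ss p x * c - Cc p x * s)]
  have h1 : ∀ (j : Fin N) (i : Fin d), JG S (fun _ => 1) j i x ^ 2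
      ≤ (1 / (N:ℝ) ^ 2) * (S.card * ∑ p ∈ S, (2 * π * (p i : ℝ)) ^ 2 * aa p x) := by
    intro j i
    rw [JG, mul_pow, one_div_pow]
    refine mul_le_mul_of_nonneg_left ?_ (by positivity)
    refine sq_sum_le_card_mul_sum_sq.trans ?_
    refine mul_le_mul_of_nonneg_left (Finset.sum_le_sum fun p _ => ?_) (by positivity)
    rw [one_mul, mul_pow]
    exact mul_le_mul_of_nonneg_left (hg p j) (by positivity)
  have h2 : ∑ j : Fin N, ∑ i : Fin d,
      (1 / (N:ℝ) ^ 2) * (S.card * ∑ p ∈ S, (2 * π * (p i : ℝ)) ^ 2 * aa p x)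
      = S.card * ∑ p ∈ S, pSq d p * (aa p x / N) := by
    rw [Finset.sum_const, Finset.card_univ, Fintype.card_fin, nsmul_eq_mul]
    rw [← Finset.mul_sum, ← Finset.mul_sum, Finset.sum_comm]
    simp only [← Finset.sum_mul]
    have hps : ∀ p : Fin d → ℤ, ∑ i, (2 * π * (p i : ℝ)) ^ 2 = pSq d p := fun _ => rfl
    simp only [hps, Finset.mul_sum]
    refine Finset.sum_congr rfl fun p _ => ?_
    field_simp
  rw [← h2]
  exact Finset.sum_le_sum fun j _ => Finset.sum_le_sum fun i _ => h1 j i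

end

/-! ### Part 4: the potential, orthogonality -/

/-- the total pair potential -/
def VV {d N : ℕ} (w : (Fin d → ℝ) → ℝ) (x : Fin N → Fin d → ℝ) : ℝ :=
  ∑ j : Fin N, ∑ k : Fin N, if j < k then w (x j - x k) else 0

section
variable {d N : ℕ}

theorem wOf_hasSum (hw : (Fin d → ℤ) → ℝ) (h0 : ∀ k, 0 ≤ hw k) (hs : Summable hw)
    (y : Fin d → ℝ) : HasSum (fun k => hw k * Real.cos (th k y)) (wOf d hw y) := by
  have h1 : Summable fun k : Fin d → ℤ => (hw k : ℂ) *
      Complex.exp (Complex.I * ((∑ i, (2 * π * (k i : ℝ)) * y i : ℝ) : ℂ)) := by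
    refine Summable.of_norm (hs.congr fun k => ?_)
    rw [norm_mul, mul_comm Complex.I, Complex.norm_exp_ofReal_mul_I, Complex.norm_real,
      Real.norm_of_nonneg (h0 k), mul_one]
  have h2 := Complex.hasSum_re h1.hasSum
  refine h2.congr_fun ?_
  intro k
  rw [Complex.re_ofReal_mul, mul_comm Complex.I, Complex.exp_ofReal_mul_I_re]
  rfl

theorem wOf_cont (hw : (Fin d → ℤ) → ℝ) (h0 : ∀ k, 0 ≤ hw k) (hs : Summable hw) :
    Continuous (wOf d hw) := by
  have : wOf d hw = fun y => ∑' k, hw k * Real.cos (th k y) := by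
    ext y; exact (wOf_hasSum hw h0 hs y).tsum_eq.symm
  rw [this]
  refine continuous_tsum (u := hw) (fun k => ?_) hs ?_
  · unfold th; fun_prop
  · intro k y
    rw [norm_mul, Real.norm_of_nonneg (h0 k)]
    have := Real.abs_cos_le_one (th k y)
    rw [Real.norm_eq_abs]
    nlinarith [h0 k]

theorem VV_cont (hw : (Fin d → ℤ) → ℝ) (h0 : ∀ k, 0 ≤ hw k) (hs : Summable hw) :
    Continuous (VV (wOf d hw) : (Fin N → Fin d → ℝ) → ℝ) := by
  have := wOf_cont hw h0 hs
  unfold VV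
  refine continuous_finsetSum _ fun j _ => continuous_finsetSum _ fun k _ => ?_
  split_ifs
  · fun_prop
  · fun_prop

theorem aa_eq (k : Fin d → ℤ) (x : Fin N → Fin d → ℝ) :
    aa k x = ∑ j, ∑ l, Real.cos (th k (x j - x l)) := by
  simp only [th_sub_right, Real.cos_sub, Finset.sum_add_distrib, ← Finset.sum_mul_sum]
  rw [aa, Cc, Ss]
  ring

theorem sum_pairs (W : Fin N → Fin N → ℝ) (hW : ∀ j l, W j l = W l j) :
    ∑ j, ∑ l, W j l = 2 * (∑ j, ∑ l, if j < l then W j l else 0) + ∑ j, W j j := by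
  have h1 : ∀ j l, W j l = (if j < l then W j l else 0) + (if l < j then W l j else 0)
      + (if j = l then W j l else 0) := by
    intro j l
    rcases lt_trichotomy j l with h | h | h
    · simp [h, h.not_gt, h.ne]
    · simp [h]
    · simp [h, h.not_gt, h.ne', hW j l]
  calc ∑ j, ∑ l, W j l = ∑ j, ∑ l, ((if j < l then W j l else 0) + (if l < j then W l j else 0)
      + (if j = l then W j l else 0)) := by
        refine Finset.sum_congr rfl fun j _ => Finset.sum_congr rfl fun l _ => h1 j l
    _ = _ := by
      simp only [Finset.sum_add_distrib]
      rw [Finset.sum_comm (f := fun j l => if l < j then W l j else 0)]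
      simp
      ring

theorem VV_hasSum (hw : (Fin d → ℤ) → ℝ) (h0 : ∀ k, 0 ≤ hw k) (hs : Summable hw)
    (x : Fin N → Fin d → ℝ) :
    HasSum (fun k => hw k * aa k x) (2 * VV (wOf d hw) x + N * ∑' k, hw k) := by
  have hsym : ∀ j l : Fin N, wOf d hw (x j - x l) = wOf d hw (x l - x j) := by
    intro j l
    refine (wOf_hasSum hw h0 hs (x j - x l)).unique ?_
    refine (wOf_hasSum hw h0 hs (x l - x j)).congr_fun ?_
    intro k
    rw [th_sub_right, th_sub_right, ← Real.cos_neg, neg_sub]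
  have hself : ∀ j : Fin N, wOf d hw (x j - x j) = ∑' k, hw k := by
    intro j
    rw [← (wOf_hasSum hw h0 hs (x j - x j)).tsum_eq]
    simp [th]
  have h1 := sum_pairs (fun j l : Fin N => wOf d hw (x j - x l)) hsym
  simp only [hself, Finset.sum_const, Finset.card_univ, Fintype.card_fin, nsmul_eq_mul] at h1
  have h2 : 2 * VV (wOf d hw) x + N * ∑' k, hw k = ∑ j : Fin N, ∑ l : Fin N, wOf d hw (x j - x l) :=
    h1.symm
  rw [h2]
  have h3 : HasSum (fun k => ∑ j : Fin N, ∑ l : Fin N, hw k * Real.cos (th k (x j - x l)))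
      (∑ j : Fin N, ∑ l : Fin N, wOf d hw (x j - x l)) :=
    hasSum_sum fun j _ => hasSum_sum fun l _ => wOf_hasSum hw h0 hs (x j - x l)
  refine h3.congr_fun ?_
  intro k
  simp only [aa_eq, Finset.mul_sum]

theorem integral_cos_zero (k : Fin d → ℤ) (hk : k ≠ 0) (j l : Fin N) (hjl : j ≠ l) :
    ∫ x in cube d N, Real.cos (th k (x j - x l)) = 0 := by
  obtain ⟨i, hi⟩ : ∃ i, k i ≠ 0 := by
    by_contra h
    push Not at h
    exact hk (funext h)
  have hne : (2 * π * (k i : ℝ)) ≠ 0 := by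
    have : (k i : ℝ) ≠ 0 := by exact_mod_cast hi
    positivity
  have hcj := (th_contDiff (N := N) k j).continuous
  have hcl := (th_contDiff (N := N) k l).continuous
  have h := integral_deriv_zero (N := N) j i (fun x => Real.sin (th k (x j) - th k (x l)))
    (fun x => Real.cos (th k (x j) - th k (x l)) * (2 * π * (k i : ℝ))) (by fun_prop)
    (by
      intro x
      have h1 := ((th_deriv k j j i x).fun_sub (th_deriv k j l i x)).sin
      refine h1.congr_deriv ?_
      simp [hjl.symm])
    (by
      intro x
      simp only [Real.sin_sub, cos_shift, sin_shift])
  rw [integral_mul_const] at h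
  simp only [th_sub_right]
  exact (mul_eq_zero.1 h).resolve_right hne

theorem integral_aa (k : Fin d → ℤ) (hk : k ≠ 0) :
    ∫ x in cube d N, aa k x = N := by
  have hc : ∀ j l : Fin N, Continuous fun x : Fin N → Fin d → ℝ =>
      Real.cos (th k (x j - x l)) := by
    intro j l
    unfold th
    fun_prop
  simp only [aa_eq]
  rw [integral_finsetSum _ (fun j _ => int_cont (by fun_prop))]
  have : ∀ j : Fin N, ∫ x in cube d N, ∑ l, Real.cos (th k (x j - x l)) = 1 := by
    intro j
    rw [integral_finsetSum _ (fun l _ => int_cont (by fun_prop))]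
    rw [Finset.sum_eq_single j]
    · simp [th]
    · intro l _ hl
      exact integral_cos_zero k hk j l hl.symm
    · simp
  simp [this]

theorem rho_cont (k : Fin d → ℤ) : Continuous (fun x : Fin N → Fin d → ℝ => rho k x) := by
  unfold rho pw th
  fun_prop

theorem integral_rho (hN : 1 ≤ N) (k : Fin d → ℤ) (hk : k ≠ 0) :
    ∫ x in cube d N, ‖rho k x‖ ≤ Real.sqrt N := by
  have hN0 : (0:ℝ) < N := by positivity
  have hs : 0 < Real.sqrt N := Real.sqrt_pos.2 hN0
  have hsq : Real.sqrt N ^ 2 = N := Real.sq_sqrt hN0.le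
  have h1 : ∀ x : Fin N → Fin d → ℝ, ‖rho k x‖ ≤ (1 / 2) * Real.sqrt N
      + (1 / (2 * Real.sqrt N)) * aa k x := by
    intro x
    rw [← rho_norm_sq]
    have : 0 ≤ (1 / (2 * Real.sqrt N)) * (‖rho k x‖ - Real.sqrt N) ^ 2 := by positivity
    have h2 : (1 / (2 * Real.sqrt N)) * (‖rho k x‖ - Real.sqrt N) ^ 2
      = (1 / (2 * Real.sqrt N)) * ‖rho k x‖ ^ 2 - ‖rho k x‖ + (1 / 2) * Real.sqrt N := by
      field_simp
      ring
    linarith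
  have hca := aa_cont (N := N) k
  have hc1 : Continuous fun x : Fin N → Fin d → ℝ => (1 / (2 * Real.sqrt N)) * aa k x := by
    fun_prop
  have hc2 : Continuous fun x : Fin N → Fin d → ℝ => (1 / 2) * Real.sqrt N
      + (1 / (2 * Real.sqrt N)) * aa k x := by fun_prop
  have h2 := integral_mono (μ := volume.restrict (cube d N)) (int_cont (rho_cont k).norm)
    (int_cont hc2) h1
  refine h2.trans (le_of_eq ?_)
  have h3 : (1 / (2 * Real.sqrt N)) * (N:ℝ) = Real.sqrt N / 2 := by
    rw [div_mul_eq_mul_div, div_eq_div_iff (by positivity) (by norm_num)]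
    linarith
  rw [integral_add (int_cont continuous_const) (int_cont hc1),
    integral_const_mul (1 / (2 * Real.sqrt N)), integral_aa k hk, h3, integral_const]
  simp
  ring

end

/-! ### Part 5: lower bound -/

section
variable {d N : ℕ}

/-- rescaled total density fluctuation -/
def YY {d N : ℕ} (S : Finset (Fin d → ℤ)) (x : Fin N → Fin d → ℝ) : ℝ := ∑ k ∈ S, aa k x / N

/-- cut-off function -/
def chi {d N : ℕ} (S : Finset (Fin d → ℤ)) (c : (Fin d → ℤ) → ℝ) (K : ℝ)
    (x : Fin N → Fin d → ℝ) : ℝ := 1 / (1 + (K * (2 / (N:ℝ))) * JF S c x)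

theorem JF_nonneg (S : Finset (Fin d → ℤ)) (c : (Fin d → ℤ) → ℝ) (hc0 : ∀ p, 0 ≤ c p)
    (x : Fin N → Fin d → ℝ) : 0 ≤ JF S c x := by
  unfold JF
  exact mul_nonneg (by positivity)
    (Finset.sum_nonneg fun p _ => mul_nonneg (hc0 p) (aa_nonneg p x))

theorem chi_den (S : Finset (Fin d → ℤ)) (c : (Fin d → ℤ) → ℝ) (hc0 : ∀ p, 0 ≤ c p) (K : ℝ)
    (hK : 0 < K) (x : Fin N → Fin d → ℝ) : 1 ≤ 1 + (K * (2 / (N:ℝ))) * JF S c x := by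
  have := JF_nonneg S c hc0 x
  have : 0 ≤ (K * (2 / (N:ℝ))) * JF S c x := by positivity
  linarith

theorem chi_deriv (S : Finset (Fin d → ℤ)) (c : (Fin d → ℤ) → ℝ) (hc0 : ∀ p, 0 ≤ c p) (K : ℝ)
    (hK : 0 < K) (x : Fin N → Fin d → ℝ) (j : Fin N) (i : Fin d) :
    HasDerivAt (fun t : ℝ => chi S c K (x + t • ev j i))
      (-(K * (2 / (N:ℝ))) * chi S c K x ^ 2 * JG S c j i x) 0 := by
  unfold chi
  have h1 := ((JF_deriv S c j i x).const_mul (K * (2 / (N:ℝ)))).const_add 1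
  have hne : 1 + (K * (2 / (N:ℝ))) * JF S c (x + (0:ℝ) • ev j i) ≠ 0 := by
    have := chi_den S c hc0 K hK (x + (0:ℝ) • ev j i)
    positivity
  have h2 := h1.fun_inv hne
  simp only [one_div]
  refine h2.congr_deriv ?_
  simp only [zero_smul, add_zero] at hne ⊢
  field_simp

theorem chi_cont (S : Finset (Fin d → ℤ)) (c : (Fin d → ℤ) → ℝ) (hc0 : ∀ p, 0 ≤ c p) (K : ℝ)
    (hK : 0 < K) : Continuous (chi S c K : (Fin N → Fin d → ℝ) → ℝ) := by
  have := JF_cont (N := N) S c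
  unfold chi
  refine Continuous.div continuous_const (by fun_prop) fun x => ?_
  have := chi_den S c hc0 K hK x
  positivity

theorem kin_I {Ψ : (Fin N → Fin d → ℝ) → ℂ} (hΨ : IsAdmissible d N Ψ)
    (S : Finset (Fin d → ℤ)) (c : (Fin d → ℤ) → ℝ) (hc0 : ∀ p, 0 ≤ c p) (K : ℝ)
    (hK : 0 < K) :
    ∫ x in cube d N, (chi S c K x * ∑ j, ∑ i, JH S c j i x
      - chi S c K x ^ 2 * (1 + K * (2 / (N:ℝ))) * ∑ j, ∑ i, JG S c j i x ^ 2) * ‖Ψ x‖ ^ 2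
      ≤ ∫ x in cube d N, ∑ j : Fin N, ∑ i : Fin d,
          ‖fderiv ℝ Ψ x (Pi.single j (Pi.single i 1))‖ ^ 2 := by
  have hcc := chi_cont (N := N) S c hc0 K hK
  have h := kinetic_lower hΨ (fun j i x => chi S c K x * JG S c j i x)
    (fun j i x => -(K * (2 / (N:ℝ))) * chi S c K x ^ 2 * JG S c j i x * JG S c j i x
      + chi S c K x * JH S c j i x)
    (fun j i => hcc.mul (JG_cont S c j i))
    (fun j i => by
      have h1 := JG_cont S c j i
      have h2 := JH_cont S c j i
      fun_prop)
    (fun j i x => by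
      refine ((chi_deriv S c hc0 K hK x j i).fun_mul (JG_deriv S c j i x)).congr_deriv ?_
      simp only [zero_smul, add_zero])
    (fun j i x => by
      simp only [chi, JF_shift, JG_shift])
  refine le_of_eq_of_le ?_ h
  congr 1
  ext x
  congr 1
  simp only [Finset.mul_sum, ← Finset.sum_sub_distrib]
  refine Finset.sum_congr rfl fun j _ => Finset.sum_congr rfl fun i _ => ?_
  ring

theorem pSq_nonneg (p : Fin d → ℤ) : 0 ≤ pSq d p := by
  unfold pSq; positivity

theorem pSq_ge (p : Fin d → ℤ) (hp : p ≠ 0) : 2 ≤ pSq d p := by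
  obtain ⟨i, hi⟩ : ∃ i, p i ≠ 0 := by
    by_contra h
    push Not at h
    exact hp (funext h)
  have h1 : (2 * π * (p i : ℝ)) ^ 2 ≤ pSq d p :=
    Finset.single_le_sum (f := fun i => (2 * π * (p i : ℝ)) ^ 2) (fun _ _ => sq_nonneg _)
      (Finset.mem_univ i)
  have h2 : (1:ℝ) ≤ (p i : ℝ) ^ 2 := by
    have : 1 ≤ (p i) ^ 2 := by
      have := sq_pos_of_ne_zero hi
      linarith
    exact_mod_cast this
  have h3 := Real.pi_gt_three
  have h4 : (2 * π * (p i : ℝ)) ^ 2 = 4 * (π ^ 2 * (p i : ℝ) ^ 2) := by ring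
  have h5 : (9:ℝ) ≤ π ^ 2 := by nlinarith
  have h6 : (9:ℝ) * 1 ≤ π ^ 2 * (p i : ℝ) ^ 2 := mul_le_mul h5 h2 (by norm_num) (by positivity)
  linarith

theorem kin_II {Ψ : (Fin N → Fin d → ℝ) → ℂ} (hΨ : IsAdmissible d N Ψ) (hN : 1 ≤ N)
    (S : Finset (Fin d → ℤ)) (hS0 : ∀ p ∈ S, p ≠ 0) (δ : ℝ) (hδ : 0 < δ)
    (hδS : δ * S.card ≤ 1 / 2) :
    ∫ x in cube d N, (δ * (YY S x - ∑ p ∈ S, pSq d p)) * ‖Ψ x‖ ^ 2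
      ≤ ∫ x in cube d N, ∑ j : Fin N, ∑ i : Fin d,
          ‖fderiv ℝ Ψ x (Pi.single j (Pi.single i 1))‖ ^ 2 := by
  have hJG := fun j i => JG_cont (N := N) S (fun _ => 1) j i
  have hJH := fun j i => JH_cont (N := N) S (fun _ => 1) j i
  have haa := fun p : Fin d → ℤ => aa_cont (N := N) p
  have hΨc := hΨ.1.continuous
  have h := kinetic_lower hΨ (fun j i x => -δ * JG S (fun _ => 1) j i x)
    (fun j i x => -δ * JH S (fun _ => 1) j i x)
    (fun j i => by fun_prop)
    (fun j i => by fun_prop)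
    (fun j i x => (JG_deriv S (fun _ => 1) j i x).const_mul (-δ))
    (fun j i x => by simp only [JG_shift])
  refine le_trans ?_ h
  refine integral_mono (int_cont ?_) (int_cont ?_) ?_
  · unfold YY
    fun_prop
  · fun_prop
  intro x
  refine mul_le_mul_of_nonneg_right ?_ (by positivity)
  have e1 : ∑ j : Fin N, ∑ i : Fin d, (-δ * JH S (fun _ => 1) j i x
      - (-δ * JG S (fun _ => 1) j i x) ^ 2)
      = -δ * ∑ j : Fin N, ∑ i : Fin d, JH S (fun _ => 1) j i x
        - δ ^ 2 * ∑ j : Fin N, ∑ i : Fin d, JG S (fun _ => 1) j i x ^ 2 := by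
    simp only [Finset.mul_sum, ← Finset.sum_sub_distrib]
    refine Finset.sum_congr rfl fun j _ => Finset.sum_congr rfl fun i _ => ?_
    ring
  rw [e1, JH_sum hN]
  have h2 := grad_sq_crude hN S x
  set Γ := ∑ j : Fin N, ∑ i : Fin d, JG S (fun _ => 1) j i x ^ 2
  set Z := ∑ p ∈ S, pSq d p * (aa p x / N) with hZ
  have hZY : 2 * YY S x ≤ Z := by
    rw [YY, Finset.mul_sum]
    refine Finset.sum_le_sum fun p hp => ?_
    have := pSq_ge p (hS0 p hp)
    have h3 : 0 ≤ aa p x / N := div_nonneg (aa_nonneg p x) (by positivity)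
    nlinarith
  have hZ0 : 0 ≤ Z := Finset.sum_nonneg fun p _ =>
    mul_nonneg (pSq_nonneg p) (div_nonneg (aa_nonneg p x) (by positivity))
  have e2 : ∑ p ∈ S, (1:ℝ) * pSq d p * (1 - aa p x / N) = ∑ p ∈ S, pSq d p - Z := by
    rw [hZ, ← Finset.sum_sub_distrib]
    refine Finset.sum_congr rfl fun p _ => ?_
    ring
  rw [e2]
  have h4 : δ ^ 2 * Γ ≤ δ * (1 / 2 * Z) := by
    calc δ ^ 2 * Γ ≤ δ ^ 2 * (S.card * Z) := by gcongr
      _ = δ * ((δ * S.card) * Z) := by ring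
      _ ≤ δ * (1 / 2 * Z) := by gcongr
  have h5 : δ * (2 * YY S x) ≤ δ * Z := by gcongr
  nlinarith

/-- pointwise lower bound on the local energy -/
theorem point_I (hN : 1 ≤ N) (S₀ S : Finset (Fin d → ℤ)) (hsym : ∀ p ∈ S₀, -p ∈ S₀)
    (hsub : S₀ ⊆ S) (hdiff : ∀ p ∈ S₀, ∀ q ∈ S₀, p ≠ q → p - q ∈ S)
    (c : (Fin d → ℤ) → ℝ) (hc : ∀ p, c (-p) = c p)
    (hc0 : ∀ p, 0 ≤ c p) (K η : ℝ) (hK : 0 < K) (hη : 0 < η)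
    (hcK : ∀ p ∈ S₀, c p ≤ 4 * η ^ 2 * K) (x : Fin N → Fin d → ℝ) :
    ∑ p ∈ S₀, c p * pSq d p - ∑ p ∈ S₀, (c p + c p ^ 2) * pSq d p * (aa p x / N)
      - (η * (∑ p ∈ S₀, ∑ q ∈ S₀.erase p, c q * |pdot p q|) + (K / N) *
        ((∑ p ∈ S₀, c p) * (∑ p ∈ S₀, c p * pSq d p) + 2 * (∑ p ∈ S₀, c p ^ 2 * pSq d p)
          + 2 * (η * (∑ p ∈ S₀, ∑ q ∈ S₀.erase p, c q * |pdot p q|)))) * YY S x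
    ≤ (chi S₀ c K x * ∑ j, ∑ i, JH S₀ c j i x
      - chi S₀ c K x ^ 2 * (1 + K * (2 / (N:ℝ))) * ∑ j, ∑ i, JG S₀ c j i x ^ 2) := by
  have hN0 : (0:ℝ) < N := by positivity
  have haN : ∀ p : Fin d → ℤ, 0 ≤ aa p x / N := fun p =>
    div_nonneg (aa_nonneg p x) hN0.le
  have hY : ∀ p ∈ S, aa p x / N ≤ YY S x := fun p hp =>
    Finset.single_le_sum (f := fun p => aa p x / N) (fun p _ => haN p) hp
  have hY0 : 0 ≤ YY S x := Finset.sum_nonneg fun p _ => haN p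
  set M := ∑ p ∈ S₀, ∑ q ∈ S₀.erase p, c q * |pdot p q| with hM
  set M1 := ∑ p ∈ S₀, c p ^ 2 * pSq d p with hM1
  set M2 := ∑ p ∈ S₀, c p * pSq d p with hM2
  set M3 := ∑ p ∈ S₀, c p with hM3
  have hM0 : 0 ≤ M := Finset.sum_nonneg fun p _ => Finset.sum_nonneg fun q _ =>
    mul_nonneg (hc0 q) (abs_nonneg _)
  have hM20 : 0 ≤ M2 := Finset.sum_nonneg fun p _ => mul_nonneg (hc0 p) (pSq_nonneg p)
  set χ := chi S₀ c K x with hχ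
  set G := (2 / (N:ℝ)) * JF S₀ c x with hG
  have hG0 : 0 ≤ G := mul_nonneg (by positivity) (JF_nonneg S₀ c hc0 x)
  have hχG : χ = 1 / (1 + K * G) := by rw [hχ, chi, hG]; ring
  have hden : 1 ≤ 1 + K * G := by
    have : 0 ≤ K * G := by positivity
    linarith
  have hχ0 : 0 < χ := by rw [hχG]; positivity
  have hχ1 : χ ≤ 1 := by
    rw [hχG, div_le_one (by positivity)]; exact hden
  have hχd : χ * (1 + K * G) = 1 := by rw [hχG]; field_simp
  have hχlow : 1 - K * G ≤ χ := by nlinarith [mul_nonneg hK.le hG0]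
  have hGsum : G = ∑ p ∈ S₀, c p * (aa p x / N ^ 2) := by
    rw [hG, JF, ← mul_assoc, Finset.mul_sum]
    refine Finset.sum_congr rfl fun p _ => ?_
    field_simp
  have hGY : G ≤ (1 / N) * (M3 * YY S x) := by
    rw [hGsum, hM3, Finset.sum_mul, Finset.mul_sum]
    refine Finset.sum_le_sum fun p hp => ?_
    have := hY p (hsub hp)
    have h2 : c p * (aa p x / N ^ 2) = (1 / N) * (c p * (aa p x / N)) := by field_simp
    rw [h2]
    have := hc0 p
    gcongr
  -- cubic terms
  have hsmall : ∀ p ∈ S₀, χ * (c p * ‖rho p x‖ / N) ≤ η := by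
    intro p hp
    have h1 : c p * (aa p x / N ^ 2) ≤ G := by
      rw [hGsum]
      exact Finset.single_le_sum (f := fun p => c p * (aa p x / N ^ 2))
        (fun p _ => mul_nonneg (hc0 p) (div_nonneg (aa_nonneg p x) (by positivity))) hp
    have h2 : (c p * ‖rho p x‖ / N) ^ 2 ≤ (η * (1 + K * G)) ^ 2 := by
      calc (c p * ‖rho p x‖ / N) ^ 2 = c p * (c p * (aa p x / N ^ 2)) := by
            rw [← rho_norm_sq]; ring
        _ ≤ c p * G := mul_le_mul_of_nonneg_left h1 (hc0 p)
        _ ≤ (4 * η ^ 2 * K) * G := mul_le_mul_of_nonneg_right (hcK p hp) hG0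
        _ ≤ (η * (1 + K * G)) ^ 2 := by nlinarith [mul_nonneg (sq_nonneg η) (sq_nonneg (1 - K * G))]
    have h3 : c p * ‖rho p x‖ / N ≤ η * (1 + K * G) :=
      le_of_sq_le_sq h2 (by positivity)
    calc χ * (c p * ‖rho p x‖ / N) ≤ χ * (η * (1 + K * G)) := by gcongr
      _ = η * (χ * (1 + K * G)) := by ring
      _ = η := by rw [hχd, mul_one]
  have hR : χ ^ 2 * RR S₀ c x ≤ η * M * YY S x := by
    rw [RR, hM, Finset.mul_sum, Finset.mul_sum, Finset.mul_sum, Finset.sum_mul]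
    refine Finset.sum_le_sum fun p hp => ?_
    rw [Finset.mul_sum, Finset.mul_sum, Finset.mul_sum, Finset.sum_mul]
    refine Finset.sum_le_sum fun q hq => ?_
    have hq' := Finset.mem_of_mem_erase hq
    have hqp := Finset.ne_of_mem_erase hq
    have h1 := hY q (hsub hq')
    have h2 := hY (p - q) (hdiff p hp q hq' hqp.symm)
    have h3 : ‖rho (p - q) x‖ * ‖rho q x‖ / N ≤ YY S x := by
      have h4 : ‖rho (p - q) x‖ * ‖rho q x‖ / N ≤ (aa (p - q) x / N + aa q x / N) / 2 := by
        rw [← rho_norm_sq, ← rho_norm_sq, ← add_div, div_div, mul_comm (N:ℝ) 2, ← div_div]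
        gcongr
        nlinarith [sq_nonneg (‖rho (p - q) x‖ - ‖rho q x‖)]
      linarith
    have h5 := hsmall p hp
    have hcq := hc0 q
    have hcp := hc0 p
    calc χ ^ 2 * (1 / (N:ℝ) ^ 2 * ((c p * c q * |pdot p q|) *
          (‖rho (p - q) x‖ * (‖rho p x‖ * ‖rho q x‖))))
        = χ * ((χ * (c p * ‖rho p x‖ / N)) * ((c q * |pdot p q|) *
            (‖rho (p - q) x‖ * ‖rho q x‖ / N))) := by ring
      _ ≤ 1 * (η * ((c q * |pdot p q|) * YY S x)) := by gcongr
      _ = η * (c q * |pdot p q|) * YY S x := by ring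
  set D := ∑ p ∈ S₀, c p ^ 2 * pSq d p * (aa p x / N) with hD
  have hD0 : 0 ≤ D := Finset.sum_nonneg fun p _ =>
    mul_nonneg (mul_nonneg (sq_nonneg _) (pSq_nonneg p)) (haN p)
  have hDY : D ≤ M1 * YY S x := by
    rw [hD, hM1, Finset.sum_mul]
    refine Finset.sum_le_sum fun p hp => ?_
    exact mul_le_mul_of_nonneg_left (hY p (hsub hp)) (mul_nonneg (sq_nonneg _) (pSq_nonneg p))
  set Γ := ∑ j, ∑ i, JG S₀ c j i x ^ 2 with hΓ
  have hΓ1 : Γ ≤ D + RR S₀ c x := by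
    have := (abs_le.1 (grad_sq_bound hN S₀ hsym c hc hc0 x)).2
    linarith
  have hχΓ : χ ^ 2 * Γ ≤ D + η * M * YY S x := by
    have h1 : χ ^ 2 * Γ ≤ χ ^ 2 * D + χ ^ 2 * RR S₀ c x := by nlinarith [sq_nonneg χ]
    have h2 : χ ^ 2 * D ≤ 1 * D := by
      gcongr
      exact pow_le_one₀ hχ0.le hχ1
    linarith
  set L := ∑ p ∈ S₀, c p * pSq d p * (aa p x / N) with hL
  have hL0 : 0 ≤ L := Finset.sum_nonneg fun p _ =>
    mul_nonneg (mul_nonneg (hc0 _) (pSq_nonneg p)) (haN p)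
  have hJH : ∑ j, ∑ i, JH S₀ c j i x = M2 - L := by
    rw [JH_sum hN, hM2, hL, ← Finset.sum_sub_distrib]
    refine Finset.sum_congr rfl fun p _ => ?_
    ring
  have hLD : ∑ p ∈ S₀, (c p + c p ^ 2) * pSq d p * (aa p x / N) = L + D := by
    rw [hL, hD, ← Finset.sum_add_distrib]
    refine Finset.sum_congr rfl fun p _ => ?_
    ring
  rw [hJH, hLD]
  have f1 : M2 - K * ((1 / N) * (M3 * YY S x)) * M2 - L ≤ χ * (M2 - L) := by
    have g1 : (1 - K * ((1 / N) * (M3 * YY S x))) * M2 ≤ χ * M2 := by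
      refine mul_le_mul_of_nonneg_right ?_ hM20
      have : K * G ≤ K * ((1 / N) * (M3 * YY S x)) := by gcongr
      linarith
    have g2 : χ * L ≤ 1 * L := by gcongr
    linarith
  have f2 : χ ^ 2 * (1 + K * (2 / (N:ℝ))) * Γ
      ≤ D + η * M * YY S x + (K * (2 / N)) * (M1 * YY S x + η * M * YY S x) := by
    have hk2 : 0 ≤ K * (2 / (N:ℝ)) := by positivity
    have : (K * (2 / (N:ℝ))) * (χ ^ 2 * Γ) ≤ (K * (2 / N)) * (M1 * YY S x + η * M * YY S x) := by
      refine mul_le_mul_of_nonneg_left ?_ hk2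
      linarith
    calc χ ^ 2 * (1 + K * (2 / (N:ℝ))) * Γ = χ ^ 2 * Γ + (K * (2 / (N:ℝ))) * (χ ^ 2 * Γ) := by ring
      _ ≤ _ := by linarith
  have f3 : (η * M + (K / N) * (M3 * M2 + 2 * M1 + 2 * (η * M))) * YY S x
      = K * ((1 / N) * (M3 * YY S x)) * M2 + η * M * YY S x
        + (K * (2 / N)) * (M1 * YY S x + η * M * YY S x) := by
    field_simp
    ring
  rw [f3]
  linarith

theorem energy_split {Ψ : (Fin N → Fin d → ℝ) → ℂ} (hsm : ContDiff ℝ (⊤ : ℕ∞) Ψ) (lam : ℝ)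
    (w : (Fin d → ℝ) → ℝ) (hw : Continuous (VV w : (Fin N → Fin d → ℝ) → ℝ)) :
    energy d N lam w Ψ = (∫ x in cube d N, ∑ j : Fin N, ∑ i : Fin d,
          ‖fderiv ℝ Ψ x (Pi.single j (Pi.single i 1))‖ ^ 2)
        + ∫ x in cube d N, lam * VV w x * ‖Ψ x‖ ^ 2 := by
  have hΨc := hsm.continuous
  unfold energy
  rw [← integral_add]
  · rfl
  · refine int_cont (continuous_finsetSum _ fun j _ => continuous_finsetSum _ fun i _ => ?_)
    exact ((hsm.continuous_fderiv (by simp)).clm_apply continuous_const).norm.pow 2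
  · exact int_cont (by fun_prop)

theorem VV_lower (hw : (Fin d → ℤ) → ℝ) (h0 : ∀ k, 0 ≤ hw k) (hs : Summable hw)
    (S₀ : Finset (Fin d → ℤ)) (hS₀ : (0 : Fin d → ℤ) ∉ S₀) (x : Fin N → Fin d → ℝ) :
    hw 0 * (N:ℝ) ^ 2 + ∑ p ∈ S₀, hw p * aa p x - N * ∑' k, hw k ≤ 2 * VV (wOf d hw) x := by
  have h := VV_hasSum hw h0 hs x
  have h1 := sum_le_hasSum (insert 0 S₀) (fun k _ => mul_nonneg (h0 k) (aa_nonneg k x)) h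
  rw [Finset.sum_insert hS₀, aa_zero] at h1
  linarith

theorem lower_main {Ψ : (Fin N → Fin d → ℝ) → ℂ} (hΨ : IsAdmissible d N Ψ) (hN : 1 ≤ N)
    (hw : (Fin d → ℤ) → ℝ) (h0 : ∀ k, 0 ≤ hw k) (hs : Summable hw)
    (S₀ S : Finset (Fin d → ℤ)) (hsym : ∀ p ∈ S₀, -p ∈ S₀)
    (hsub : S₀ ⊆ S) (hdiff : ∀ p ∈ S₀, ∀ q ∈ S₀, p ≠ q → p - q ∈ S)
    (hS : ∀ p ∈ S, p ≠ 0)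
    (c : (Fin d → ℤ) → ℝ) (hc : ∀ p, c (-p) = c p)
    (hc0 : ∀ p, 0 ≤ c p) (hcw : ∀ p ∈ S₀, (c p + c p ^ 2) * pSq d p = hw p / 2)
    (K η δ ε lam : ℝ) (hK : 0 < K) (hη : 0 < η)
    (hcK : ∀ p ∈ S₀, c p ≤ 4 * η ^ 2 * K)
    (hδ : 0 < δ) (hδS : δ * S.card ≤ 1 / 2) (hε0 : 0 ≤ ε) (hε1 : ε ≤ 1) (hlam : 0 < lam)
    (hlamN : 1 - ε ≤ N * lam)
    (herr : η * (∑ p ∈ S₀, ∑ q ∈ S₀.erase p, c q * |pdot p q|) + (K / N) *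
        ((∑ p ∈ S₀, c p) * (∑ p ∈ S₀, c p * pSq d p) + 2 * (∑ p ∈ S₀, c p ^ 2 * pSq d p)
          + 2 * (η * (∑ p ∈ S₀, ∑ q ∈ S₀.erase p, c q * |pdot p q|))) ≤ ε * δ) :
    (1 - ε) * ∑ p ∈ S₀, c p * pSq d p - (N * lam) / 2 * (∑' k, hw k - hw 0)
      - ε * δ * ∑ p ∈ S, pSq d p + lam / 2 * N * (N - 1) * hw 0
      ≤ energy d N lam (wOf d hw) Ψ := by
  have hN0 : (0:ℝ) < N := by positivity
  have hVc := VV_cont (N := N) hw h0 hs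
  rw [energy_split hΨ.1 lam _ hVc]
  have hI := kin_I hΨ S₀ c hc0 K hK
  have hII := kin_II hΨ hN S hS δ hδ hδS
  set T := ∫ x in cube d N, ∑ j : Fin N, ∑ i : Fin d,
          ‖fderiv ℝ Ψ x (Pi.single j (Pi.single i 1))‖ ^ 2
  set Q1 : (Fin N → Fin d → ℝ) → ℝ := fun x => (chi S₀ c K x * ∑ j, ∑ i, JH S₀ c j i x
      - chi S₀ c K x ^ 2 * (1 + K * (2 / (N:ℝ))) * ∑ j, ∑ i, JG S₀ c j i x ^ 2) with hQ1
  set Q2 : (Fin N → Fin d → ℝ) → ℝ := fun x => δ * (YY S x - ∑ p ∈ S, pSq d p) with hQ2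
  set CC := (1 - ε) * ∑ p ∈ S₀, c p * pSq d p - (N * lam) / 2 * (∑' k, hw k - hw 0)
      - ε * δ * ∑ p ∈ S, pSq d p + lam / 2 * N * (N - 1) * hw 0 with hCC
  have hΨc := hΨ.1.continuous
  have hcc := chi_cont (N := N) S₀ c hc0 K hK
  have hJG := fun j i => JG_cont (N := N) S₀ c j i
  have hJH := fun j i => JH_cont (N := N) S₀ c j i
  have haa := fun p : Fin d → ℤ => aa_cont (N := N) p
  have hQ1c : Continuous Q1 := by rw [hQ1]; fun_prop
  have hQ2c : Continuous Q2 := by rw [hQ2]; unfold YY; fun_prop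
  have hpt : ∀ x, CC * ‖Ψ x‖ ^ 2 ≤ (1 - ε) * (Q1 x * ‖Ψ x‖ ^ 2) + ε * (Q2 x * ‖Ψ x‖ ^ 2)
      + lam * VV (wOf d hw) x * ‖Ψ x‖ ^ 2 := by
    intro x
    have hp1 := point_I hN S₀ S hsym hsub hdiff c hc hc0 K η hK hη hcK x
    have hV := VV_lower hw h0 hs S₀ (fun h => hS 0 (hsub h) rfl) x
    have hY0 : 0 ≤ YY S x := Finset.sum_nonneg fun p _ => div_nonneg (aa_nonneg p x) hN0.le
    have e1 : ∑ p ∈ S₀, (c p + c p ^ 2) * pSq d p * (aa p x / N)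
        = (∑ p ∈ S₀, hw p * aa p x) / (2 * N) := by
      rw [Finset.sum_div]
      refine Finset.sum_congr rfl fun p hp => ?_
      rw [hcw p hp]
      field_simp
    rw [e1] at hp1
    set err := η * (∑ p ∈ S₀, ∑ q ∈ S₀.erase p, c q * |pdot p q|) + (K / N) *
        ((∑ p ∈ S₀, c p) * (∑ p ∈ S₀, c p * pSq d p) + 2 * (∑ p ∈ S₀, c p ^ 2 * pSq d p)
          + 2 * (η * (∑ p ∈ S₀, ∑ q ∈ S₀.erase p, c q * |pdot p q|)))
    set A := ∑ p ∈ S₀, hw p * aa p x with hA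
    have hA0 : 0 ≤ A := Finset.sum_nonneg fun p _ => mul_nonneg (h0 p) (aa_nonneg p x)
    have g1 : (1 - ε) * (∑ p ∈ S₀, c p * pSq d p - A / (2 * N) - err * YY S x)
        ≤ (1 - ε) * Q1 x := mul_le_mul_of_nonneg_left hp1 (by linarith)
    have g2 : (1 - ε) * (err * YY S x) ≤ ε * δ * YY S x := by
      have h1 : err * YY S x ≤ ε * δ * YY S x := by gcongr
      have h2 : 0 ≤ ε * δ * YY S x := by positivity
      nlinarith
    have g3 : (1 - ε) * (A / (2 * N)) ≤ lam / 2 * A := by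
      have h1 : lam / 2 * A = (N * lam) * (A / (2 * N)) := by field_simp
      rw [h1]
      gcongr
    have g4 : lam / 2 * (hw 0 * (N:ℝ) ^ 2 + A - N * ∑' k, hw k)
        ≤ lam / 2 * (2 * VV (wOf d hw) x) := by gcongr
    have g5 : CC ≤ (1 - ε) * Q1 x + ε * Q2 x + lam * VV (wOf d hw) x := by
      rw [hCC, hQ2]
      nlinarith
    have := mul_le_mul_of_nonneg_right g5 (sq_nonneg ‖Ψ x‖)
    linarith
  have i1 : Integrable (fun x => (1 - ε) * (Q1 x * ‖Ψ x‖ ^ 2)) (volume.restrict (cube d N)) :=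
    int_cont (by fun_prop)
  have i2 : Integrable (fun x => ε * (Q2 x * ‖Ψ x‖ ^ 2)) (volume.restrict (cube d N)) :=
    int_cont (by fun_prop)
  have i3 : Integrable (fun x => lam * VV (wOf d hw) x * ‖Ψ x‖ ^ 2)
    (volume.restrict (cube d N)) := int_cont (by fun_prop)
  have i4 : Integrable (fun x => CC * ‖Ψ x‖ ^ 2) (volume.restrict (cube d N)) :=
    int_cont (by fun_prop)
  have hm := integral_mono i4 ((i1.add i2).add i3) hpt
  rw [integral_const_mul, hΨ.2.2.2, mul_one, integral_add' (i1.add i2) i3,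
    integral_add' i1 i2, integral_const_mul, integral_const_mul] at hm
  have t1 := mul_le_mul_of_nonneg_left hI (by linarith : 0 ≤ 1 - ε)
  have t2 := mul_le_mul_of_nonneg_left hII hε0
  have : (1 - ε) * T + ε * T = T := by ring
  linarith

end

/-! ### Part 6: coefficients -/

/-- Jastrow coefficients -/
def cof (d : ℕ) (hw : (Fin d → ℤ) → ℝ) (p : Fin d → ℤ) : ℝ :=
  (ePk d hw p - pSq d p) / (2 * pSq d p)

section
variable {d : ℕ}

theorem pSq_neg (p : Fin d → ℤ) : pSq d (-p) = pSq d p := by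
  unfold pSq
  refine Finset.sum_congr rfl fun i _ => ?_
  simp

theorem pSq_zero : pSq d 0 = 0 := by simp [pSq]

theorem ePk_ge (hw : (Fin d → ℤ) → ℝ) (h0 : ∀ k, 0 ≤ hw k) (p : Fin d → ℤ) :
    pSq d p ≤ ePk d hw p := by
  unfold ePk
  apply Real.le_sqrt_of_sq_le
  have := mul_nonneg (pSq_nonneg p) (h0 p)
  nlinarith

theorem ePk_le (hw : (Fin d → ℤ) → ℝ) (h0 : ∀ k, 0 ≤ hw k) (p : Fin d → ℤ) :
    ePk d hw p ≤ pSq d p + hw p := by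
  unfold ePk
  apply Real.sqrt_le_iff.2
  refine ⟨add_nonneg (pSq_nonneg p) (h0 p), ?_⟩
  nlinarith [sq_nonneg (hw p)]

theorem ePk_zero (hw : (Fin d → ℤ) → ℝ) : ePk d hw 0 = 0 := by simp [ePk, pSq_zero]

theorem cof_mul (hw : (Fin d → ℤ) → ℝ) (p : Fin d → ℤ) :
    cof d hw p * pSq d p = (ePk d hw p - pSq d p) / 2 := by
  by_cases hp : p = 0
  · subst hp
    simp [pSq_zero, ePk_zero]
  · have := pSq_ge p hp
    unfold cof
    have h : pSq d p ≠ 0 := by linarith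
    field_simp

theorem cof_nonneg (hw : (Fin d → ℤ) → ℝ) (h0 : ∀ k, 0 ≤ hw k) (p : Fin d → ℤ) :
    0 ≤ cof d hw p := by
  unfold cof
  exact div_nonneg (by linarith [ePk_ge hw h0 p]) (by linarith [pSq_nonneg p])

theorem cof_even (hw : (Fin d → ℤ) → ℝ) (he : ∀ k, hw (-k) = hw k) (p : Fin d → ℤ) :
    cof d hw (-p) = cof d hw p := by
  unfold cof ePk
  rw [pSq_neg, he]

theorem cof_rel (hw : (Fin d → ℤ) → ℝ) (h0 : ∀ k, 0 ≤ hw k) (p : Fin d → ℤ) (hp : p ≠ 0) :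
    (cof d hw p + cof d hw p ^ 2) * pSq d p = hw p / 2 := by
  have h1 := cof_mul hw p
  have h2 := pSq_ge p hp
  have h3 : ePk d hw p ^ 2 = pSq d p ^ 2 + 2 * pSq d p * hw p := by
    unfold ePk
    exact Real.sq_sqrt (by have := mul_nonneg (pSq_nonneg p) (h0 p); nlinarith)
  have h4 : ePk d hw p = 2 * (cof d hw p * pSq d p) + pSq d p := by linarith
  rw [h4] at h3
  have h : pSq d p ≠ 0 := by linarith
  apply mul_right_cancel₀ h
  linarith

theorem cof_le (hw : (Fin d → ℤ) → ℝ) (h0 : ∀ k, 0 ≤ hw k) (p : Fin d → ℤ) :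
    cof d hw p ≤ hw p := by
  by_cases hp : p = 0
  · subst hp
    simp [cof, pSq_zero, h0]
  · have h2 := pSq_ge p hp
    unfold cof
    rw [div_le_iff₀ (by linarith)]
    have := ePk_le hw h0 p
    have := mul_le_mul_of_nonneg_left h2 (h0 p)
    have := h0 p
    linarith

theorem cof_summable (hw : (Fin d → ℤ) → ℝ) (h0 : ∀ k, 0 ≤ hw k) (hs : Summable hw) :
    Summable (cof d hw) :=
  Summable.of_nonneg_of_le (cof_nonneg hw h0) (cof_le hw h0) hs

theorem cofp_nonneg (hw : (Fin d → ℤ) → ℝ) (h0 : ∀ k, 0 ≤ hw k) (p : Fin d → ℤ) :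
    0 ≤ cof d hw p * pSq d p := mul_nonneg (cof_nonneg hw h0 p) (pSq_nonneg p)

theorem cofp_summable (hw : (Fin d → ℤ) → ℝ) (h0 : ∀ k, 0 ≤ hw k) (hs : Summable hw) :
    Summable (fun p => cof d hw p * pSq d p) :=
  Summable.of_nonneg_of_le (cofp_nonneg hw h0)
    (fun p => by rw [cof_mul]; linarith [ePk_le hw h0 p, h0 p]) hs

theorem eB_eq (hw : (Fin d → ℤ) → ℝ) (h0 : ∀ k, 0 ≤ hw k) (hs : Summable hw) :
    eB d hw = ∑' p, cof d hw p * pSq d p - 1 / 2 * (∑' k, hw k - hw 0) := by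
  have h1 : HasSum (fun k : Fin d → ℤ => pSq d k + hw k - ePk d hw k)
      (∑' k, hw k - 2 * ∑' p, cof d hw p * pSq d p) := by
    have := hs.hasSum.sub ((cofp_summable hw h0 hs).hasSum.mul_left 2)
    refine this.congr_fun ?_
    intro k
    simp only [cof_mul]
    ring
  have h2 : HasSum (fun k : {k : Fin d → ℤ // k ≠ 0} => pSq d k.1 + hw k.1 - ePk d hw k.1)
      (∑' k, hw k - 2 * ∑' p, cof d hw p * pSq d p - hw 0) := by
    have h3 := (hasSum_ite_sub_hasSum h1 0)
    have h4 : Function.support (fun k : Fin d → ℤ => if k = 0 then 0 else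
        pSq d k + hw k - ePk d hw k) ⊆ {k | k ≠ 0} := by
      intro k hk
      simp only [Function.mem_support] at hk
      intro h
      simp [h] at hk
    have h5 := (hasSum_subtype_iff_of_support_subset h4).2 h3
    rw [pSq_zero, ePk_zero] at h5
    simp only [zero_add, sub_zero] at h5
    refine h5.congr_fun ?_
    intro k
    have := k.2
    simp only [Function.comp]
    rw [if_neg]
    exact this
  unfold eB
  rw [h2.tsum_eq]
  ring

/-- a symmetric finite set avoiding zero -/
theorem exists_sym (s : Finset (Fin d → ℤ)) : ∃ S₀ : Finset (Fin d → ℤ),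
    (∀ p ∈ S₀, -p ∈ S₀) ∧ (∀ p ∈ S₀, p ≠ 0) ∧ s.erase 0 ⊆ S₀ := by
  classical
  refine ⟨(s ∪ s.image (fun p => -p)).erase 0, ?_, ?_, ?_⟩
  · intro p hp
    simp only [Finset.mem_erase, Finset.mem_union, Finset.mem_image] at hp ⊢
    refine ⟨neg_ne_zero.2 hp.1, ?_⟩
    rcases hp.2 with h | ⟨q, hq, rfl⟩
    · exact Or.inr ⟨p, h, rfl⟩
    · left
      simpa using hq
  · intro p hp
    exact (Finset.mem_erase.1 hp).1
  · exact Finset.erase_subset_erase _ Finset.subset_union_left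

theorem exists_good (hw : (Fin d → ℤ) → ℝ) (h0 : ∀ k, 0 ≤ hw k) (hs : Summable hw)
    (τ : ℝ) (hτ : 0 < τ) : ∃ S₀ : Finset (Fin d → ℤ),
    (∀ p ∈ S₀, -p ∈ S₀) ∧ (∀ p ∈ S₀, p ≠ 0) ∧
    ∑' p, cof d hw p * pSq d p - τ ≤ ∑ p ∈ S₀, cof d hw p * pSq d p ∧
    ∑' k, hw k - hw 0 - τ ≤ ∑ p ∈ S₀, hw p := by
  have e1 := (cofp_summable hw h0 hs).hasSum.eventually (lt_mem_nhds (sub_lt_self _ hτ))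
  have e2 := hs.hasSum.eventually (lt_mem_nhds (sub_lt_self _ hτ))
  obtain ⟨s, h1, h2⟩ := (e1.and e2).exists
  simp only at h1 h2
  obtain ⟨S₀, hs1, hs2, hs3⟩ := exists_sym s
  refine ⟨S₀, hs1, hs2, ?_, ?_⟩
  · have h3 : ∑ p ∈ s.erase 0, cof d hw p * pSq d p ≤ ∑ p ∈ S₀, cof d hw p * pSq d p :=
      Finset.sum_le_sum_of_subset_of_nonneg hs3 fun p _ _ => cofp_nonneg hw h0 p
    have h4 : ∑ p ∈ s.erase 0, cof d hw p * pSq d p = ∑ p ∈ s, cof d hw p * pSq d p :=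
      Finset.sum_erase _ (by simp [pSq_zero])
    linarith
  · have h3 : ∑ p ∈ s.erase 0, hw p ≤ ∑ p ∈ S₀, hw p :=
      Finset.sum_le_sum_of_subset_of_nonneg hs3 fun p _ _ => h0 p
    have h4 : ∑ p ∈ s, hw p ≤ hw 0 + ∑ p ∈ s.erase 0, hw p := by
      by_cases h : (0 : Fin d → ℤ) ∈ s
      · rw [Finset.add_sum_erase _ _ h]
      · rw [Finset.erase_eq_of_notMem h]
        linarith [h0 0]
    linarith

end

/-! ### Part 7: the Jastrow trial state -/

/-- weight -/
def uu {d N : ℕ} (S : Finset (Fin d → ℤ)) (c : (Fin d → ℤ) → ℝ) (x : Fin N → Fin d → ℝ) : ℝ :=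
  Real.exp (-2 * JF S c x)

/-- normalization -/
def ZZ (d N : ℕ) (S : Finset (Fin d → ℤ)) (c : (Fin d → ℤ) → ℝ) : ℝ :=
  ∫ x in cube d N, uu S c x

/-- trial state -/
def trial (d N : ℕ) (S : Finset (Fin d → ℤ)) (c : (Fin d → ℤ) → ℝ)
    (x : Fin N → Fin d → ℝ) : ℂ :=
  ((Real.exp (-JF S c x) / Real.sqrt (ZZ d N S c) : ℝ) : ℂ)

section
variable {d N : ℕ}

theorem uu_cont (S : Finset (Fin d → ℤ)) (c : (Fin d → ℤ) → ℝ) :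
    Continuous (uu S c : (Fin N → Fin d → ℝ) → ℝ) := by
  have := JF_cont (N := N) S c
  unfold uu
  fun_prop

theorem uu_pos (S : Finset (Fin d → ℤ)) (c : (Fin d → ℤ) → ℝ) (x : Fin N → Fin d → ℝ) :
    0 < uu S c x := Real.exp_pos _

theorem uu_le (S : Finset (Fin d → ℤ)) (c : (Fin d → ℤ) → ℝ) (hc0 : ∀ p, 0 ≤ c p)
    (x : Fin N → Fin d → ℝ) : uu S c x ≤ 1 := by
  unfold uu
  apply Real.exp_le_one_iff.2
  linarith [JF_nonneg S c hc0 x]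

theorem ZZ_ge (hN : 1 ≤ N) (S : Finset (Fin d → ℤ)) (hS : ∀ p ∈ S, p ≠ 0)
    (c : (Fin d → ℤ) → ℝ) :
    Real.exp (-∑ p ∈ S, c p) ≤ ZZ d N S c := by
  have hN0 : (0:ℝ) < N := by positivity
  set m := ∑ p ∈ S, c p with hm
  have hJ := JF_cont (N := N) S c
  have hIntg : ∫ x in cube d N, 2 * JF S c x = m := by
    have e : (fun x : Fin N → Fin d → ℝ => 2 * JF S c x)
        = fun x => (1 / (N:ℝ)) * ∑ p ∈ S, c p * aa p x := by
      ext x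
      unfold JF
      field_simp
    rw [e, integral_const_mul, integral_finsetSum]
    · have : ∀ p ∈ S, ∫ x in cube d N, c p * aa p x = c p * N := by
        intro p hp
        rw [integral_const_mul, integral_aa p (hS p hp)]
      rw [Finset.sum_congr rfl this, ← Finset.sum_mul]
      field_simp
      exact hm.symm
    · intro p _
      exact int_cont (continuous_const.mul (aa_cont p))
  have h1 : ∫ x in cube d N, Real.exp (-m) * (1 + m - 2 * JF S c x) ≤ ZZ d N S c := by
    unfold ZZ
    refine integral_mono (int_cont (by fun_prop)) (int_cont (uu_cont S c)) fun x => ?_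
    simp only [uu]
    have := Real.add_one_le_exp (m - 2 * JF S c x)
    have e : Real.exp (-2 * JF S c x) = Real.exp (-m) * Real.exp (m - 2 * JF S c x) := by
      rw [← Real.exp_add]
      congr 1
      ring
    rw [e]
    exact mul_le_mul_of_nonneg_left (by linarith) (Real.exp_pos _).le
  rw [integral_const_mul, integral_sub (int_cont (by fun_prop)) (int_cont (by fun_prop)),
    hIntg] at h1
  simp at h1
  exact h1

theorem ZZ_pos (hN : 1 ≤ N) (S : Finset (Fin d → ℤ)) (hS : ∀ p ∈ S, p ≠ 0)
    (c : (Fin d → ℤ) → ℝ) : 0 < ZZ d N S c :=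
  lt_of_lt_of_le (Real.exp_pos _) (ZZ_ge hN S hS c)

theorem trial_norm (hN : 1 ≤ N) (S : Finset (Fin d → ℤ)) (hS : ∀ p ∈ S, p ≠ 0)
    (c : (Fin d → ℤ) → ℝ) (x : Fin N → Fin d → ℝ) :
    ‖trial d N S c x‖ ^ 2 = uu S c x / ZZ d N S c := by
  have hZ := ZZ_pos (N := N) hN S hS c
  unfold trial
  rw [Complex.norm_real, Real.norm_eq_abs, sq_abs, div_pow, Real.sq_sqrt hZ.le, uu,
    ← Real.exp_nat_mul]
  congr 2
  push_cast
  ring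

theorem trial_smooth (S : Finset (Fin d → ℤ)) (c : (Fin d → ℤ) → ℝ) :
    ContDiff ℝ (⊤ : ℕ∞) (trial d N S c) := by
  unfold trial
  exact Complex.ofRealCLM.contDiff.comp (((JF_contDiff S c).neg.exp).div_const _)

theorem th_upd (p : Fin d → ℤ) (x : Fin N → Fin d → ℝ) (j l : Fin N) (v : Fin d → ℤ) :
    ∃ n : ℤ, th p ((Function.update x j (x j + fun i => (v i : ℝ))) l)
      = th p (x l) + n * (2 * π) := by
  by_cases h : l = j
  · subst h
    refine ⟨∑ i, p i * v i, ?_⟩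
    rw [Function.update_self]
    unfold th
    push_cast
    rw [Finset.sum_mul, ← Finset.sum_add_distrib]
    refine Finset.sum_congr rfl fun i _ => ?_
    simp only [Pi.add_apply]
    ring
  · refine ⟨0, ?_⟩
    rw [Function.update_of_ne h]
    simp

theorem JF_per (S : Finset (Fin d → ℤ)) (c : (Fin d → ℤ) → ℝ) (x : Fin N → Fin d → ℝ)
    (j : Fin N) (v : Fin d → ℤ) :
    JF S c (Function.update x j (x j + fun i => (v i : ℝ))) = JF S c x := by
  have h1 : ∀ p l, Real.cos (th p ((Function.update x j (x j + fun i => (v i : ℝ))) l))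
      = Real.cos (th p (x l)) := by
    intro p l
    obtain ⟨n, hn⟩ := th_upd p x j l v
    rw [hn, Real.cos_add_int_mul_two_pi]
  have h2 : ∀ p l, Real.sin (th p ((Function.update x j (x j + fun i => (v i : ℝ))) l))
      = Real.sin (th p (x l)) := by
    intro p l
    obtain ⟨n, hn⟩ := th_upd p x j l v
    rw [hn, Real.sin_add_int_mul_two_pi]
  simp only [JF, aa, Cc, Ss, h1, h2]

theorem JF_perm (S : Finset (Fin d → ℤ)) (c : (Fin d → ℤ) → ℝ) (σ : Equiv.Perm (Fin N))
    (x : Fin N → Fin d → ℝ) : JF S c (x ∘ σ) = JF S c x := by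
  have h1 : ∀ p, Cc p (x ∘ σ) = Cc p x := fun p =>
    Equiv.sum_comp σ (fun j => Real.cos (th p (x j)))
  have h2 : ∀ p, Ss p (x ∘ σ) = Ss p x := fun p =>
    Equiv.sum_comp σ (fun j => Real.sin (th p (x j)))
  simp only [JF, aa, h1, h2]

theorem trial_adm (hN : 1 ≤ N) (S : Finset (Fin d → ℤ)) (hS : ∀ p ∈ S, p ≠ 0)
    (c : (Fin d → ℤ) → ℝ) : IsAdmissible d N (trial d N S c) := by
  refine ⟨trial_smooth S c, ?_, ?_, ?_⟩
  · intro x j v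
    simp only [trial, JF_per]
  · intro σ x
    simp only [trial, JF_perm]
  · simp only [trial_norm hN S hS c]
    rw [integral_div]
    exact div_self (ZZ_pos hN S hS c).ne'

theorem trial_fderiv (hN : 1 ≤ N) (S : Finset (Fin d → ℤ)) (hS : ∀ p ∈ S, p ≠ 0)
    (c : (Fin d → ℤ) → ℝ) (j : Fin N) (i : Fin d) (x : Fin N → Fin d → ℝ) :
    ‖fderiv ℝ (trial d N S c) x (Pi.single j (Pi.single i 1))‖ ^ 2
      = JG S c j i x ^ 2 * uu S c x / ZZ d N S c := by
  have hd : DifferentiableAt ℝ (trial d N S c) x :=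
    (trial_smooth S c).differentiable (by simp) x
  have h1 := hd.hasFDerivAt.hasLineDerivAt (ev j i)
  have h2 : HasDerivAt (fun t : ℝ => trial d N S c (x + t • ev j i))
      ((-(JG S c j i x) * (Real.exp (-JF S c x) / Real.sqrt (ZZ d N S c)) : ℝ) : ℂ) 0 := by
    unfold trial
    apply HasDerivAt.ofReal_comp
    refine (((JF_deriv S c j i x).fun_neg.exp).div_const _).congr_deriv ?_
    simp only [zero_smul, add_zero]
    ring
  have h3 : fderiv ℝ (trial d N S c) x (Pi.single j (Pi.single i 1))
      = ((-(JG S c j i x) * (Real.exp (-JF S c x) / Real.sqrt (ZZ d N S c)) : ℝ) : ℂ) :=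
    HasDerivAt.unique h1 h2
  have h4 := trial_norm (N := N) hN S hS c x
  unfold trial at h4
  rw [Complex.norm_real, Real.norm_eq_abs, sq_abs] at h4
  rw [h3, Complex.norm_real, Real.norm_eq_abs, sq_abs, mul_pow, h4]
  ring

theorem trial_ibp (S : Finset (Fin d → ℤ)) (c : (Fin d → ℤ) → ℝ) :
    ∫ x in cube d N, (∑ j, ∑ i, JG S c j i x ^ 2) * uu S c x
      = ∫ x in cube d N, (∑ j, ∑ i, JH S c j i x - ∑ j, ∑ i, JG S c j i x ^ 2) * uu S c x := by
  have hu := uu_cont (N := N) S c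
  have hJG := fun j i => JG_cont (N := N) S c j i
  have hJH := fun j i => JH_cont (N := N) S c j i
  have h1 : ∀ j i, ∫ x in cube d N, (JH S c j i x * uu S c x
      - 2 * JG S c j i x ^ 2 * uu S c x) = 0 := by
    intro j i
    refine integral_deriv_zero j i (fun x => JG S c j i x * uu S c x) _ (by fun_prop) ?_ ?_
    · intro x
      unfold uu
      refine ((JG_deriv S c j i x).fun_mul (((JF_deriv S c j i x).const_mul (-2)).exp)).congr_deriv ?_
      simp only [zero_smul, add_zero]
      ring
    · intro x
      simp only [uu, JF_shift, JG_shift]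
  have h2 : ∫ x in cube d N, ∑ j, ∑ i, (JH S c j i x * uu S c x
      - 2 * JG S c j i x ^ 2 * uu S c x) = 0 := by
    rw [integral_finsetSum]
    · refine Finset.sum_eq_zero fun j _ => ?_
      rw [integral_finsetSum]
      · exact Finset.sum_eq_zero fun i _ => h1 j i
      · intro i _
        exact int_cont (by fun_prop)
    · intro j _
      exact int_cont (by fun_prop)
  rw [eq_comm, ← sub_eq_zero, ← integral_sub (int_cont (by fun_prop)) (int_cont (by fun_prop)), ← h2]
  congr 1
  ext x
  simp only [Finset.sum_sub_distrib, ← Finset.sum_mul, ← Finset.mul_sum]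
  ring

theorem trial_energy (hN : 1 ≤ N) (S : Finset (Fin d → ℤ)) (hS : ∀ p ∈ S, p ≠ 0)
    (c : (Fin d → ℤ) → ℝ) (lam : ℝ) (w : (Fin d → ℝ) → ℝ)
    (hV : Continuous (VV w : (Fin N → Fin d → ℝ) → ℝ)) :
    energy d N lam w (trial d N S c) = (∫ x in cube d N, (∑ j, ∑ i, JH S c j i x
      - ∑ j, ∑ i, JG S c j i x ^ 2 + lam * VV w x) * uu S c x) / ZZ d N S c := by
  have hu := uu_cont (N := N) S c
  have hJG := fun j i => JG_cont (N := N) S c j i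
  have hJH := fun j i => JH_cont (N := N) S c j i
  rw [energy_split (trial_smooth S c) lam w hV]
  simp only [trial_fderiv hN S hS c, trial_norm hN S hS c]
  have e1 : ∀ x : Fin N → Fin d → ℝ, ∑ j, ∑ i, JG S c j i x ^ 2 * uu S c x / ZZ d N S c
      = (∑ j, ∑ i, JG S c j i x ^ 2) * uu S c x / ZZ d N S c := by
    intro x
    simp only [Finset.sum_mul, Finset.sum_div]
  have e2 : ∀ x : Fin N → Fin d → ℝ, lam * VV w x * (uu S c x / ZZ d N S c)
      = lam * VV w x * uu S c x / ZZ d N S c := fun x => by ring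
  simp only [e1, e2]
  rw [integral_div, integral_div, trial_ibp, ← add_div,
    ← integral_add (int_cont (by fun_prop)) (int_cont (by fun_prop))]
  congr 2
  ext x
  ring

end

/-! ### Part 8: the upper bound -/

section
variable {d N : ℕ}

theorem integral_VV (hw : (Fin d → ℤ) → ℝ) (h0 : ∀ k, 0 ≤ hw k) (hs : Summable hw) :
    ∫ x in cube d N, (2 * VV (wOf d hw) x + N * ∑' k, hw k)
      = N * ∑' k, hw k + ((N:ℝ) ^ 2 - N) * hw 0 := by
  have hI : ∀ k : Fin d → ℤ, ∫ x in cube d N, hw k * aa k x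
      = N * hw k + if k = 0 then ((N:ℝ) ^ 2 - N) * hw 0 else 0 := by
    intro k
    rw [integral_const_mul]
    by_cases hk : k = 0
    · subst hk
      simp only [aa_zero, if_true]
      simp
      ring
    · rw [integral_aa k hk, if_neg hk]
      ring
  have hn : ∀ k : Fin d → ℤ, ∫ x in cube d N, ‖hw k * aa k x‖
      = ∫ x in cube d N, hw k * aa k x := by
    intro k
    congr 1
    ext x
    exact Real.norm_of_nonneg (mul_nonneg (h0 k) (aa_nonneg k x))
  have hR : HasSum (fun k : Fin d → ℤ => N * hw k + if k = 0 then ((N:ℝ) ^ 2 - N) * hw 0 else 0)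
      (N * ∑' k, hw k + ((N:ℝ) ^ 2 - N) * hw 0) :=
    (hs.hasSum.mul_left (N:ℝ)).add (hasSum_ite_eq 0 _)
  have h1 := hasSum_integral_of_summable_integral_norm
    (μ := volume.restrict (cube d N)) (F := fun k x => hw k * aa k x)
    (fun k => int_cont (continuous_const.mul (aa_cont k)))
    (by simp only [hn, hI]; exact hR.summable)
  simp only [hI] at h1
  have h2 := h1.unique hR
  rw [← h2]
  congr 1
  ext x
  exact (VV_hasSum hw h0 hs x).tsum_eq.symm

theorem RR_bound (hN : 1 ≤ N) (S : Finset (Fin d → ℤ)) (c : (Fin d → ℤ) → ℝ)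
    (hc0 : ∀ p, 0 ≤ c p) (x : Fin N → Fin d → ℝ) :
    RR S c x * uu S c x ≤ ((∑ p ∈ S, c p) / N) *
      ∑ p ∈ S, ∑ q ∈ S.erase p, |pdot p q| * ‖rho (p - q) x‖ := by
  have hN0 : (0:ℝ) < N := by positivity
  set B := ∑ p ∈ S, c p with hB
  have hcB : ∀ p ∈ S, c p ≤ B := fun p hp => Finset.single_le_sum (fun q _ => hc0 q) hp
  have hB0 : 0 ≤ B := Finset.sum_nonneg fun p _ => hc0 p
  have hsum : ∑ p ∈ S, c p * aa p x = 2 * N * JF S c x := by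
    unfold JF
    field_simp
  have hca : ∀ p ∈ S, c p * aa p x ≤ 2 * N * JF S c x := by
    intro p hp
    rw [← hsum]
    exact Finset.single_le_sum (f := fun p => c p * aa p x)
      (fun q _ => mul_nonneg (hc0 q) (aa_nonneg q x)) hp
  have hFu : 2 * JF S c x * uu S c x ≤ 1 := by
    have h1 := Real.add_one_le_exp (2 * JF S c x)
    have h2 : Real.exp (2 * JF S c x) * uu S c x = 1 := by
      rw [uu, ← Real.exp_add]
      simp
    have h3 := uu_pos S c x
    have := mul_le_mul_of_nonneg_right h1 h3.le
    nlinarith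
  have key : ∀ p ∈ S, ∀ q ∈ S, c p * c q * (‖rho p x‖ * ‖rho q x‖) * uu S c x ≤ B * N := by
    intro p hp q hq
    have hp1 := rho_norm_sq p x
    have hq1 := rho_norm_sq q x
    have h1 : ‖rho p x‖ * ‖rho q x‖ ≤ (aa p x + aa q x) / 2 := by
      nlinarith [sq_nonneg (‖rho p x‖ - ‖rho q x‖)]
    have h2 : c p * c q * (‖rho p x‖ * ‖rho q x‖) ≤ c p * c q * ((aa p x + aa q x) / 2) :=
      mul_le_mul_of_nonneg_left h1 (mul_nonneg (hc0 p) (hc0 q))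
    have h3 : c q * (c p * aa p x) ≤ B * (2 * N * JF S c x) :=
      mul_le_mul (hcB q hq) (hca p hp) (mul_nonneg (hc0 p) (aa_nonneg p x)) hB0
    have h4 : c p * (c q * aa q x) ≤ B * (2 * N * JF S c x) :=
      mul_le_mul (hcB p hp) (hca q hq) (mul_nonneg (hc0 q) (aa_nonneg q x)) hB0
    have h5 : c p * c q * (‖rho p x‖ * ‖rho q x‖) ≤ B * N * (2 * JF S c x) := by nlinarith
    calc c p * c q * (‖rho p x‖ * ‖rho q x‖) * uu S c x
        ≤ B * N * (2 * JF S c x) * uu S c x :=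
          mul_le_mul_of_nonneg_right h5 (uu_pos S c x).le
      _ = B * N * (2 * JF S c x * uu S c x) := by ring
      _ ≤ B * N * 1 := mul_le_mul_of_nonneg_left hFu (by positivity)
      _ = B * N := by ring
  unfold RR
  have e : (B / N) * ∑ p ∈ S, ∑ q ∈ S.erase p, |pdot p q| * ‖rho (p - q) x‖
      = (1 / (N:ℝ) ^ 2) * ∑ p ∈ S, ∑ q ∈ S.erase p, |pdot p q| * ‖rho (p - q) x‖ * (B * N) := by
    simp only [← Finset.sum_mul]
    field_simp
  rw [e, mul_assoc]
  refine mul_le_mul_of_nonneg_left ?_ (by positivity)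
  simp only [Finset.sum_mul]
  refine Finset.sum_le_sum fun p hp => Finset.sum_le_sum fun q hq => ?_
  have := mul_le_mul_of_nonneg_left (key p hp q (Finset.mem_of_mem_erase hq))
    (mul_nonneg (abs_nonneg (pdot p q)) (norm_nonneg (rho (p - q) x)))
  linarith

theorem upper_main (hN : 1 ≤ N)
    (hw : (Fin d → ℤ) → ℝ) (h0 : ∀ k, 0 ≤ hw k) (hs : Summable hw)
    (S₀ : Finset (Fin d → ℤ)) (hsym : ∀ p ∈ S₀, -p ∈ S₀) (hS : ∀ p ∈ S₀, p ≠ 0)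
    (c : (Fin d → ℤ) → ℝ) (hc : ∀ p, c (-p) = c p)
    (hc0 : ∀ p, 0 ≤ c p) (hcw : ∀ p ∈ S₀, (c p + c p ^ 2) * pSq d p = hw p / 2)
    (lam : ℝ) (hlam : 0 < lam) :
    energy d N lam (wOf d hw) (trial d N S₀ c) ≤
      ∑ p ∈ S₀, c p * pSq d p - (N * lam) / 2 * (∑' k, hw k - hw 0)
      + lam / 2 * N * (N - 1) * hw 0
      + Real.exp (∑ p ∈ S₀, c p) * (|N * lam - 1| / 2 * ∑ p ∈ S₀, hw p
        + (∑ p ∈ S₀, c p) / N * (Real.sqrt N * ∑ p ∈ S₀, ∑ q ∈ S₀.erase p, |pdot p q|)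
        + (N * lam) / 2 * (∑' k, hw k - hw 0 - ∑ p ∈ S₀, hw p)) := by
  have hN0 : (0:ℝ) < N := by positivity
  have hVc := VV_cont (N := N) hw h0 hs
  have hu := uu_cont (N := N) S₀ c
  have hJG := fun j i => JG_cont (N := N) S₀ c j i
  have hJH := fun j i => JH_cont (N := N) S₀ c j i
  have haa := fun p : Fin d → ℤ => aa_cont (N := N) p
  have hrho := fun p : Fin d → ℤ => rho_cont (N := N) p
  have hZ := ZZ_pos hN S₀ hS c
  set W := ∑' k, hw k with hW
  set B := ∑ p ∈ S₀, c p with hB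
  have hB0 : 0 ≤ B := Finset.sum_nonneg fun p _ => hc0 p
  set D := ∑ p ∈ S₀, c p * pSq d p - (N * lam) / 2 * (W - hw 0)
      + lam / 2 * N * (N - 1) * hw 0 with hD
  set tl : (Fin N → Fin d → ℝ) → ℝ := fun x =>
    (2 * VV (wOf d hw) x + N * W) - (hw 0 * (N:ℝ) ^ 2 + ∑ p ∈ S₀, hw p * aa p x) with htl
  have htl0 : ∀ x, 0 ≤ tl x := by
    intro x
    have := VV_lower hw h0 hs S₀ (fun h => hS 0 h rfl) x
    simp only [htl]
    linarith
  have htlc : Continuous tl := by rw [htl]; fun_prop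
  set GG : (Fin N → Fin d → ℝ) → ℝ := fun x =>
    |N * lam - 1| / 2 * ∑ p ∈ S₀, hw p * (aa p x / N)
      + B / N * (∑ p ∈ S₀, ∑ q ∈ S₀.erase p, |pdot p q| * ‖rho (p - q) x‖)
      + lam / 2 * tl x with hGG
  have hGGc : Continuous GG := by rw [hGG]; fun_prop
  have hpt : ∀ x, (∑ j, ∑ i, JH S₀ c j i x - ∑ j, ∑ i, JG S₀ c j i x ^ 2
      + lam * VV (wOf d hw) x) * uu S₀ c x ≤ D * uu S₀ c x + GG x := by
    intro x
    have hg := (abs_le.1 (grad_sq_bound hN S₀ hsym c hc hc0 x)).1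
    have hR := RR_bound hN S₀ c hc0 x
    have hu0 := uu_pos S₀ c x
    have hu1 := uu_le S₀ c hc0 x
    set A := ∑ p ∈ S₀, hw p * (aa p x / N) with hA
    have hA0 : 0 ≤ A := Finset.sum_nonneg fun p _ =>
      mul_nonneg (h0 p) (div_nonneg (aa_nonneg p x) hN0.le)
    have e1 : ∑ p ∈ S₀, hw p * aa p x = N * A := by
      rw [hA, Finset.mul_sum]
      refine Finset.sum_congr rfl fun p _ => ?_
      field_simp
    have e2 : ∑ p ∈ S₀, c p * pSq d p * (1 - aa p x / N)
        - ∑ p ∈ S₀, c p ^ 2 * pSq d p * (aa p x / N)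
        = ∑ p ∈ S₀, c p * pSq d p - A / 2 := by
      rw [hA, Finset.sum_div, ← Finset.sum_sub_distrib, ← Finset.sum_sub_distrib]
      refine Finset.sum_congr rfl fun p hp => ?_
      have := hcw p hp
      have h2 : hw p = 2 * ((c p + c p ^ 2) * pSq d p) := by linarith
      rw [h2]
      ring
    have hV : lam * VV (wOf d hw) x = lam / 2 * (tl x + hw 0 * (N:ℝ) ^ 2 + N * A - N * W) := by
      simp only [htl]
      rw [e1]
      ring
    have hX : ∑ j, ∑ i, JH S₀ c j i x - ∑ j, ∑ i, JG S₀ c j i x ^ 2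
      + lam * VV (wOf d hw) x ≤ D + (N * lam - 1) / 2 * A + RR S₀ c x + lam / 2 * tl x := by
      rw [JH_sum hN, hV, hD]
      linarith
    have h1 := mul_le_mul_of_nonneg_right hX hu0.le
    have h2 : (N * lam - 1) / 2 * A * uu S₀ c x ≤ |N * lam - 1| / 2 * A := by
      have t1 : (N * lam - 1) / 2 * A ≤ |N * lam - 1| / 2 * A :=
        mul_le_mul_of_nonneg_right (by linarith [le_abs_self (N * lam - 1)]) hA0
      have t2 : 0 ≤ |N * lam - 1| / 2 * A := by positivity
      calc (N * lam - 1) / 2 * A * uu S₀ c x ≤ |N * lam - 1| / 2 * A * uu S₀ c x :=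
            mul_le_mul_of_nonneg_right t1 hu0.le
        _ ≤ |N * lam - 1| / 2 * A * 1 := mul_le_mul_of_nonneg_left hu1 t2
        _ = _ := mul_one _
    have h3 : lam / 2 * tl x * uu S₀ c x ≤ lam / 2 * tl x := by
      have t2 : 0 ≤ lam / 2 * tl x := mul_nonneg (by linarith) (htl0 x)
      nlinarith
    simp only [hGG]
    linarith
  have hIntg : ∫ x in cube d N, (∑ j, ∑ i, JH S₀ c j i x - ∑ j, ∑ i, JG S₀ c j i x ^ 2
      + lam * VV (wOf d hw) x) * uu S₀ c x ≤ D * ZZ d N S₀ c + ∫ x in cube d N, GG x := by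
    have h1 := integral_mono (μ := volume.restrict (cube d N)) (int_cont (by fun_prop))
      (int_cont (by fun_prop)) hpt
    rw [integral_add (int_cont (by fun_prop)) (int_cont hGGc), integral_const_mul] at h1
    exact h1
  have hGG0 : ∫ x in cube d N, GG x ≤ |N * lam - 1| / 2 * ∑ p ∈ S₀, hw p
        + B / N * (Real.sqrt N * ∑ p ∈ S₀, ∑ q ∈ S₀.erase p, |pdot p q|)
        + (N * lam) / 2 * (W - hw 0 - ∑ p ∈ S₀, hw p) := by
    have i1 : ∫ x in cube d N, ∑ p ∈ S₀, hw p * (aa p x / N) = ∑ p ∈ S₀, hw p := by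
      rw [integral_finsetSum]
      · refine Finset.sum_congr rfl fun p hp => ?_
        rw [integral_const_mul, integral_div, integral_aa p (hS p hp)]
        field_simp
      · intro p _
        exact int_cont (by fun_prop)
    have i1' : ∫ x in cube d N, ∑ p ∈ S₀, hw p * aa p x = N * ∑ p ∈ S₀, hw p := by
      rw [integral_finsetSum, Finset.mul_sum]
      · refine Finset.sum_congr rfl fun p hp => ?_
        rw [integral_const_mul, integral_aa p (hS p hp)]
        ring
      · intro p _
        exact int_cont (by fun_prop)
    have i2 : ∫ x in cube d N, ∑ p ∈ S₀, ∑ q ∈ S₀.erase p, |pdot p q| * ‖rho (p - q) x‖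
        ≤ Real.sqrt N * ∑ p ∈ S₀, ∑ q ∈ S₀.erase p, |pdot p q| := by
      rw [integral_finsetSum, Finset.mul_sum]
      · refine Finset.sum_le_sum fun p hp => ?_
        rw [integral_finsetSum, Finset.mul_sum]
        · refine Finset.sum_le_sum fun q hq => ?_
          rw [integral_const_mul, mul_comm]
          refine mul_le_mul_of_nonneg_right (integral_rho hN _ ?_) (abs_nonneg _)
          exact sub_ne_zero.2 (Finset.ne_of_mem_erase hq).symm
        · intro q _
          exact int_cont (by fun_prop)
      · intro p _
        exact int_cont (by fun_prop)
    have i3 : ∫ x in cube d N, tl x = N * (W - hw 0 - ∑ p ∈ S₀, hw p) := by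
      simp only [htl]
      rw [integral_sub (int_cont (by fun_prop)) (int_cont (by fun_prop)),
        integral_VV hw h0 hs, integral_add (int_cont (by fun_prop)) (int_cont (by fun_prop)), i1']
      simp
      ring
    simp only [hGG]
    rw [integral_add (int_cont (by fun_prop)) (int_cont (by fun_prop)),
      integral_add (int_cont (by fun_prop)) (int_cont (by fun_prop)),
      integral_const_mul, integral_const_mul, integral_const_mul, i1, i3]
    have := mul_le_mul_of_nonneg_left i2 (show 0 ≤ B / N by positivity)
    linarith
  set GB := |N * lam - 1| / 2 * ∑ p ∈ S₀, hw p
        + B / N * (Real.sqrt N * ∑ p ∈ S₀, ∑ q ∈ S₀.erase p, |pdot p q|)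
        + (N * lam) / 2 * (W - hw 0 - ∑ p ∈ S₀, hw p) with hGB
  have hGBnn : 0 ≤ GB := by
    refine le_trans (integral_nonneg fun x => ?_) hGG0
    have t1 : 0 ≤ ∑ p ∈ S₀, hw p * (aa p x / N) := Finset.sum_nonneg fun p _ =>
      mul_nonneg (h0 p) (div_nonneg (aa_nonneg p x) hN0.le)
    have t2 : 0 ≤ ∑ p ∈ S₀, ∑ q ∈ S₀.erase p, |pdot p q| * ‖rho (p - q) x‖ :=
      Finset.sum_nonneg fun p _ => Finset.sum_nonneg fun q _ =>
        mul_nonneg (abs_nonneg _) (norm_nonneg _)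
    have t3 := htl0 x
    simp only [hGG, Pi.zero_apply]
    positivity
  rw [trial_energy hN S₀ hS c lam _ hVc]
  have hZge := ZZ_ge (N := N) hN S₀ hS c
  rw [div_le_iff₀ hZ]
  have hone : 1 ≤ Real.exp B * ZZ d N S₀ c := by
    calc (1:ℝ) = Real.exp B * Real.exp (-B) := by rw [← Real.exp_add]; simp
      _ ≤ _ := mul_le_mul_of_nonneg_left hZge (Real.exp_pos _).le
  have hlast : GB ≤ Real.exp B * GB * ZZ d N S₀ c := by
    have := mul_le_mul_of_nonneg_left hone hGBnn
    linarith
  linarith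

end

/-! ### Part 9: the limit -/

section
variable {d : ℕ}

theorem lower_ev (hw : (Fin d → ℤ) → ℝ) (h0 : ∀ k, 0 ≤ hw k)
    (he : ∀ k, hw (-k) = hw k) (hs : Summable hw)
    (lam : ℕ → ℝ) (hlam_pos : ∀ N, 1 ≤ N → 0 < lam N)
    (hlim : Filter.Tendsto (fun N : ℕ => (N : ℝ) * lam N) Filter.atTop (nhds 1))
    (τ : ℝ) (hτ : 0 < τ) :
    ∀ᶠ N : ℕ in Filter.atTop, ∀ Ψ, IsAdmissible d N Ψ →
      eB d hw - τ + lam N / 2 * (N : ℝ) * ((N : ℝ) - 1) * hw 0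
        ≤ energy d N (lam N) (wOf d hw) Ψ := by
  classical
  obtain ⟨S₀, hsym, hne, hP, -⟩ := exists_good hw h0 hs (τ / 4) (by positivity)
  set c := cof d hw with hcdef
  have hc0 : ∀ p, 0 ≤ c p := cof_nonneg hw h0
  set S : Finset (Fin d → ℤ) :=
    (S₀ ∪ (S₀ ×ˢ S₀).image (fun z => z.1 - z.2)).erase 0 with hSdef
  have hsub : S₀ ⊆ S := by
    intro p hp
    exact Finset.mem_erase.2 ⟨hne p hp, Finset.mem_union_left _ hp⟩
  have hdiff : ∀ p ∈ S₀, ∀ q ∈ S₀, p ≠ q → p - q ∈ S := by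
    intro p hp q hq hpq
    refine Finset.mem_erase.2 ⟨sub_ne_zero.2 hpq, Finset.mem_union_right _ ?_⟩
    exact Finset.mem_image.2 ⟨(p, q), Finset.mem_product.2 ⟨hp, hq⟩, rfl⟩
  have hS : ∀ p ∈ S, p ≠ 0 := fun p hp => (Finset.mem_erase.1 hp).1
  set P := ∑' p, c p * pSq d p with hPdef
  have hP0 : 0 ≤ P := tsum_nonneg (cofp_nonneg hw h0)
  set P₀ := ∑ p ∈ S₀, c p * pSq d p with hP₀
  have hP₀le : P₀ ≤ P :=
    (cofp_summable hw h0 hs).sum_le_tsum S₀ (fun p _ => cofp_nonneg hw h0 p)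
  set Q := ∑ p ∈ S, pSq d p with hQ
  have hQ0 : 0 ≤ Q := Finset.sum_nonneg fun p _ => pSq_nonneg p
  set δ : ℝ := 1 / (2 * S.card + 2) with hδdef
  have hδ : 0 < δ := by positivity
  have hδS : δ * S.card ≤ 1 / 2 := by
    rw [hδdef, div_mul_eq_mul_div, div_le_div_iff₀ (by positivity) (by norm_num)]
    linarith
  have hδ1 : δ ≤ 1 := by
    rw [hδdef, div_le_one (by positivity)]
    have : (0:ℝ) ≤ S.card := by positivity
    linarith
  set ε : ℝ := min 1 (τ / (4 * (P + Q + 1))) with hεdef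
  have hε : 0 < ε := by
    rw [hεdef]
    exact lt_min one_pos (by positivity)
  have hε1 : ε ≤ 1 := min_le_left _ _
  have hεb : ε * (P + Q) ≤ τ / 4 := by
    have h1 : ε ≤ τ / (4 * (P + Q + 1)) := min_le_right _ _
    rw [le_div_iff₀ (by positivity)] at h1
    nlinarith
  set M := ∑ p ∈ S₀, ∑ q ∈ S₀.erase p, c q * |pdot p q| with hM
  have hM0 : 0 ≤ M := Finset.sum_nonneg fun p _ => Finset.sum_nonneg fun q _ =>
    mul_nonneg (hc0 q) (abs_nonneg _)
  set B := ∑ p ∈ S₀, c p with hB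
  have hB0 : 0 ≤ B := Finset.sum_nonneg fun p _ => hc0 p
  set η : ℝ := ε * δ / (2 * (M + 1)) with hηdef
  have hη : 0 < η := by positivity
  have hηM : η * M ≤ ε * δ / 2 := by
    rw [hηdef, div_mul_eq_mul_div, div_le_div_iff₀ (by positivity) (by norm_num)]
    have : 0 < ε * δ := by positivity
    nlinarith
  set K : ℝ := (B + 1) / (4 * η ^ 2) with hKdef
  have hK : 0 < K := by positivity
  have hcK : ∀ p ∈ S₀, c p ≤ 4 * η ^ 2 * K := by
    intro p hp
    have h1 : 4 * η ^ 2 * K = B + 1 := by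
      rw [hKdef]
      field_simp
    have h2 : c p ≤ B := Finset.single_le_sum (fun q _ => hc0 q) hp
    linarith
  set X := B * P₀ + 2 * (∑ p ∈ S₀, c p ^ 2 * pSq d p) + 2 * (η * M) with hX
  have t1 : ∀ᶠ N : ℕ in Filter.atTop, K / N * X < ε * δ / 2 := by
    have : Filter.Tendsto (fun N : ℕ => K / (N:ℝ) * X) Filter.atTop (nhds (0 * X)) :=
      (tendsto_const_div_atTop_nhds_zero_nat K).mul_const X
    rw [zero_mul] at this
    exact this.eventually (gt_mem_nhds (by positivity))
  have t2 : ∀ᶠ N : ℕ in Filter.atTop, 1 - ε < N * lam N :=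
    hlim.eventually (lt_mem_nhds (by linarith))
  set W := ∑' k, hw k with hW
  have t3 : ∀ᶠ N : ℕ in Filter.atTop, (N * lam N) / 2 * (W - hw 0) < 1 / 2 * (W - hw 0) + τ / 4 := by
    have : Filter.Tendsto (fun N : ℕ => (N * lam N) / 2 * (W - hw 0)) Filter.atTop
        (nhds (1 / 2 * (W - hw 0))) := (hlim.div_const 2).mul_const _
    exact this.eventually (gt_mem_nhds (by linarith))
  filter_upwards [t1, t2, t3, Filter.eventually_ge_atTop 1] with N h1 h2 h3 hN Ψ hΨ
  have hmain := lower_main hΨ hN hw h0 hs S₀ S hsym hsub hdiff hS c (cof_even hw he) hc0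
    (fun p hp => cof_rel hw h0 p (hne p hp)) K η δ ε (lam N) hK hη hcK hδ hδS hε.le hε1
    (hlam_pos N hN) h2.le (by linarith)
  rw [eB_eq hw h0 hs]
  refine le_trans ?_ hmain
  have hq : ε * δ * Q ≤ ε * Q := by
    have : ε * δ ≤ ε * 1 := mul_le_mul_of_nonneg_left hδ1 hε.le
    nlinarith
  have hp : ε * P₀ ≤ ε * P := mul_le_mul_of_nonneg_left hP₀le hε.le
  linarith

theorem upper_ev (hw : (Fin d → ℤ) → ℝ) (h0 : ∀ k, 0 ≤ hw k)
    (he : ∀ k, hw (-k) = hw k) (hs : Summable hw)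
    (lam : ℕ → ℝ) (hlam_pos : ∀ N, 1 ≤ N → 0 < lam N)
    (hlim : Filter.Tendsto (fun N : ℕ => (N : ℝ) * lam N) Filter.atTop (nhds 1))
    (τ : ℝ) (hτ : 0 < τ) :
    ∀ᶠ N : ℕ in Filter.atTop, ∃ Ψ, IsAdmissible d N Ψ ∧
      energy d N (lam N) (wOf d hw) Ψ
        ≤ eB d hw + τ + lam N / 2 * (N : ℝ) * ((N : ℝ) - 1) * hw 0 := by
  classical
  set c := cof d hw with hcdef
  have hc0 : ∀ p, 0 ≤ c p := cof_nonneg hw h0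
  set C := ∑' p, c p with hC
  obtain ⟨S₀, hsym, hne, -, hT⟩ := exists_good hw h0 hs (τ / Real.exp C) (by positivity)
  set B := ∑ p ∈ S₀, c p with hB
  have hBC : B ≤ C := (cof_summable hw h0 hs).sum_le_tsum S₀ (fun p _ => hc0 p)
  set P₀ := ∑ p ∈ S₀, c p * pSq d p with hP₀
  have hP₀le : P₀ ≤ ∑' p, c p * pSq d p :=
    (cofp_summable hw h0 hs).sum_le_tsum S₀ (fun p _ => cofp_nonneg hw h0 p)
  set W := ∑' k, hw k with hW
  set Sw := ∑ p ∈ S₀, hw p with hSw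
  have hSwle : Sw ≤ W - hw 0 := by
    have := hs.sum_le_tsum (insert 0 S₀) (fun p _ => h0 p)
    rw [Finset.sum_insert (fun h => hne 0 h rfl)] at this
    linarith
  set M := ∑ p ∈ S₀, ∑ q ∈ S₀.erase p, |pdot p q| with hM
  have hfin : Real.exp B * (W - hw 0 - Sw) ≤ τ := by
    have h1 : W - hw 0 - Sw ≤ τ / Real.exp C := by linarith
    calc Real.exp B * (W - hw 0 - Sw) ≤ Real.exp C * (τ / Real.exp C) :=
          mul_le_mul (Real.exp_le_exp.2 hBC) h1 (by linarith) (Real.exp_pos _).le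
      _ = τ := by field_simp
  have l1 : Filter.Tendsto (fun N : ℕ => |(N:ℝ) * lam N - 1| / 2 * Sw) Filter.atTop
      (nhds 0) := by
    have := (((hlim.sub_const 1).abs).div_const 2).mul_const Sw
    simpa using this
  have l2 : Filter.Tendsto (fun N : ℕ => B / (N:ℝ) * (Real.sqrt N * M)) Filter.atTop
      (nhds 0) := by
    have h1 : Filter.Tendsto (fun N : ℕ => (Real.sqrt (N:ℝ))⁻¹) Filter.atTop (nhds 0) :=
      (Real.tendsto_sqrt_atTop.comp tendsto_natCast_atTop_atTop).inv_tendsto_atTop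
    have h2 := h1.const_mul (B * M)
    rw [mul_zero] at h2
    refine h2.congr fun N => ?_
    have := Real.sqrt_div_self (x := (N:ℝ))
    rw [← this]
    ring
  have l3 : Filter.Tendsto (fun N : ℕ => ((N:ℝ) * lam N) / 2 * (W - hw 0 - Sw)) Filter.atTop
      (nhds (1 / 2 * (W - hw 0 - Sw))) := (hlim.div_const 2).mul_const _
  have l4 : Filter.Tendsto (fun N : ℕ => P₀ - ((N:ℝ) * lam N) / 2 * (W - hw 0)
      + Real.exp B * (|(N:ℝ) * lam N - 1| / 2 * Sw + B / (N:ℝ) * (Real.sqrt N * M)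
        + ((N:ℝ) * lam N) / 2 * (W - hw 0 - Sw))) Filter.atTop
      (nhds (P₀ - 1 / 2 * (W - hw 0) + Real.exp B * (0 + 0 + 1 / 2 * (W - hw 0 - Sw)))) :=
    (tendsto_const_nhds.sub ((hlim.div_const 2).mul_const _)).add
      (((l1.add l2).add l3).const_mul _)
  have hlt : P₀ - 1 / 2 * (W - hw 0) + Real.exp B * (0 + 0 + 1 / 2 * (W - hw 0 - Sw))
      < eB d hw + τ := by
    rw [eB_eq hw h0 hs]
    linarith
  filter_upwards [l4.eventually (gt_mem_nhds hlt), Filter.eventually_ge_atTop 1] with N h1 hN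
  refine ⟨trial d N S₀ c, trial_adm hN S₀ hne c, ?_⟩
  have := upper_main hN hw h0 hs S₀ hsym hne c (cof_even hw he) hc0
    (fun p hp => cof_rel hw h0 p (hne p hp)) (lam N) (hlam_pos N hN)
  linarith

end
/-- **Ground state energy expansion.** If `N·λ_N → 1`, then
`E(λ_N,N) - (λ_N/2) N (N-1) ŵ(0)` converges to the Bogoliubov energy `e_B`. -/
theorem ground_state_energy_expansion (d : ℕ) (hd : 1 ≤ d)
    (hw : (Fin d → ℤ) → ℝ) (hw_nonneg : ∀ k, 0 ≤ hw k)
    (hw_even : ∀ k, hw (-k) = hw k) (hw_summable : Summable hw)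
    (lam : ℕ → ℝ) (hlam_pos : ∀ N, 1 ≤ N → 0 < lam N)
    (hlam_lim : Filter.Tendsto (fun N : ℕ => (N : ℝ) * lam N) Filter.atTop (nhds 1)) :
    Filter.Tendsto
      (fun N : ℕ =>
        GSE d N (lam N) (wOf d hw) - lam N / 2 * (N : ℝ) * ((N : ℝ) - 1) * hw 0)
      Filter.atTop (nhds (eB d hw)) := by
  refine tendsto_order.2 ⟨fun a ha => ?_, fun a ha => ?_⟩
  · have hτ : 0 < (eB d hw - a) / 2 := by linarith
    filter_upwards [lower_ev hw hw_nonneg hw_even hw_summable lam hlam_pos hlam_lim _ hτ,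
      Filter.eventually_ge_atTop 1] with N h1 hN
    have h2 : eB d hw - (eB d hw - a) / 2 + lam N / 2 * (N : ℝ) * ((N : ℝ) - 1) * hw 0
        ≤ GSE d N (lam N) (wOf d hw) := by
      refine le_csInf ⟨_, trial d N ∅ (fun _ => 0), trial_adm hN ∅ (by simp) _, rfl⟩ ?_
      rintro e ⟨Ψ, hΨ, rfl⟩
      exact h1 Ψ hΨ
    linarith
  · have hτ : 0 < (a - eB d hw) / 2 := by linarith
    filter_upwards [lower_ev hw hw_nonneg hw_even hw_summable lam hlam_pos hlam_lim _ hτ,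
      upper_ev hw hw_nonneg hw_even hw_summable lam hlam_pos hlam_lim _ hτ] with N h1 h3
    obtain ⟨Ψ, hΨ, h4⟩ := h3
    have h2 : GSE d N (lam N) (wOf d hw) ≤ energy d N (lam N) (wOf d hw) Ψ := by
      refine csInf_le ⟨eB d hw - (a - eB d hw) / 2
        + lam N / 2 * (N : ℝ) * ((N : ℝ) - 1) * hw 0, ?_⟩ ⟨Ψ, hΨ, rfl⟩
      rintro e ⟨Φ, hΦ, rfl⟩
      exact h1 Φ hΦ
    linarith
end
end

section
/- Let (λ_N)_{N≥2} be any sequence of positive reals with N·λ_N → 1 as N → ∞. Then E(λ_N, N) − E(λ_N, N−1) − λ_N (N−1) ŵ(0) → 0 as N → ∞. -/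
open MeasureTheory Real

noncomputable section

/-! ### Facts about the interaction potential -/

lemma wOf_eq (d : ℕ) (hw : (Fin d → ℤ) → ℝ) (hw_nonneg : ∀ k, 0 ≤ hw k)
    (hs : Summable hw) (x : Fin d → ℝ) :
    HasSum (fun k => hw k * Real.cos (∑ i, (2 * π * (k i : ℝ)) * x i)) (wOf d hw x) := by
  have h1 : Summable (fun k : Fin d → ℤ => (hw k : ℂ) *
      Complex.exp (Complex.I * ((∑ i, (2 * π * (k i : ℝ)) * x i : ℝ) : ℂ))) := by
    refine Summable.of_norm_bounded hs (fun k => ?_)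
    rw [norm_mul, mul_comm Complex.I, Complex.norm_exp_ofReal_mul_I, Complex.norm_real,
      Real.norm_of_nonneg (hw_nonneg k), mul_one]
  have h2 := Complex.hasSum_re h1.hasSum
  have h3 : ∀ k : Fin d → ℤ, ((hw k : ℂ) *
      Complex.exp (Complex.I * ((∑ i, (2 * π * (k i : ℝ)) * x i : ℝ) : ℂ))).re
      = hw k * Real.cos (∑ i, (2 * π * (k i : ℝ)) * x i) := by
    intro k
    rw [mul_comm Complex.I, Complex.re_ofReal_mul, Complex.exp_ofReal_mul_I_re]
  simp_rw [h3] at h2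
  exact h2

lemma wOf_zero (d : ℕ) (hw : (Fin d → ℤ) → ℝ) (hw_nonneg : ∀ k, 0 ≤ hw k)
    (hs : Summable hw) : wOf d hw 0 = ∑' k, hw k := by
  have := (wOf_eq d hw hw_nonneg hs 0).tsum_eq
  simpa using this.symm

lemma wOf_even (d : ℕ) (hw : (Fin d → ℤ) → ℝ) (hw_nonneg : ∀ k, 0 ≤ hw k)
    (hs : Summable hw) (x : Fin d → ℝ) : wOf d hw (-x) = wOf d hw x := by
  refine (wOf_eq d hw hw_nonneg hs (-x)).unique ?_
  convert! wOf_eq d hw hw_nonneg hs x using 3 with k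
  rw [← Real.cos_neg]
  congr 1
  simp

lemma wOf_continuous (d : ℕ) (hw : (Fin d → ℤ) → ℝ) (hw_nonneg : ∀ k, 0 ≤ hw k)
    (hs : Summable hw) : Continuous (wOf d hw) := by
  have : wOf d hw = fun x => ∑' k, hw k * Real.cos (∑ i, (2 * π * (k i : ℝ)) * x i) := by
    funext x
    exact (wOf_eq d hw hw_nonneg hs x).tsum_eq.symm
  rw [this]
  refine continuous_tsum (fun k => by fun_prop) hs (fun k x => ?_)
  rw [norm_mul, Real.norm_of_nonneg (hw_nonneg k), Real.norm_eq_abs]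
  exact mul_le_of_le_one_right (hw_nonneg k) (Real.abs_cos_le_one _)

/-- Positivity of the Fourier coefficients bounds the full double sum from below. -/
lemma wOf_sum_ge (d n : ℕ) (hw : (Fin d → ℤ) → ℝ) (hw_nonneg : ∀ k, 0 ≤ hw k)
    (hs : Summable hw) (x : Fin n → Fin d → ℝ) :
    (n : ℝ) ^ 2 * hw 0 ≤ ∑ j, ∑ k, wOf d hw (x j - x k) := by
  have h := hasSum_sum (s := Finset.univ) (fun j _ =>
    hasSum_sum (s := Finset.univ) (fun k _ => wOf_eq d hw hw_nonneg hs (x j - x k)))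
  have hterm : ∀ p : Fin d → ℤ,
      (∑ j : Fin n, ∑ k : Fin n, hw p * Real.cos (∑ i, (2 * π * (p i : ℝ)) * (x j - x k) i))
      = hw p * ((∑ j, Real.cos (∑ i, (2 * π * (p i : ℝ)) * x j i)) ^ 2
        + (∑ j, Real.sin (∑ i, (2 * π * (p i : ℝ)) * x j i)) ^ 2) := by
    intro p
    rw [sq, sq, Finset.sum_mul_sum, Finset.sum_mul_sum, ← Finset.sum_add_distrib, Finset.mul_sum]
    refine Finset.sum_congr rfl fun j _ => ?_
    rw [← Finset.sum_add_distrib, Finset.mul_sum]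
    refine Finset.sum_congr rfl fun k _ => ?_
    rw [← Real.cos_sub, ← Finset.sum_sub_distrib]
    simp [mul_sub]
  have h0 := le_hasSum h 0 (fun p _ => by
    rw [hterm p]
    exact mul_nonneg (hw_nonneg p) (by positivity))
  refine le_trans (le_of_eq ?_) h0
  rw [hterm 0]
  simp
  ring

lemma isCompact_cube (d n : ℕ) : IsCompact (cube d n) :=
  isCompact_univ_pi fun _ => isCompact_univ_pi fun _ => isCompact_Icc

lemma isCompact_cube1 (d : ℕ) : IsCompact (cube1 d) :=
  isCompact_univ_pi fun _ => isCompact_Icc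

lemma volume_cube1 (d : ℕ) : volume (cube1 d) = 1 := by
  rw [cube1, volume_pi, Measure.pi_pi]
  simp

lemma volume_cube (d n : ℕ) : volume (cube d n) = 1 := by
  have h := volume_cube1 d
  rw [cube1] at h
  rw [cube, volume_pi, Measure.pi_pi]
  simp only [h, Finset.prod_const_one]

lemma integral_exp_cube1 (d : ℕ) (k : Fin d → ℤ) (hk : k ≠ 0) :
    ∫ y in cube1 d, Complex.exp (Complex.I * ((∑ i, (2 * π * (k i : ℝ)) * y i : ℝ) : ℂ)) = 0 := by
  have h1 : ∀ y : Fin d → ℝ,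
      Complex.exp (Complex.I * ((∑ i, (2 * π * (k i : ℝ)) * y i : ℝ) : ℂ))
      = ∏ i, Complex.exp ((2 * π * (k i : ℂ) * Complex.I) * (y i : ℂ)) := by
    intro y
    rw [← Complex.exp_sum]
    congr 1
    push_cast
    rw [Finset.mul_sum]
    refine Finset.sum_congr rfl fun i _ => ?_
    ring
  simp_rw [h1]
  rw [cube1, volume_pi, Measure.restrict_pi_pi]
  rw [integral_fintype_prod_eq_prod
    (fun i (t : ℝ) => Complex.exp ((2 * π * (k i : ℂ) * Complex.I) * (t : ℂ)))]
  obtain ⟨i, hi⟩ : ∃ i, k i ≠ 0 := by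
    by_contra! h
    exact hk (funext h)
  refine Finset.prod_eq_zero (Finset.mem_univ i) ?_
  rw [integral_Icc_eq_integral_Ioc, ← intervalIntegral.integral_of_le zero_le_one,
    integral_exp_mul_complex]
  · have : Complex.exp (2 * π * (k i : ℂ) * Complex.I * ((1 : ℝ) : ℂ)) = 1 := by
      rw [← Complex.exp_int_mul_two_pi_mul_I (k i)]
      congr 1
      push_cast
      ring
    rw [this]
    simp
  · have : (k i : ℂ) ≠ 0 := by exact_mod_cast hi
    simp [this, Real.pi_ne_zero]

lemma integral_cos_cube1 (d : ℕ) (k : Fin d → ℤ) (hk : k ≠ 0) (c : Fin d → ℝ) :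
    ∫ y in cube1 d, Real.cos (∑ i, (2 * π * (k i : ℝ)) * (y - c) i) = 0 := by
  have h1 : ∀ y : Fin d → ℝ, Real.cos (∑ i, (2 * π * (k i : ℝ)) * (y - c) i)
      = RCLike.re (Complex.exp (Complex.I * ((∑ i, (2 * π * (k i : ℝ)) * y i : ℝ) : ℂ)) *
        Complex.exp (-(Complex.I * ((∑ i, (2 * π * (k i : ℝ)) * c i : ℝ) : ℂ)))) := by
    intro y
    rw [← Complex.exp_add, ← sub_eq_add_neg, ← mul_sub, ← Complex.ofReal_sub,
      ← Finset.sum_sub_distrib, mul_comm Complex.I, RCLike.re_to_complex,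
      Complex.exp_ofReal_mul_I_re]
    simp only [← mul_sub]
    rfl
  simp_rw [h1]
  rw [integral_re, integral_mul_const, integral_exp_cube1 d k hk]
  · simp
  · exact ContinuousOn.integrableOn_compact (isCompact_cube1 d) (by fun_prop)

lemma integral_wOf (d : ℕ) (hw : (Fin d → ℤ) → ℝ) (hw_nonneg : ∀ k, 0 ≤ hw k)
    (hs : Summable hw) (c : Fin d → ℝ) :
    ∫ y in cube1 d, wOf d hw (y - c) = hw 0 := by
  have : IsFiniteMeasure (volume.restrict (cube1 d)) :=
    ⟨by simp [volume_cube1]⟩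
  have hwInt : ∀ k : Fin d → ℤ, Integrable
      (fun y : Fin d → ℝ => hw k * Real.cos (∑ i, (2 * π * (k i : ℝ)) * (y - c) i))
      (volume.restrict (cube1 d)) := fun k =>
    ContinuousOn.integrableOn_compact (isCompact_cube1 d) (by
      apply Continuous.continuousOn
      simp only [Pi.sub_apply]
      fun_prop)
  have h := hasSum_integral_of_summable_integral_norm
    (F := fun k (y : Fin d → ℝ) => hw k * Real.cos (∑ i, (2 * π * (k i : ℝ)) * (y - c) i))
    hwInt (by
      refine Summable.of_nonneg_of_le (fun k => integral_nonneg fun y => norm_nonneg _)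
        (fun k => ?_) hs
      calc _ ≤ ∫ y in cube1 d, hw k := by
            refine integral_mono (hwInt k).norm (integrable_const _) fun y => ?_
            simp only
            rw [norm_mul, Real.norm_of_nonneg (hw_nonneg k), Real.norm_eq_abs]
            exact mul_le_of_le_one_right (hw_nonneg k) (Real.abs_cos_le_one _)
        _ = hw k := by simp [measureReal_def, volume_cube1])
  have h2 : ∀ y : Fin d → ℝ, ∑' k, hw k * Real.cos (∑ i, (2 * π * (k i : ℝ)) * (y - c) i)
      = wOf d hw (y - c) := fun y => (wOf_eq d hw hw_nonneg hs (y - c)).tsum_eq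
  simp_rw [h2] at h
  refine h.unique ?_
  have h3 := hasSum_single (f := fun k : Fin d → ℤ => ∫ a in cube1 d,
    hw k * Real.cos (∑ i, (2 * π * (k i : ℝ)) * (a - c) i)) (0 : Fin d → ℤ) ?_
  · have h4 : (∫ a in cube1 d, hw 0 *
        Real.cos (∑ i, (2 * π * (((0 : Fin d → ℤ) i : ℤ) : ℝ)) * (a - c) i)) = hw 0 := by
      simp [measureReal_def, volume_cube1]
    rw [h4] at h3
    exact h3
  · intro k hk
    rw [integral_const_mul, integral_cos_cube1 d k hk, mul_zero]

/-! ### Integration over cubes -/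

lemma Continuous.intCube {d n : ℕ} {f : (Fin n → Fin d → ℝ) → ℝ} (hf : Continuous f) :
    IntegrableOn f (cube d n) :=
  hf.continuousOn.integrableOn_compact (isCompact_cube d n)

lemma integral_cube_perm (d n : ℕ) (σ : Equiv.Perm (Fin n)) (F : (Fin n → Fin d → ℝ) → ℝ) :
    ∫ x in cube d n, F (x ∘ σ) = ∫ x in cube d n, F x := by
  have hp := volume_preserving_arrowCongr' (β₁ := Fin d → ℝ) σ.symm
    (MeasurableEquiv.refl (Fin d → ℝ)) (MeasurePreserving.id volume)
  have := hp.setIntegral_preimage_emb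
    (MeasurableEquiv.measurableEmbedding _) F (cube d n)
  rw [← this]
  have e : ∀ x : Fin n → Fin d → ℝ, MeasurableEquiv.arrowCongr' σ.symm
    (MeasurableEquiv.refl (Fin d → ℝ)) x = x ∘ σ := fun x => rfl
  simp_rw [e]
  congr 2
  ext x
  simp only [cube, Set.mem_preimage, Set.mem_univ_pi, e, Function.comp]
  refine ⟨fun h a => h (σ a), fun h a => ?_⟩
  have := h (σ.symm a)
  rwa [Equiv.apply_symm_apply] at this

lemma integral_cube_succ (d n : ℕ) (F : (Fin (n + 1) → Fin d → ℝ) → ℝ) (hF : Continuous F) :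
    ∫ x in cube d (n + 1), F x =
      ∫ y in cube1 d, ∫ x in cube d n, F (Fin.cons y x) := by
  have hp := (volume_preserving_piFinSuccAbove (fun _ : Fin (n + 1) => Fin d → ℝ) 0).symm
  have := hp.setIntegral_preimage_emb
    (MeasurableEquiv.measurableEmbedding _) F (cube d (n + 1))
  rw [← this]
  have e : ∀ z : (Fin d → ℝ) × (Fin n → Fin d → ℝ),
      (MeasurableEquiv.piFinSuccAbove (fun _ : Fin (n + 1) => Fin d → ℝ) 0).symm z
        = Fin.cons z.1 z.2 := fun z => by
    simp [MeasurableEquiv.piFinSuccAbove, Fin.insertNthEquiv]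
  have hpre : (MeasurableEquiv.piFinSuccAbove (fun _ : Fin (n + 1) => Fin d → ℝ) 0).symm ⁻¹'
      (cube d (n + 1)) = cube1 d ×ˢ cube d n := by
    ext z
    simp only [Set.mem_preimage, e, cube, cube1, Set.mem_univ_pi, Fin.forall_fin_succ,
      Set.mem_prod, Fin.cons_zero, Fin.cons_succ]
  rw [hpre]
  simp_rw [e]
  rw [Measure.volume_eq_prod, setIntegral_prod]
  refine ContinuousOn.integrableOn_compact ((isCompact_cube1 d).prod (isCompact_cube d n)) ?_
  refine Continuous.continuousOn (hF.comp ?_)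
  exact Continuous.finCons continuous_fst continuous_snd

/-! ### Potential and kinetic energy densities -/

/-- The total pair potential. -/
def Vpot (d n : ℕ) (w : (Fin d → ℝ) → ℝ) (x : Fin n → Fin d → ℝ) : ℝ :=
  ∑ j : Fin n, ∑ k : Fin n, if j < k then w (x j - x k) else 0

/-- The kinetic energy density. -/
def Kin (d n : ℕ) (Ψ : (Fin n → Fin d → ℝ) → ℂ) (x : Fin n → Fin d → ℝ) : ℝ :=
  ∑ j : Fin n, ∑ i : Fin d, ‖fderiv ℝ Ψ x (Pi.single j (Pi.single i 1))‖ ^ 2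

lemma energy_eq (d n : ℕ) (lam : ℝ) (w : (Fin d → ℝ) → ℝ) (Ψ : (Fin n → Fin d → ℝ) → ℂ) :
    energy d n lam w Ψ = ∫ x in cube d n, (Kin d n Ψ x + lam * Vpot d n w x * ‖Ψ x‖ ^ 2) := rfl

lemma Vpot_two (d n : ℕ) (w : (Fin d → ℝ) → ℝ) (he : ∀ x, w (-x) = w x)
    (x : Fin n → Fin d → ℝ) :
    2 * Vpot d n w x = (∑ j, ∑ k, w (x j - x k)) - n * w 0 := by
  have h1 : (∑ j, ∑ k, w (x j - x k)) = Vpot d n w x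
      + (∑ j : Fin n, ∑ k : Fin n, if k < j then w (x j - x k) else 0)
      + (∑ j : Fin n, ∑ k : Fin n, if k = j then w (x j - x k) else 0) := by
    simp only [Vpot, ← Finset.sum_add_distrib]
    refine Finset.sum_congr rfl fun j _ => Finset.sum_congr rfl fun k _ => ?_
    rcases lt_trichotomy j k with h | h | h
    · simp [h, h.not_gt, h.ne']
    · simp [h]
    · simp [h, h.not_gt, h.ne]
  have h2 : (∑ j : Fin n, ∑ k : Fin n, if k < j then w (x j - x k) else 0) = Vpot d n w x := by
    rw [Finset.sum_comm, Vpot]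
    refine Finset.sum_congr rfl fun j _ => Finset.sum_congr rfl fun k _ => ?_
    rw [← he, neg_sub]
  have h3 : (∑ j : Fin n, ∑ k : Fin n, if k = j then w (x j - x k) else 0) = n * w 0 := by
    simp
  rw [h1, h2, h3]
  ring

lemma Vpot_perm (d n : ℕ) (w : (Fin d → ℝ) → ℝ) (he : ∀ x, w (-x) = w x)
    (σ : Equiv.Perm (Fin n)) (x : Fin n → Fin d → ℝ) :
    Vpot d n w (x ∘ σ) = Vpot d n w x := by
  have h1 := Vpot_two d n w he x
  have h2 := Vpot_two d n w he (x ∘ σ)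
  have h3 : (∑ j, ∑ k, w ((x ∘ σ) j - (x ∘ σ) k)) = ∑ j, ∑ k, w (x j - x k) := by
    simp only [Function.comp]
    rw [Equiv.sum_comp σ (fun j => ∑ k, w (x j - x (σ k)))]
    exact Finset.sum_congr rfl fun j _ => Equiv.sum_comp σ (fun k => w (x j - x k))
  linarith

lemma Vpot_succ (d n : ℕ) (w : (Fin d → ℝ) → ℝ) (y : Fin d → ℝ) (x : Fin n → Fin d → ℝ) :
    Vpot d (n + 1) w (Fin.cons y x) = Vpot d n w x + ∑ j, w (y - x j) := by
  simp [Vpot, Fin.sum_univ_succ, add_comm]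

lemma Vpot_continuous (d n : ℕ) (w : (Fin d → ℝ) → ℝ) (hc : Continuous w) :
    Continuous (Vpot d n w) := by
  unfold Vpot
  refine continuous_finsetSum _ fun j _ => continuous_finsetSum _ fun k _ => ?_
  split_ifs
  · exact hc.comp (by fun_prop)
  · exact continuous_const

lemma Kin_nonneg (d n : ℕ) (Ψ : (Fin n → Fin d → ℝ) → ℂ) (x : Fin n → Fin d → ℝ) :
    0 ≤ Kin d n Ψ x := by
  unfold Kin
  positivity

lemma Kin_continuous (d n : ℕ) (Ψ : (Fin n → Fin d → ℝ) → ℂ) (h : ContDiff ℝ (⊤ : ℕ∞) Ψ) :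
    Continuous (Kin d n Ψ) := by
  have := h.continuous_fderiv (by simp)
  unfold Kin
  fun_prop

/-- Admissibility without normalization. -/
def IsPre (d N : ℕ) (Ψ : (Fin N → Fin d → ℝ) → ℂ) : Prop :=
  ContDiff ℝ (⊤ : ℕ∞) Ψ ∧
  (∀ (x : Fin N → Fin d → ℝ) (j : Fin N) (v : Fin d → ℤ),
      Ψ (Function.update x j (x j + fun i => (v i : ℝ))) = Ψ x) ∧
  (∀ (σ : Equiv.Perm (Fin N)) (x : Fin N → Fin d → ℝ), Ψ (x ∘ σ) = Ψ x)

lemma energy_integrable (d n : ℕ) (lam : ℝ) (w : (Fin d → ℝ) → ℝ) (hc : Continuous w)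
    (Ψ : (Fin n → Fin d → ℝ) → ℂ) (h : ContDiff ℝ (⊤ : ℕ∞) Ψ) :
    Continuous (fun x => Kin d n Ψ x + lam * Vpot d n w x * ‖Ψ x‖ ^ 2) := by
  have h1 := Kin_continuous d n Ψ h
  have h2 := Vpot_continuous d n w hc
  have h3 := h.continuous
  fun_prop

lemma energy_ge_const (d n : ℕ) (lam : ℝ) (hl : 0 ≤ lam) (w : (Fin d → ℝ) → ℝ)
    (hc : Continuous w) (C : ℝ) (hC : ∀ x, C ≤ Vpot d n w x)
    (Ψ : (Fin n → Fin d → ℝ) → ℂ) (h : ContDiff ℝ (⊤ : ℕ∞) Ψ) :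
    lam * C * ∫ x in cube d n, ‖Ψ x‖ ^ 2 ≤ energy d n lam w Ψ := by
  rw [energy_eq, ← integral_const_mul]
  refine integral_mono ?_ (energy_integrable d n lam w hc Ψ h).intCube fun x => ?_
  · have := h.continuous
    exact Continuous.intCube (by fun_prop)
  · simp only
    have h1 := Kin_nonneg d n Ψ x
    have h2 : lam * C * ‖Ψ x‖ ^ 2 ≤ lam * Vpot d n w x * ‖Ψ x‖ ^ 2 := by
      gcongr
      exact hC x
    linarith

lemma GSE_bddBelow (d n : ℕ) (lam : ℝ) (hl : 0 ≤ lam) (w : (Fin d → ℝ) → ℝ)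
    (hc : Continuous w) (C : ℝ) (hC : ∀ x, C ≤ Vpot d n w x) :
    BddBelow {e | ∃ Ψ, IsAdmissible d n Ψ ∧ energy d n lam w Ψ = e} := by
  refine ⟨lam * C, ?_⟩
  rintro e ⟨Ψ, hΨ, rfl⟩
  have := energy_ge_const d n lam hl w hc C hC Ψ hΨ.1
  rwa [hΨ.2.2.2, mul_one] at this

lemma GSE_nonempty (d n : ℕ) (lam : ℝ) (w : (Fin d → ℝ) → ℝ) :
    {e | ∃ Ψ, IsAdmissible d n Ψ ∧ energy d n lam w Ψ = e}.Nonempty := by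
  refine ⟨_, fun _ => 1, ⟨contDiff_const, fun _ _ _ => rfl, fun _ _ => rfl, ?_⟩, rfl⟩
  simp [measureReal_def, volume_cube]

lemma Kin_mul (d n : ℕ) (c : ℂ) (Ψ : (Fin n → Fin d → ℝ) → ℂ) (h : ContDiff ℝ (⊤ : ℕ∞) Ψ)
    (x : Fin n → Fin d → ℝ) : Kin d n (fun x => c * Ψ x) x = ‖c‖ ^ 2 * Kin d n Ψ x := by
  have hd : DifferentiableAt ℝ Ψ x := h.differentiable (by simp) x
  unfold Kin
  rw [fderiv_const_mul hd]
  simp [mul_pow, Finset.mul_sum]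

lemma energy_mul (d n : ℕ) (lam : ℝ) (w : (Fin d → ℝ) → ℝ) (c : ℂ)
    (Ψ : (Fin n → Fin d → ℝ) → ℂ) (h : ContDiff ℝ (⊤ : ℕ∞) Ψ) :
    energy d n lam w (fun x => c * Ψ x) = ‖c‖ ^ 2 * energy d n lam w Ψ := by
  rw [energy_eq, energy_eq, ← integral_const_mul]
  congr 1
  funext x
  rw [Kin_mul d n c Ψ h, norm_mul]
  ring

/-- The variational principle for unnormalized states. -/
lemma GSE_le (d n : ℕ) (lam : ℝ) (hl : 0 ≤ lam) (w : (Fin d → ℝ) → ℝ)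
    (hc : Continuous w) (C : ℝ) (hC : ∀ x, C ≤ Vpot d n w x)
    (Ψ : (Fin n → Fin d → ℝ) → ℂ) (h : IsPre d n Ψ) :
    GSE d n lam w * ∫ x in cube d n, ‖Ψ x‖ ^ 2 ≤ energy d n lam w Ψ := by
  have h0 : 0 ≤ ∫ x in cube d n, ‖Ψ x‖ ^ 2 := integral_nonneg fun x => by positivity
  rcases h0.eq_or_lt with h0 | h0
  · have := energy_ge_const d n lam hl w hc C hC Ψ h.1
    rw [← h0] at this ⊢
    linarith
  · set I := ∫ x in cube d n, ‖Ψ x‖ ^ 2 with hI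
    have hn : ‖(((√I)⁻¹ : ℝ) : ℂ)‖ ^ 2 = I⁻¹ := by
      rw [Complex.norm_real, Real.norm_eq_abs, sq_abs, inv_pow, Real.sq_sqrt h0.le]
    have hadm : IsAdmissible d n (fun x => (((√I)⁻¹ : ℝ) : ℂ) * Ψ x) := by
      refine ⟨contDiff_const.mul h.1, fun x j v => ?_, fun σ x => ?_, ?_⟩
      · simp only [h.2.1 x j v]
      · simp only [h.2.2 σ x]
      · simp only [norm_mul, mul_pow]
        rw [integral_const_mul, hn, ← hI, inv_mul_cancel₀ h0.ne']
    have := csInf_le (GSE_bddBelow d n lam hl w hc C hC) ⟨_, hadm, rfl⟩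
    rw [energy_mul d n lam w _ Ψ h.1, hn] at this
    calc GSE d n lam w * I ≤ (I⁻¹ * energy d n lam w Ψ) * I := by
          gcongr
          exact this
      _ = energy d n lam w Ψ := by field_simp

/-! ### Lower bound -/

lemma cons_comp_perm {d n : ℕ} (σ : Equiv.Perm (Fin n)) (y : Fin d → ℝ) (x : Fin n → Fin d → ℝ) :
    (Fin.cons y (x ∘ σ) : Fin (n + 1) → Fin d → ℝ) =
      (Fin.cons y x : Fin (n + 1) → Fin d → ℝ) ∘ (Equiv.Perm.decomposeFin.symm (0, σ)) := by
  funext j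
  refine Fin.cases ?_ (fun j => ?_) j
  · simp
  · simp

lemma slice_pre (d n : ℕ) (Ψ : (Fin (n + 1) → Fin d → ℝ) → ℂ) (h : IsPre d (n + 1) Ψ)
    (y : Fin d → ℝ) : IsPre d n (fun x => Ψ (Fin.cons y x)) := by
  refine ⟨?_, fun x j v => ?_, fun σ x => ?_⟩
  · refine h.1.comp ?_
    rw [contDiff_pi]
    intro j
    refine Fin.cases ?_ (fun j => ?_) j
    · simpa using contDiff_const
    · simpa using contDiff_apply ℝ (Fin d → ℝ) j
  · have := h.2.1 (Fin.cons y x) j.succ v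
    rw [Fin.cons_succ, ← Fin.cons_update] at this
    exact this
  · simp only [cons_comp_perm]
    exact h.2.2 _ _

lemma slice_kin (d n : ℕ) (Ψ : (Fin (n + 1) → Fin d → ℝ) → ℂ) (h : ContDiff ℝ (⊤ : ℕ∞) Ψ)
    (y : Fin d → ℝ) (x : Fin n → Fin d → ℝ) :
    Kin d n (fun x => Ψ (Fin.cons y x)) x ≤ Kin d (n + 1) Ψ (Fin.cons y x) := by
  have hd : DifferentiableAt ℝ Ψ (Fin.cons y x) := h.differentiable (by simp) _
  have hF : HasFDerivAt (fun x : Fin n → Fin d → ℝ => (Fin.cons y x : Fin (n + 1) → Fin d → ℝ))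
      (ContinuousLinearMap.pi (fun j : Fin (n + 1) => Fin.cases
        (0 : (Fin n → Fin d → ℝ) →L[ℝ] (Fin d → ℝ))
        (fun j => (ContinuousLinearMap.proj j : (Fin n → Fin d → ℝ) →L[ℝ] (Fin d → ℝ))) j)) x := by
    rw [hasFDerivAt_pi]
    intro j
    refine Fin.cases ?_ (fun j => ?_) j
    · exact hasFDerivAt_const y x
    · exact hasFDerivAt_apply j x
  have hc : fderiv ℝ (fun x => Ψ (Fin.cons y x)) x = _ :=
    (hd.hasFDerivAt.comp x hF).fderiv
  have hs : ∀ (j : Fin n) (u : Fin d → ℝ),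
      fderiv ℝ (fun x => Ψ (Fin.cons y x)) x (Pi.single j u)
      = fderiv ℝ Ψ (Fin.cons y x) (Pi.single j.succ u) := by
    intro j u
    rw [hc, ContinuousLinearMap.comp_apply]
    congr 1
    funext k
    refine Fin.cases ?_ (fun k => ?_) k
    · simp
    · by_cases hk : k = j
      · subst hk; simp
      · simp [hk]
  unfold Kin
  rw [Fin.sum_univ_succ]
  simp_rw [hs]
  have : 0 ≤ ∑ i : Fin d, ‖fderiv ℝ Ψ (Fin.cons y x) (Pi.single 0 (Pi.single i 1))‖ ^ 2 := by
    positivity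
  linarith

lemma continuous_slice_integral (d n : ℕ) (F : (Fin (n + 1) → Fin d → ℝ) → ℝ)
    (hF : Continuous F) :
    Continuous (fun y : Fin d → ℝ => ∫ x in cube d n, F (Fin.cons y x)) := by
  refine continuous_parametric_integral_of_continuous ?_ (isCompact_cube d n)
  exact hF.comp (Continuous.finCons continuous_fst continuous_snd)

lemma lower_bound (d n : ℕ) (lam : ℝ) (hl : 0 ≤ lam) (w : (Fin d → ℝ) → ℝ)
    (hc : Continuous w) (he : ∀ x, w (-x) = w x)
    (C : ℝ) (hC : ∀ x, C ≤ Vpot d n w x)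
    (C' : ℝ) (hC' : ∀ x, (n + 1) * C' ≤ 2 * Vpot d (n + 1) w x)
    (Ψ : (Fin (n + 1) → Fin d → ℝ) → ℂ) (h : IsAdmissible d (n + 1) Ψ) :
    GSE d n lam w + lam * C' ≤ energy d (n + 1) lam w Ψ := by
  obtain ⟨hs, hp, hsym, hn⟩ := h
  have hΨc := hs.continuous
  have hKc := Kin_continuous d (n + 1) Ψ hs
  have hVc := Vpot_continuous d (n + 1) w hc
  -- the interaction of particle `i` with the others
  set W : Fin (n + 1) → (Fin (n + 1) → Fin d → ℝ) → ℝ := fun i x =>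
    (∑ j, w (x i - x j)) - w 0 with hW
  have hWc : ∀ i, Continuous (W i) := fun i => by
    simp only [hW]
    fun_prop
  have hWint : ∀ i, ∫ x in cube d (n + 1), W i x * ‖Ψ x‖ ^ 2
      = ∫ x in cube d (n + 1), W 0 x * ‖Ψ x‖ ^ 2 := by
    intro i
    rw [← integral_cube_perm d (n + 1) (Equiv.swap 0 i) (fun x => W i x * ‖Ψ x‖ ^ 2)]
    congr 1
    funext x
    rw [hsym]
    congr 1
    simp only [hW, Function.comp, Equiv.swap_apply_right]
    congr 1
    exact Equiv.sum_comp (Equiv.swap 0 i) (fun k => w (x 0 - x k))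
  have hsum : ((n : ℝ) + 1) * ∫ x in cube d (n + 1), W 0 x * ‖Ψ x‖ ^ 2
      = ∫ x in cube d (n + 1), 2 * Vpot d (n + 1) w x * ‖Ψ x‖ ^ 2 := by
    have h1 : ∀ x, 2 * Vpot d (n + 1) w x * ‖Ψ x‖ ^ 2 = ∑ i, W i x * ‖Ψ x‖ ^ 2 := by
      intro x
      rw [Vpot_two d (n + 1) w he, ← Finset.sum_mul]
      congr 1
      simp [hW]
    simp_rw [h1]
    have hi : ∀ i ∈ (Finset.univ : Finset (Fin (n + 1))), Integrable
        (fun x => W i x * ‖Ψ x‖ ^ 2) (volume.restrict (cube d (n + 1))) := fun i _ => by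
      have := hWc i
      exact Continuous.intCube (by fun_prop)
    rw [integral_finsetSum _ hi]
    rw [Finset.sum_congr rfl (fun i _ => hWint i)]
    simp
  have hW0 : C' ≤ ∫ x in cube d (n + 1), W 0 x * ‖Ψ x‖ ^ 2 := by
    have h1 : ((n : ℝ) + 1) * C' ≤ ∫ x in cube d (n + 1), 2 * Vpot d (n + 1) w x * ‖Ψ x‖ ^ 2 := by
      calc ((n : ℝ) + 1) * C' = ∫ x in cube d (n + 1), ((n : ℝ) + 1) * C' * ‖Ψ x‖ ^ 2 := by
            rw [integral_const_mul, hn, mul_one]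
        _ ≤ _ := by
            refine integral_mono (Continuous.intCube (by fun_prop))
              (Continuous.intCube (by fun_prop)) fun x => ?_
            simp only
            exact mul_le_mul_of_nonneg_right (hC' x) (by positivity)
    rw [← hsum] at h1
    exact le_of_mul_le_mul_left h1 (by positivity)
  -- split off particle zero
  set F : (Fin (n + 1) → Fin d → ℝ) → ℝ := fun x =>
    Kin d (n + 1) Ψ x + lam * (Vpot d (n + 1) w x - W 0 x) * ‖Ψ x‖ ^ 2 with hF
  have hW0c := hWc 0
  have hFc : Continuous F := by fun_prop
  have hsplit : energy d (n + 1) lam w Ψ = (∫ x in cube d (n + 1), F x)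
      + lam * ∫ x in cube d (n + 1), W 0 x * ‖Ψ x‖ ^ 2 := by
    rw [energy_eq, ← integral_const_mul, ← integral_add hFc.intCube
      (Continuous.intCube (by fun_prop))]
    congr 1
    funext x
    simp only [hF]
    ring
  have hFge : GSE d n lam w ≤ ∫ x in cube d (n + 1), F x := by
    have hnc : Continuous (fun x => ‖Ψ x‖ ^ 2) := by fun_prop
    calc GSE d n lam w = GSE d n lam w * ∫ x in cube d (n + 1), ‖Ψ x‖ ^ 2 := by rw [hn, mul_one]
      _ = ∫ y in cube1 d, GSE d n lam w * ∫ x in cube d n, ‖Ψ (Fin.cons y x)‖ ^ 2 := by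
          rw [integral_cube_succ d n _ hnc, integral_const_mul]
      _ ≤ ∫ y in cube1 d, ∫ x in cube d n, F (Fin.cons y x) := by
          refine integral_mono ?_ ?_ fun y => ?_
          · exact (continuous_const.mul (continuous_slice_integral d n _ hnc)).continuousOn
              |>.integrableOn_compact (isCompact_cube1 d)
          · exact (continuous_slice_integral d n _ hFc).continuousOn
              |>.integrableOn_compact (isCompact_cube1 d)
          · have hpre := slice_pre d n Ψ ⟨hs, hp, hsym⟩ y
            refine (GSE_le d n lam hl w hc C hC _ hpre).trans ?_
            rw [energy_eq]
            refine integral_mono (energy_integrable d n lam w hc _ hpre.1).intCube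
              (Continuous.intCube (hFc.comp (Continuous.finCons continuous_const continuous_id)))
              fun x => ?_
            simp only [hF, hW]
            have h1 := slice_kin d n Ψ hs y x
            rw [Vpot_succ, Fin.sum_univ_succ]
            simp only [Fin.cons_zero, Fin.cons_succ, sub_self]
            have h2 : Vpot d n w x + ∑ j, w (y - x j) - (w 0 + ∑ j, w (y - x j) - w 0)
              = Vpot d n w x := by ring
            rw [h2]
            linarith
      _ = _ := (integral_cube_succ d n F hFc).symm
  rw [hsplit]
  gcongr

/-! ### Upper bound -/

lemma grad_bound {ι X : Type*} [Fintype ι] [NormedAddCommGroup X] [NormedSpace ℝ X]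
    (h : ι → X → ℂ) (x v : X) (hd : ∀ i, DifferentiableAt ℝ (h i) x) (ε c : ℝ) (hε : 0 < ε)
    (hc : 0 ≤ c) :
    ‖fderiv ℝ (fun x => ((√(ε + c * ∑ i, ‖h i x‖ ^ 2) : ℝ) : ℂ)) x v‖ ^ 2
      ≤ c * ∑ i, ‖fderiv ℝ (h i) x v‖ ^ 2 := by
  set G : ℝ := ε + c * ∑ i, ‖h i x‖ ^ 2 with hG
  have hGpos : 0 < G := by positivity
  have h1 : HasFDerivAt (fun x => ε + c * ∑ i, ‖h i x‖ ^ 2)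
      (c • ∑ i, (2 • (innerSL ℝ) (h i x) ∘SL (fderiv ℝ (h i) x))) x := by
    refine HasFDerivAt.const_add _ (HasFDerivAt.const_mul ?_ c)
    exact HasFDerivAt.fun_sum fun i _ => (hd i).hasFDerivAt.norm_sq
  have h2 := (h1.sqrt hGpos.ne')
  have h3 := (Complex.ofRealCLM.hasFDerivAt.comp x h2).fderiv
  have h4 : fderiv ℝ (fun x => ((√(ε + c * ∑ i, ‖h i x‖ ^ 2) : ℝ) : ℂ)) x v
      = (((c * ∑ i, inner ℝ (h i x) (fderiv ℝ (h i) x v)) / √G : ℝ) : ℂ) := by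
    refine (congrArg (fun L => L v) h3).trans ?_
    simp only [ContinuousLinearMap.comp_apply, Complex.ofRealCLM_apply,
      ContinuousLinearMap.smul_apply, ContinuousLinearMap.sum_apply, innerSL_apply_apply,
      smul_eq_mul, nsmul_eq_mul, ← Finset.mul_sum, ← hG]
    congr 1
    have : √G ≠ 0 := (Real.sqrt_pos.2 hGpos).ne'
    field_simp
    push_cast
    ring
  rw [h4, Complex.norm_real, Real.norm_eq_abs, sq_abs, div_pow, Real.sq_sqrt hGpos.le,
    div_le_iff₀ hGpos, mul_pow]
  have h5 : (∑ i, inner ℝ (h i x) (fderiv ℝ (h i) x v)) ^ 2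
      ≤ (∑ i, ‖h i x‖ ^ 2) * ∑ i, ‖fderiv ℝ (h i) x v‖ ^ 2 := by
    refine le_trans ?_ (Finset.sum_mul_sq_le_sq_mul_sq _ _ _)
    rw [← sq_abs]
    refine pow_le_pow_left₀ (abs_nonneg _) ?_ 2
    refine (Finset.abs_sum_le_sum_abs _ _).trans (Finset.sum_le_sum fun i _ => ?_)
    exact abs_real_inner_le_norm _ _
  have h6 : 0 ≤ ∑ i, ‖fderiv ℝ (h i) x v‖ ^ 2 := by positivity
  calc c ^ 2 * (∑ i, inner ℝ (h i x) (fderiv ℝ (h i) x v)) ^ 2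
      ≤ c ^ 2 * ((∑ i, ‖h i x‖ ^ 2) * ∑ i, ‖fderiv ℝ (h i) x v‖ ^ 2) := by gcongr
    _ = (c * ∑ i, ‖fderiv ℝ (h i) x v‖ ^ 2) * (c * ∑ i, ‖h i x‖ ^ 2) := by ring
    _ ≤ (c * ∑ i, ‖fderiv ℝ (h i) x v‖ ^ 2) * G := by
        gcongr
        rw [hG]
        linarith

lemma contDiff_perm (d n : ℕ) (Φ : (Fin n → Fin d → ℝ) → ℂ) (h : ContDiff ℝ (⊤ : ℕ∞) Φ)
    (σ : Equiv.Perm (Fin n)) : ContDiff ℝ (⊤ : ℕ∞) (fun x : Fin n → Fin d → ℝ => Φ (x ∘ σ)) := by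
  refine h.comp ?_
  rw [contDiff_pi]
  intro j
  exact contDiff_apply ℝ (Fin d → ℝ) (σ j)

lemma Kin_perm (d n : ℕ) (Φ : (Fin n → Fin d → ℝ) → ℂ) (h : ContDiff ℝ (⊤ : ℕ∞) Φ)
    (σ : Equiv.Perm (Fin n)) (x : Fin n → Fin d → ℝ) :
    Kin d n (fun x => Φ (x ∘ σ)) x = Kin d n Φ (x ∘ σ) := by
  have hd : DifferentiableAt ℝ Φ (x ∘ σ) := h.differentiable (by simp) _
  have hF : HasFDerivAt (fun x : Fin n → Fin d → ℝ => x ∘ σ)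
      (ContinuousLinearMap.pi (fun j : Fin n =>
        (ContinuousLinearMap.proj (σ j) : (Fin n → Fin d → ℝ) →L[ℝ] (Fin d → ℝ)))) x := by
    rw [hasFDerivAt_pi]
    intro j
    exact hasFDerivAt_apply (σ j) x
  have hc : fderiv ℝ (fun x => Φ (x ∘ σ)) x = _ := (hd.hasFDerivAt.comp x hF).fderiv
  have hs : ∀ (j : Fin n) (u : Fin d → ℝ),
      fderiv ℝ (fun x => Φ (x ∘ σ)) x (Pi.single (σ j) u)
      = fderiv ℝ Φ (x ∘ σ) (Pi.single j u) := by
    intro j u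
    rw [hc, ContinuousLinearMap.comp_apply]
    congr 1
    funext k
    by_cases hk : k = j
    · subst hk; simp
    · have : σ k ≠ σ j := fun e => hk (σ.injective e)
      simp [hk, this]
  unfold Kin
  rw [← Equiv.sum_comp σ]
  simp_rw [hs]

/-- Symmetrization of the density: the variational principle holds without symmetry. -/
lemma GSE_le_nosym (d n : ℕ) (lam : ℝ) (hl : 0 ≤ lam) (w : (Fin d → ℝ) → ℝ)
    (hc : Continuous w) (he : ∀ x, w (-x) = w x) (C : ℝ) (hC : ∀ x, C ≤ Vpot d n w x)
    (Φ : (Fin n → Fin d → ℝ) → ℂ) (hs : ContDiff ℝ (⊤ : ℕ∞) Φ)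
    (hp : ∀ (x : Fin n → Fin d → ℝ) (j : Fin n) (v : Fin d → ℤ),
      Φ (Function.update x j (x j + fun i => (v i : ℝ))) = Φ x) :
    GSE d n lam w * ∫ x in cube d n, ‖Φ x‖ ^ 2 ≤ energy d n lam w Φ := by
  have hsσ := contDiff_perm d n Φ hs
  have hΦc := hs.continuous
  have hVc := Vpot_continuous d n w hc
  have hKc := Kin_continuous d n Φ hs
  have hcard : (0 : ℝ) < Fintype.card (Equiv.Perm (Fin n)) := by
    exact_mod_cast Fintype.card_pos
  set c : ℝ := (Fintype.card (Equiv.Perm (Fin n)) : ℝ)⁻¹ with hcdef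
  have hc0 : 0 ≤ c := by positivity
  have havg : ∀ F : (Fin n → Fin d → ℝ) → ℝ, Continuous F →
      ∫ x in cube d n, c * ∑ σ : Equiv.Perm (Fin n), F (x ∘ σ) = ∫ x in cube d n, F x := by
    intro F hF
    have hi : ∀ σ ∈ (Finset.univ : Finset (Equiv.Perm (Fin n))), Integrable
        (fun x : Fin n → Fin d → ℝ => F (x ∘ σ)) (volume.restrict (cube d n)) := fun σ _ =>
      Continuous.intCube (hF.comp (continuous_pi fun j => continuous_apply (σ j)))
    rw [integral_const_mul, integral_finsetSum _ hi]
    simp_rw [integral_cube_perm d n _ F]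
    rw [Finset.sum_const, Finset.card_univ, nsmul_eq_mul, ← mul_assoc, hcdef,
      inv_mul_cancel₀ hcard.ne', one_mul]
  have key : ∀ ε : ℝ, 0 < ε → GSE d n lam w * (ε + ∫ x in cube d n, ‖Φ x‖ ^ 2)
      ≤ energy d n lam w Φ + ε * (lam * ∫ x in cube d n, Vpot d n w x) := by
    intro ε hε
    set G : (Fin n → Fin d → ℝ) → ℝ := fun x =>
      ε + c * ∑ σ : Equiv.Perm (Fin n), ‖Φ (x ∘ σ)‖ ^ 2 with hG
    have hGpos : ∀ x, 0 < G x := fun x => by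
      simp only [hG]
      positivity
    have hGs : ContDiff ℝ (⊤ : ℕ∞) G :=
      contDiff_const.add (contDiff_const.mul (ContDiff.sum fun σ _ => (hsσ σ).norm_sq ℝ))
    set g : (Fin n → Fin d → ℝ) → ℂ := fun x => ((√(G x) : ℝ) : ℂ) with hg
    have hgs : ContDiff ℝ (⊤ : ℕ∞) g :=
      Complex.ofRealCLM.contDiff.comp (hGs.sqrt fun x => (hGpos x).ne')
    have hgn : ∀ x, ‖g x‖ ^ 2 = G x := fun x => by
      simp only [hg]
      rw [Complex.norm_real, Real.norm_eq_abs, sq_abs, Real.sq_sqrt (hGpos x).le]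
    have hpre : IsPre d n g := by
      refine ⟨hgs, fun x j v => ?_, fun τ x => ?_⟩
      · have : G (Function.update x j (x j + fun i => (v i : ℝ))) = G x := by
          simp only [hG]
          congr 2
          refine Finset.sum_congr rfl fun σ _ => ?_
          rw [Function.update_comp_equiv]
          have := hp (x ∘ σ) (σ.symm j) v
          simp only [Function.comp_apply, Equiv.apply_symm_apply] at this
          rw [this]
        simp only [hg, this]
      · have : G (x ∘ τ) = G x := by
          simp only [hG]
          congr 2
          exact Equiv.sum_comp (Equiv.mulLeft τ) (fun σ : Equiv.Perm (Fin n) => ‖Φ (x ∘ σ)‖ ^ 2)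
        simp only [hg, this]
    have hV1 : IsFiniteMeasure (volume.restrict (cube d n)) := ⟨by simp [volume_cube]⟩
    have hsq : Continuous (fun x => ‖Φ x‖ ^ 2) := by fun_prop
    have hcσ : ∀ (F : (Fin n → Fin d → ℝ) → ℝ), Continuous F → Continuous
        (fun x : Fin n → Fin d → ℝ => c * ∑ σ : Equiv.Perm (Fin n), F (x ∘ σ)) := fun F hF =>
      continuous_const.mul (continuous_finsetSum _ fun σ _ =>
        hF.comp (continuous_pi fun j => continuous_apply (σ j)))
    have hnorm : ∫ x in cube d n, ‖g x‖ ^ 2 = ε + ∫ x in cube d n, ‖Φ x‖ ^ 2 := by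
      simp_rw [hgn, hG]
      rw [integral_add (integrable_const _) (hcσ _ hsq).intCube, havg _ hsq]
      simp [measureReal_def, volume_cube]
    have hkin : ∀ x, Kin d n g x ≤ c * ∑ σ : Equiv.Perm (Fin n), Kin d n Φ (x ∘ σ) := by
      intro x
      have h1 : c * ∑ σ : Equiv.Perm (Fin n), Kin d n Φ (x ∘ σ)
          = ∑ j : Fin n, ∑ i : Fin d, c * ∑ σ : Equiv.Perm (Fin n),
            ‖fderiv ℝ (fun x => Φ (x ∘ σ)) x (Pi.single j (Pi.single i 1))‖ ^ 2 := by
        simp_rw [← Kin_perm d n Φ hs, Kin, ← Finset.mul_sum]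
        congr 1
        rw [Finset.sum_comm]
        refine Finset.sum_congr rfl fun j _ => ?_
        rw [Finset.sum_comm]
      rw [h1, Kin]
      refine Finset.sum_le_sum fun j _ => Finset.sum_le_sum fun i _ => ?_
      exact grad_bound (fun (σ : Equiv.Perm (Fin n)) x => Φ (x ∘ σ)) x _
        (fun σ => (hsσ σ).differentiable (by simp) x) ε c hε hc0
    have hen : energy d n lam w g ≤
        energy d n lam w Φ + ε * (lam * ∫ x in cube d n, Vpot d n w x) := by
      have hec := energy_integrable d n lam w hc Φ hs
      calc energy d n lam w g ≤ ∫ x in cube d n,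
            ((c * ∑ σ : Equiv.Perm (Fin n), (Kin d n Φ (x ∘ σ) +
              lam * Vpot d n w (x ∘ σ) * ‖Φ (x ∘ σ)‖ ^ 2)) + ε * (lam * Vpot d n w x)) := by
            rw [energy_eq]
            refine integral_mono (energy_integrable d n lam w hc g hgs).intCube
              (Continuous.intCube ((hcσ _ hec).add (by fun_prop))) fun x => ?_
            have h1 := hkin x
            simp only [hgn, Vpot_perm d n w he, Finset.sum_add_distrib, ← Finset.mul_sum]
            simp only [hG]
            linarith
        _ = _ := by
            rw [integral_add (hcσ _ hec).intCube (Continuous.intCube (by fun_prop)),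
              havg _ hec, integral_const_mul, integral_const_mul, energy_eq]
    have := GSE_le d n lam hl w hc C hC g hpre
    rw [hnorm] at this
    exact this.trans hen
  set I := ∫ x in cube d n, ‖Φ x‖ ^ 2
  set A := lam * (∫ x in cube d n, Vpot d n w x) - GSE d n lam w with hA
  refine le_of_forall_pos_le_add fun δ hδ => ?_
  have h1 := key (δ / (|A| + 1)) (by positivity)
  have h2 : δ / (|A| + 1) * A ≤ δ := by
    rw [div_mul_eq_mul_div, div_le_iff₀ (by positivity)]
    have := le_abs_self A
    nlinarith
  have h3 : δ / (|A| + 1) * A = δ / (|A| + 1) * (lam * (∫ x in cube d n, Vpot d n w x))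
      - GSE d n lam w * (δ / (|A| + 1)) := by
    rw [hA]
    ring
  linarith

lemma contDiff_tail (d n : ℕ) (Ψ : (Fin n → Fin d → ℝ) → ℂ) (h : ContDiff ℝ (⊤ : ℕ∞) Ψ) :
    ContDiff ℝ (⊤ : ℕ∞) (fun x : Fin (n + 1) → Fin d → ℝ => Ψ (fun j => x j.succ)) := by
  refine h.comp ?_
  rw [contDiff_pi]
  intro j
  exact contDiff_apply ℝ (Fin d → ℝ) j.succ

lemma Kin_tail (d n : ℕ) (Ψ : (Fin n → Fin d → ℝ) → ℂ) (h : ContDiff ℝ (⊤ : ℕ∞) Ψ)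
    (x : Fin (n + 1) → Fin d → ℝ) :
    Kin d (n + 1) (fun x => Ψ (fun j => x j.succ)) x = Kin d n Ψ (fun j => x j.succ) := by
  have hd : DifferentiableAt ℝ Ψ (fun j => x j.succ) := h.differentiable (by simp) _
  have hF : HasFDerivAt (fun x : Fin (n + 1) → Fin d → ℝ => fun j : Fin n => x j.succ)
      (ContinuousLinearMap.pi (fun j : Fin n => (ContinuousLinearMap.proj j.succ :
        (Fin (n + 1) → Fin d → ℝ) →L[ℝ] (Fin d → ℝ)))) x := by
    rw [hasFDerivAt_pi]
    intro j
    exact hasFDerivAt_apply j.succ x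
  have hc : fderiv ℝ (fun x : Fin (n + 1) → Fin d → ℝ => Ψ (fun j => x j.succ)) x = _ :=
    (hd.hasFDerivAt.comp x hF).fderiv
  have hs : ∀ (j : Fin n) (u : Fin d → ℝ),
      fderiv ℝ (fun x : Fin (n + 1) → Fin d → ℝ => Ψ (fun j => x j.succ)) x (Pi.single j.succ u)
      = fderiv ℝ Ψ (fun j => x j.succ) (Pi.single j u) := by
    intro j u
    rw [hc, ContinuousLinearMap.comp_apply]
    congr 1
    funext k
    by_cases hk : k = j
    · subst hk; simp
    · simp [hk]
  have hs0 : ∀ (u : Fin d → ℝ),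
      fderiv ℝ (fun x : Fin (n + 1) → Fin d → ℝ => Ψ (fun j => x j.succ)) x (Pi.single 0 u)
      = 0 := by
    intro u
    rw [hc, ContinuousLinearMap.comp_apply]
    have hz : (ContinuousLinearMap.pi (fun j : Fin n => (ContinuousLinearMap.proj j.succ :
        (Fin (n + 1) → Fin d → ℝ) →L[ℝ] (Fin d → ℝ)))) (Pi.single 0 u) = 0 := by
      funext k
      simp
    rw [hz, map_zero]
  unfold Kin
  rw [Fin.sum_univ_succ]
  simp_rw [hs, hs0]
  simp

lemma energy_tail (d n : ℕ) (lam h0 : ℝ) (w : (Fin d → ℝ) → ℝ)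
    (hc : Continuous w) (hwInt : ∀ c, ∫ y in cube1 d, w (y - c) = h0)
    (Ψ : (Fin n → Fin d → ℝ) → ℂ) (hs : ContDiff ℝ (⊤ : ℕ∞) Ψ) :
    energy d (n + 1) lam w (fun x => Ψ (fun j => x j.succ))
      = energy d n lam w Ψ + lam * n * h0 * ∫ x in cube d n, ‖Ψ x‖ ^ 2 := by
  have hΨc := hs.continuous
  have hVc := Vpot_continuous d n w hc
  have hKc := Kin_continuous d n Ψ hs
  have hfin : IsFiniteMeasure (volume.restrict (cube1 d)) := ⟨by simp [volume_cube1]⟩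
  have hfin' : IsFiniteMeasure (volume.restrict (cube d n)) := ⟨by simp [volume_cube]⟩
  rw [energy_eq, integral_cube_succ d n _
    (energy_integrable d (n + 1) lam w hc _ (contDiff_tail d n Ψ hs))]
  have h1 : ∀ y (x : Fin n → Fin d → ℝ),
      Kin d (n + 1) (fun x => Ψ (fun j => x j.succ)) (Fin.cons y x) +
        lam * Vpot d (n + 1) w (Fin.cons y x) *
          ‖Ψ (fun j => (Fin.cons y x : Fin (n + 1) → Fin d → ℝ) j.succ)‖ ^ 2
      = (Kin d n Ψ x + lam * Vpot d n w x * ‖Ψ x‖ ^ 2)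
        + (∑ j, w (y - x j)) * (lam * ‖Ψ x‖ ^ 2) := by
    intro y x
    rw [Kin_tail d n Ψ hs, Vpot_succ]
    simp only [Fin.cons_succ]
    ring
  simp_rw [h1]
  rw [integral_integral_swap]
  · have h2 : ∀ x : Fin n → Fin d → ℝ,
        ∫ y in cube1 d, ((Kin d n Ψ x + lam * Vpot d n w x * ‖Ψ x‖ ^ 2)
          + (∑ j, w (y - x j)) * (lam * ‖Ψ x‖ ^ 2))
        = (Kin d n Ψ x + lam * Vpot d n w x * ‖Ψ x‖ ^ 2)
          + lam * n * h0 * ‖Ψ x‖ ^ 2 := by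
      intro x
      have hi : ∀ j, Integrable (fun y => w (y - x j)) (volume.restrict (cube1 d)) := fun j =>
        ContinuousOn.integrableOn_compact (isCompact_cube1 d) (by fun_prop)
      rw [integral_add (integrable_const _)
        ((integrable_finsetSum _ fun j _ => hi j).mul_const _), integral_mul_const,
        integral_finsetSum _ fun j _ => hi j]
      simp_rw [hwInt]
      simp [measureReal_def, volume_cube1]
      ring
    simp_rw [h2]
    rw [integral_add (energy_integrable d n lam w hc Ψ hs).intCube
      (Continuous.intCube (by fun_prop)), integral_const_mul, energy_eq]
  · rw [Measure.prod_restrict]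
    refine ContinuousOn.integrableOn_compact ((isCompact_cube1 d).prod (isCompact_cube d n)) ?_
    refine Continuous.continuousOn ?_
    simp only [Function.uncurry_def]
    fun_prop

lemma upper_bound (d n : ℕ) (lam h0 : ℝ) (hl : 0 ≤ lam) (w : (Fin d → ℝ) → ℝ)
    (hc : Continuous w) (he : ∀ x, w (-x) = w x)
    (hwInt : ∀ c, ∫ y in cube1 d, w (y - c) = h0)
    (C : ℝ) (hC : ∀ x, C ≤ Vpot d (n + 1) w x)
    (Ψ : (Fin n → Fin d → ℝ) → ℂ) (h : IsAdmissible d n Ψ) :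
    GSE d (n + 1) lam w ≤ energy d n lam w Ψ + lam * n * h0 := by
  obtain ⟨hs, hp, hsym, hn⟩ := h
  have hΨc := hs.continuous
  have h1 := GSE_le_nosym d (n + 1) lam hl w hc he C hC _ (contDiff_tail d n Ψ hs) (by
    intro x j v
    refine Fin.cases ?_ (fun j => ?_) j
    · congr 1
    · have := hp (fun j => x j.succ) j v
      rw [← this]
      congr 1
      funext k
      by_cases hk : k = j
      · subst hk; simp
      · simp [hk])
  rw [energy_tail d n lam h0 w hc hwInt Ψ hs, hn, mul_one] at h1
  have h2 : ∫ x in cube d (n + 1), ‖Ψ (fun j => x j.succ)‖ ^ 2 = 1 := by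
    rw [integral_cube_succ d n (fun x => ‖Ψ (fun j => x j.succ)‖ ^ 2) (by fun_prop)]
    simp only [Fin.cons_succ, hn]
    simp [measureReal_def, volume_cube1]
  rwa [h2, mul_one] at h1

/-- **Leading order of the binding energy.** If `N·λ_N → 1`, then
`E(λ_N,N) - E(λ_N,N-1) - λ_N (N-1) ŵ(0) → 0`. -/
theorem binding_energy_leading_order (d : ℕ) (hd : 1 ≤ d)
    (hw : (Fin d → ℤ) → ℝ) (hw_nonneg : ∀ k, 0 ≤ hw k)
    (hw_even : ∀ k, hw (-k) = hw k) (hw_summable : Summable hw)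
    (lam : ℕ → ℝ) (hlam_pos : ∀ N, 2 ≤ N → 0 < lam N)
    (hlam_lim : Filter.Tendsto (fun N : ℕ => (N : ℝ) * lam N) Filter.atTop (nhds 1)) :
    Filter.Tendsto
      (fun N : ℕ =>
        GSE d N (lam N) (wOf d hw) - GSE d (N - 1) (lam N) (wOf d hw) -
          lam N * ((N : ℝ) - 1) * hw 0)
      Filter.atTop (nhds 0) := by
  set w := wOf d hw with hwdef
  have hc : Continuous w := wOf_continuous d hw hw_nonneg hw_summable
  have he : ∀ x, w (-x) = w x := wOf_even d hw hw_nonneg hw_summable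
  have hwInt : ∀ c, ∫ y in cube1 d, w (y - c) = hw 0 := integral_wOf d hw hw_nonneg hw_summable
  have hV : ∀ (n : ℕ) (x : Fin n → Fin d → ℝ),
      (n : ℝ) * (n * hw 0 - w 0) ≤ 2 * Vpot d n w x := by
    intro n x
    have h1 := wOf_sum_ge d n hw hw_nonneg hw_summable x
    rw [Vpot_two d n w he x]
    rw [← hwdef] at h1
    linarith
  have hV' : ∀ (n : ℕ) (x : Fin n → Fin d → ℝ),
      (n : ℝ) * (n * hw 0 - w 0) / 2 ≤ Vpot d n w x := by
    intro n x
    have := hV n x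
    linarith
  have hl0 : Filter.Tendsto lam Filter.atTop (nhds 0) := by
    have h1 := hlam_lim.mul (tendsto_inv_atTop_nhds_zero_nat (𝕜 := ℝ))
    rw [one_mul] at h1
    refine h1.congr' ?_
    filter_upwards [Filter.eventually_ge_atTop 1] with N hN
    have : (N : ℝ) ≠ 0 := by positivity
    field_simp
  have hlow : Filter.Tendsto (fun N => lam N * (hw 0 - w 0)) Filter.atTop (nhds 0) := by
    have := hl0.mul_const (hw 0 - w 0)
    rwa [zero_mul] at this
  refine tendsto_of_tendsto_of_tendsto_of_le_of_le' hlow tendsto_const_nhds ?_ ?_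
  · filter_upwards [Filter.eventually_ge_atTop 2] with N hN
    obtain ⟨n, rfl⟩ : ∃ n, N = n + 1 := ⟨N - 1, by omega⟩
    have hl := (hlam_pos _ hN).le
    have h1 : GSE d n (lam (n + 1)) w + lam (n + 1) * (((n + 1 : ℕ) : ℝ) * hw 0 - w 0)
        ≤ GSE d (n + 1) (lam (n + 1)) w := by
      refine le_csInf (GSE_nonempty d (n + 1) _ w) ?_
      rintro e ⟨Ψ, hΨ, rfl⟩
      refine lower_bound d n _ hl w hc he _ (hV' n) _ (fun x => ?_) Ψ hΨ
      have := hV (n + 1) x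
      push_cast at this ⊢
      exact this
    rw [Nat.add_sub_cancel]
    push_cast at h1 ⊢
    linarith
  · filter_upwards [Filter.eventually_ge_atTop 2] with N hN
    obtain ⟨n, rfl⟩ : ∃ n, N = n + 1 := ⟨N - 1, by omega⟩
    have hl := (hlam_pos _ hN).le
    have h1 : GSE d (n + 1) (lam (n + 1)) w - lam (n + 1) * n * hw 0
        ≤ GSE d n (lam (n + 1)) w := by
      refine le_csInf (GSE_nonempty d n _ w) ?_
      rintro e ⟨Ψ, hΨ, rfl⟩
      have := upper_bound d n _ (hw 0) hl w hc he hwInt _ (hV' (n + 1)) Ψ hΨ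
      linarith
    rw [Nat.add_sub_cancel]
    push_cast
    linarith
end
end
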